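/- Let d ≥ 2, 0 < γ < 1, and let D₀ ⊂ ℝ^d be a bounded C^{1+γ} domain. Then there exist a map X : ℝ^d × [0,1) → ℝ^d and, for each t ∈ [0,1), a bounded C^{1+γ} domain D_t := X(D₀,t), such that: X(α,0) = α for all α ∈ ℝ^d; for each t ∈ [0,1) the map X(·,t) is a homeomorphism of ℝ^d onto itself; and for every α ∈ ℝ^d the curve t ↦ X(α,t) is differentiable on [0,1) with ∂_t X(α,t) = v(X(α,t),t), where v(x,t) = -(1/(1-t)) ∫_{D_t} ∇N(x-y) dy. In particular, the aggregation patch ρ(x,t) = (1/(1-t)) χ_{D_t}(x) evolving from ρ(·,0) = χ_{D₀} has a boundary ∂D_t that remains of class C^{1+γ} for all 0 ≤ t < 1. -/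

import Mathlib

open MeasureTheory Metric Set
open scoped RealInnerProductSpace

noncomputable def sphereVol (d : ℕ) : ℝ :=
  d * (volume (Metric.ball (0 : EuclideanSpace ℝ (Fin d)) 1)).toReal

noncomputable def gradN (d : ℕ) (y : EuclideanSpace ℝ (Fin d)) : EuclideanSpace ℝ (Fin d) :=
  (sphereVol d * ‖y‖ ^ d)⁻¹ • y

noncomputable def hessN (d : ℕ) (z w : EuclideanSpace ℝ (Fin d)) : EuclideanSpace ℝ (Fin d) :=
  (sphereVol d)⁻¹ • ((‖z‖ ^ d)⁻¹ • w - ((d : ℝ) * (‖z‖ ^ (d + 2))⁻¹ * ⟪z, w⟫) • z)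

/-- `Φ` is a defining function of class `C^{1+γ}` for the set `D`. -/
def IsDefining (d : ℕ) (γ : ℝ) (D : Set (EuclideanSpace ℝ (Fin d)))
    (Φ : EuclideanSpace ℝ (Fin d) → ℝ) : Prop :=
  ContDiff ℝ 1 Φ ∧
  (∃ K : ℝ, ∀ x y, ‖gradient Φ x - gradient Φ y‖ ≤ K * ‖x - y‖ ^ γ) ∧
  D = {x | Φ x < 0} ∧
  frontier D = {x | Φ x = 0} ∧
  ∀ x ∈ frontier D, gradient Φ x ≠ 0

/-- `D` is a bounded domain of class `C^{1+γ}`. -/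
def IsC1Domain (d : ℕ) (γ : ℝ) (D : Set (EuclideanSpace ℝ (Fin d))) : Prop :=
  IsOpen D ∧ Bornology.IsBounded D ∧ ∃ Φ, IsDefining d γ D Φ

namespace AggPatch

abbrev Eu (d : ℕ) := EuclideanSpace ℝ (Fin d)

/-! ### Regularised kernels -/

noncomputable def RR {d : ℕ} (r : ℝ) (z : Eu d) : ℝ := √(‖z‖ ^ 2 + r ^ 2)

noncomputable def Kr {d : ℕ} (r : ℝ) (z : Eu d) : Eu d := ((RR r z) ^ d)⁻¹ • z

noncomputable def Hop {d : ℕ} (r : ℝ) (z : Eu d) : Eu d →L[ℝ] Eu d :=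
  ((RR r z) ^ d)⁻¹ • ContinuousLinearMap.id ℝ (Eu d) -
    ((d : ℝ) * ((RR r z) ^ (d + 2))⁻¹) • (innerSL ℝ z).smulRight z

noncomputable def eta {d : ℕ} (r : ℝ) (z : Eu d) : ℝ := d * r ^ 2 * ((RR r z) ^ (d + 2))⁻¹

variable {d : ℕ}

lemma RR_nonneg (r : ℝ) (z : Eu d) : 0 ≤ RR r z := Real.sqrt_nonneg _

lemma RR_sq (r : ℝ) (z : Eu d) : RR r z ^ 2 = ‖z‖ ^ 2 + r ^ 2 :=
  Real.sq_sqrt (by positivity)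

lemma RR_pos {r : ℝ} (hr : 0 < r) (z : Eu d) : 0 < RR r z :=
  Real.sqrt_pos.2 (by positivity)

lemma norm_le_RR (r : ℝ) (z : Eu d) : ‖z‖ ≤ RR r z :=
  Real.le_sqrt_of_sq_le (by nlinarith [sq_nonneg r])

lemma le_RR (r : ℝ) (z : Eu d) : r ≤ RR r z :=
  Real.le_sqrt_of_sq_le (by nlinarith [sq_nonneg ‖z‖])

lemma RR_zero (z : Eu d) : RR 0 z = ‖z‖ := by
  simp [RR]

lemma RR_mono {r s : ℝ} (hr : 0 ≤ r) (h : r ≤ s) (z : Eu d) : RR r z ≤ RR s z :=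
  Real.sqrt_le_sqrt (by gcongr)

lemma RR_continuous : Continuous (fun p : ℝ × Eu d => RR p.1 p.2) := by
  unfold RR; fun_prop

lemma RR_continuous' (r : ℝ) : Continuous (fun z : Eu d => RR r z) := by
  unfold RR; fun_prop

lemma Hop_inner (r : ℝ) (z u w : Eu d) :
    ⟪Hop r z u, w⟫ = ((RR r z) ^ d)⁻¹ * ⟪u, w⟫ -
      (d : ℝ) * ((RR r z) ^ (d + 2))⁻¹ * ⟪z, u⟫ * ⟪z, w⟫ := by
  simp [Hop, inner_sub_left, real_inner_smul_left]
  ring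

lemma Hop_symm (r : ℝ) (z u w : Eu d) : ⟪Hop r z u, w⟫ = ⟪u, Hop r z w⟫ := by
  rw [real_inner_comm (Hop r z w), Hop_inner, Hop_inner, real_inner_comm u w]; ring

lemma Hop_norm_le (r : ℝ) (z : Eu d) (hz : 0 < RR r z) :
    ‖Hop r z‖ ≤ (1 + d) * ((RR r z) ^ d)⁻¹ := by
  refine ContinuousLinearMap.opNorm_le_bound _ (by positivity) (fun u => ?_)
  have h1 : Hop r z u = ((RR r z) ^ d)⁻¹ • u - ((d : ℝ) * ((RR r z) ^ (d + 2))⁻¹) • (⟪z, u⟫ • z) := by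
    simp [Hop]
  rw [h1]
  have h2 : ‖((d : ℝ) * ((RR r z) ^ (d + 2))⁻¹) • (⟪z, u⟫ • z)‖ ≤ d * ((RR r z) ^ d)⁻¹ * ‖u‖ := by
    rw [norm_smul, norm_smul, Real.norm_of_nonneg (by positivity)]
    have h3 : ‖⟪z, u⟫‖ ≤ ‖z‖ * ‖u‖ := norm_inner_le_norm z u
    have h4 := norm_le_RR r z
    calc (d : ℝ) * ((RR r z) ^ (d + 2))⁻¹ * (‖⟪z, u⟫‖ * ‖z‖)
        ≤ (d : ℝ) * ((RR r z) ^ (d + 2))⁻¹ * ((RR r z * ‖u‖) * RR r z) := by gcongr; exact h3.trans (by gcongr)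
      _ = d * ((RR r z) ^ d)⁻¹ * ‖u‖ := by field_simp; ring
  calc _ ≤ ‖((RR r z) ^ d)⁻¹ • u‖ + _ := norm_sub_le _ _
    _ ≤ ((RR r z) ^ d)⁻¹ * ‖u‖ + d * ((RR r z) ^ d)⁻¹ * ‖u‖ := by
        gcongr
        rw [norm_smul, Real.norm_of_nonneg (by positivity)]
    _ = _ := by ring

lemma eta_nonneg (r : ℝ) (z : Eu d) : 0 ≤ eta r z := by
  have := RR_nonneg r z
  unfold eta; positivity

lemma Hop_trace {r : ℝ} (hr : 0 < r) (z : Eu d) :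
    ∑ i, ⟪Hop r z (EuclideanSpace.basisFun (Fin d) ℝ i), EuclideanSpace.basisFun (Fin d) ℝ i⟫
      = eta r z := by
  have h0 := RR_pos hr z
  have h1 : ∀ i, ⟪Hop r z (EuclideanSpace.basisFun (Fin d) ℝ i), EuclideanSpace.basisFun (Fin d) ℝ i⟫
      = ((RR r z) ^ d)⁻¹ - (d : ℝ) * ((RR r z) ^ (d + 2))⁻¹ * (z i) ^ 2 := by
    intro i
    rw [Hop_inner]
    simp [EuclideanSpace.basisFun_apply, EuclideanSpace.inner_single_right]
    ring
  rw [Finset.sum_congr rfl (fun i _ => h1 i), Finset.sum_sub_distrib, ← Finset.mul_sum]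
  have h2 : ∑ i, (z i) ^ 2 = ‖z‖ ^ 2 := by rw [EuclideanSpace.real_norm_sq_eq]
  rw [h2]
  have h3 : ‖z‖ ^ 2 = RR r z ^ 2 - r ^ 2 := by rw [RR_sq]; ring
  rw [h3]
  simp [eta]
  field_simp
  ring

lemma hasFDerivAt_RR {r : ℝ} (hr : 0 < r) (z : Eu d) :
    HasFDerivAt (fun z : Eu d => RR r z) ((RR r z)⁻¹ • innerSL ℝ z) z := by
  have h1 : HasFDerivAt (fun z : Eu d => ‖z‖ ^ 2 + r ^ 2) ((2 : ℝ) • innerSL ℝ z) z := by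
    have := (hasStrictFDerivAt_norm_sq z).hasFDerivAt.add_const (r ^ 2)
    refine this.congr_fderiv ?_
    ext u; simp [two_smul]
  have h2 := h1.sqrt (by positivity)
  refine HasFDerivAt.congr_fderiv (f' := _) h2 ?_
  ext u
  have : √(‖z‖ ^ 2 + r ^ 2) ≠ 0 := (RR_pos hr z).ne'
  simp [RR]
  field_simp

lemma hasFDerivAt_RR_pow {r : ℝ} (hr : 0 < r) (z : Eu d) (n : ℕ) :
    HasFDerivAt (fun z : Eu d => ((RR r z) ^ n)⁻¹) ((-(n : ℝ) * ((RR r z) ^ (n + 2))⁻¹) • innerSL ℝ z) z := by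
  have h0 := RR_pos hr z
  have h1 : HasDerivAt (fun t : ℝ => (t ^ n)⁻¹) (-(n * (RR r z) ^ (n - 1)) / ((RR r z) ^ n) ^ 2) (RR r z) := 
    (hasDerivAt_pow n (RR r z)).fun_inv (by positivity)
  have h2 := h1.comp_hasFDerivAt z (hasFDerivAt_RR hr z)
  refine HasFDerivAt.congr_fderiv (f' := _) h2 ?_
  rw [smul_smul]
  congr 1
  rcases n with _ | n
  · simp
  · field_simp
    simp [pow_succ]
    ring

lemma hasFDerivAt_Kr {r : ℝ} (hr : 0 < r) (z : Eu d) :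
    HasFDerivAt (fun z : Eu d => Kr r z) (Hop r z) z := by
  have h := (hasFDerivAt_RR_pow hr z d).smul (hasFDerivAt_id z)
  refine HasFDerivAt.congr_fderiv (f' := _) h ?_
  ext u
  simp [Hop]
  ring

lemma Kr_norm_le (r : ℝ) (z : Eu d) : ‖Kr r z‖ ≤ ((RR r z) ^ d)⁻¹ * ‖z‖ := by
  have := RR_nonneg r z
  rw [Kr, norm_smul, Real.norm_of_nonneg (by positivity)]

/-- third derivative of the regularised potential -/
noncomputable def Top3 {d : ℕ} (r : ℝ) (z u w : Eu d) : Eu d →L[ℝ] ℝ :=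
  (-(d : ℝ) * ((RR r z) ^ (d + 2))⁻¹) • (⟪u, w⟫ • innerSL ℝ z + ⟪z, w⟫ • innerSL ℝ u + ⟪z, u⟫ • innerSL ℝ w)
  + ((d : ℝ) * (d + 2) * ((RR r z) ^ (d + 4))⁻¹ * ⟪z, u⟫ * ⟪z, w⟫) • innerSL ℝ z

lemma hasFDerivAt_Hop {r : ℝ} (hr : 0 < r) (z u w : Eu d) :
    HasFDerivAt (fun z : Eu d => ⟪Hop r z u, w⟫) (Top3 r z u w) z := by
  have e : (fun z : Eu d => ⟪Hop r z u, w⟫) = fun z => ((RR r z) ^ d)⁻¹ * ⟪u, w⟫ -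
      (d : ℝ) * ((RR r z) ^ (d + 2))⁻¹ * ⟪z, u⟫ * ⟪z, w⟫ := by
    ext z; rw [Hop_inner]
  rw [e]
  have hu : HasFDerivAt (fun z : Eu d => ⟪z, u⟫) (innerSL ℝ u) z := by
    have := (innerSL ℝ u).hasFDerivAt (x := z)
    refine this.congr_of_eventuallyEq (Filter.Eventually.of_forall fun y => ?_)
    simp [real_inner_comm]
  have hw : HasFDerivAt (fun z : Eu d => ⟪z, w⟫) (innerSL ℝ w) z := by
    have := (innerSL ℝ w).hasFDerivAt (x := z)
    refine this.congr_of_eventuallyEq (Filter.Eventually.of_forall fun y => ?_)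
    simp [real_inner_comm]
  have h := ((hasFDerivAt_RR_pow hr z d).mul_const ⟪u, w⟫).sub
    ((((hasFDerivAt_RR_pow hr z (d+2)).const_mul (d : ℝ)).mul hu).mul hw)
  refine HasFDerivAt.congr_fderiv (f' := _) h ?_
  ext p
  simp [Top3]
  ring

lemma Top3_symm (r : ℝ) (z u w p : Eu d) : Top3 r z u w p = Top3 r z u p w := by
  simp [Top3]
  rw [real_inner_comm w p]
  ring

lemma Top3_le {r : ℝ} (hr : 0 < r) (z u w : Eu d) :
    ‖Top3 r z u w‖ ≤ (d * (d + 5)) * ((RR r z) ^ (d + 1))⁻¹ * (‖u‖ * ‖w‖) := by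
  have h0 := RR_pos hr z
  have hz := norm_le_RR r z
  refine ContinuousLinearMap.opNorm_le_bound _ (by positivity) (fun p => ?_)
  simp only [Top3, add_apply, smul_apply, innerSL_apply_apply, smul_eq_mul]
  have a1 : |⟪z, u⟫| ≤ RR r z * ‖u‖ := (abs_real_inner_le_norm z u).trans (by gcongr)
  have a2 : |⟪z, w⟫| ≤ RR r z * ‖w‖ := (abs_real_inner_le_norm z w).trans (by gcongr)
  have a3 : |⟪z, p⟫| ≤ RR r z * ‖p‖ := (abs_real_inner_le_norm z p).trans (by gcongr)
  have a4 : |⟪u, w⟫| ≤ ‖u‖ * ‖w‖ := abs_real_inner_le_norm u w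
  have a5 : |⟪u, p⟫| ≤ ‖u‖ * ‖p‖ := abs_real_inner_le_norm u p
  have a6 : |⟪w, p⟫| ≤ ‖w‖ * ‖p‖ := abs_real_inner_le_norm w p
  have b1 : |⟪u, w⟫ * ⟪z, p⟫ + ⟪z, w⟫ * ⟪u, p⟫ + ⟪z, u⟫ * ⟪w, p⟫| ≤ 3 * (RR r z * (‖u‖ * ‖w‖ * ‖p‖)) := by
    calc _ ≤ |⟪u, w⟫ * ⟪z, p⟫| + |⟪z, w⟫ * ⟪u, p⟫| + |⟪z, u⟫ * ⟪w, p⟫| := abs_add_three _ _ _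
      _ ≤ (‖u‖ * ‖w‖) * (RR r z * ‖p‖) + (RR r z * ‖w‖) * (‖u‖ * ‖p‖) + (RR r z * ‖u‖) * (‖w‖ * ‖p‖) := by
        simp only [abs_mul]; gcongr
      _ = _ := by ring
  rw [Real.norm_eq_abs]
  calc _ ≤ |(-(d:ℝ) * ((RR r z) ^ (d + 2))⁻¹) * (⟪u, w⟫ * ⟪z, p⟫ + ⟪z, w⟫ * ⟪u, p⟫ + ⟪z, u⟫ * ⟪w, p⟫)|
        + |(d : ℝ) * (d + 2) * ((RR r z) ^ (d + 4))⁻¹ * ⟪z, u⟫ * ⟪z, w⟫ * ⟪z, p⟫| := abs_add_le _ _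
    _ ≤ (d * ((RR r z) ^ (d + 2))⁻¹) * (3 * (RR r z * (‖u‖ * ‖w‖ * ‖p‖)))
        + (d : ℝ) * (d + 2) * ((RR r z) ^ (d + 4))⁻¹ * (RR r z * ‖u‖) * (RR r z * ‖w‖) * (RR r z * ‖p‖) := by
        simp only [abs_mul, abs_neg, abs_inv, abs_pow, abs_of_pos h0, Nat.abs_cast]
        rw [abs_of_nonneg (by positivity : (0:ℝ) ≤ (d:ℝ) + 2)]
        gcongr
    _ = _ := by field_simp; ring

lemma ext_bound {B : Eu d →L[ℝ] Eu d} {C : ℝ} (hC : 0 ≤ C)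
    (h : ∀ u w, |⟪B u, w⟫| ≤ C * (‖u‖ * ‖w‖)) : ‖B‖ ≤ C := by
  refine ContinuousLinearMap.opNorm_le_bound _ hC (fun u => ?_)
  by_cases h0 : B u = 0
  · rw [h0, norm_zero]; positivity
  have h1 := h u (B u)
  rw [real_inner_self_eq_norm_sq, abs_of_nonneg (by positivity)] at h1
  have : 0 < ‖B u‖ := norm_pos_iff.2 h0
  nlinarith

/-- local Lipschitz bound of the regularised Hessian -/
lemma Hop_sub_le {r : ℝ} (hr : 0 < r) (z z' : Eu d) (hzz : ‖z - z'‖ ≤ r) :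
    ‖Hop r z - Hop r z'‖ ≤ (d * (d + 5) * 2 ^ (d + 1)) * ((RR r z') ^ (d + 1))⁻¹ * ‖z - z'‖ := by
  have h0 := RR_pos hr z'
  refine ext_bound (by positivity) (fun u w => ?_)
  have key : ∀ y ∈ segment ℝ z' z, ‖Top3 r y u w‖ ≤
      (d * (d + 5)) * (2 ^ (d + 1) * ((RR r z') ^ (d + 1))⁻¹) * (‖u‖ * ‖w‖) := by
    intro y hy
    refine (Top3_le hr y u w).trans ?_
    have hy0 := RR_pos hr y
    have h1 : RR r z' ≤ 2 * RR r y := by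
      have h2 : ‖y - z'‖ ≤ r := (norm_sub_le_of_mem_segment hy).trans hzz
      have h3 : ‖z'‖ ≤ ‖y‖ + r := by
        have := norm_sub_le y (y - z')
        simp at this; linarith
      refine le_of_sq_le_sq ?_ (by positivity)
      rw [mul_pow, RR_sq, RR_sq]
      nlinarith [sq_nonneg (‖y‖ - r), norm_nonneg z', norm_nonneg y]
    have h2 : ((RR r y) ^ (d + 1))⁻¹ ≤ 2 ^ (d + 1) * ((RR r z') ^ (d + 1))⁻¹ := by
      have h5 : (RR r z') ^ (d + 1) ≤ (2 * RR r y) ^ (d + 1) := by gcongr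
      rw [mul_pow] at h5
      rw [← div_eq_mul_inv, le_div_iff₀ (by positivity), inv_mul_le_iff₀ (by positivity)]
      linarith
    gcongr
  have h := Convex.norm_image_sub_le_of_norm_hasFDerivWithin_le
    (f := fun z : Eu d => ⟪Hop r z u, w⟫) (f' := fun z => Top3 r z u w)
    (fun y _ => (hasFDerivAt_Hop hr y u w).hasFDerivWithinAt) key (convex_segment z' z)
    (left_mem_segment ℝ z' z) (right_mem_segment ℝ z' z)
  rw [Real.norm_eq_abs] at h
  rw [sub_apply, inner_sub_left]
  refine h.trans (le_of_eq (by ring))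

lemma inv_pow_sub_le {A B t q : ℝ} (ht : 0 < t) (hA : t ≤ A) (hAB : A ≤ B) (hq : B ^ 2 - A ^ 2 ≤ q) (n : ℕ) :
    (A ^ n)⁻¹ - (B ^ n)⁻¹ ≤ n * q * (t ^ (n + 2))⁻¹ ∧ 0 ≤ (A ^ n)⁻¹ - (B ^ n)⁻¹ := by
  have hA0 : 0 < A := ht.trans_le hA
  have hB0 : 0 < B := hA0.trans_le hAB
  constructor
  · have h1 : 1 - n * (1 - A / B) ≤ (A / B) ^ n := by
      have := one_add_mul_le_pow (a := A / B - 1) (by have : 0 ≤ A / B := by positivity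
                                                      linarith) n
      simp at this; linarith
    have h2 : 1 - A / B ≤ q / t ^ 2 := by
      rw [le_div_iff₀ (by positivity)]
      have : (1 - A / B) * (B * (A + B)) = B ^ 2 - A ^ 2 := by field_simp; ring
      have h3 : 0 ≤ 1 - A / B := by
        have : A / B ≤ 1 := (div_le_one hB0).2 hAB
        linarith
      have h4 : t ^ 2 ≤ B * (A + B) := by nlinarith
      nlinarith
    have h3 : (A ^ n)⁻¹ - (B ^ n)⁻¹ = (A ^ n)⁻¹ * (1 - (A / B) ^ n) := by
      rw [div_pow]; field_simp
    have hq0 : 0 ≤ q := le_trans (by nlinarith) hq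
    rw [h3]
    calc (A ^ n)⁻¹ * (1 - (A / B) ^ n) ≤ (A ^ n)⁻¹ * (n * (q / t ^ 2)) := by
          gcongr; nlinarith [Nat.cast_nonneg (α := ℝ) n]
      _ ≤ (t ^ n)⁻¹ * (n * (q / t ^ 2)) := by gcongr
      _ = _ := by field_simp; ring
  · have : (B ^ n)⁻¹ ≤ (A ^ n)⁻¹ := by gcongr
    linarith

lemma Hop_diff_le {r δ : ℝ} (hr : 0 < r) (h : r ≤ δ) (z : Eu d) (hz : z ≠ 0) :
    ‖Hop r z - Hop δ z‖ ≤ (d * (d + 3)) * (δ ^ 2 * (‖z‖ ^ (d + 2))⁻¹) := by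
  have hz0 : 0 < ‖z‖ := norm_pos_iff.2 hz
  have hq : RR δ z ^ 2 - RR r z ^ 2 ≤ δ ^ 2 := by rw [RR_sq, RR_sq]; nlinarith
  obtain ⟨a1, a2⟩ := inv_pow_sub_le hz0 (norm_le_RR r z) (RR_mono hr.le h z) hq d
  obtain ⟨b1, b2⟩ := inv_pow_sub_le hz0 (norm_le_RR r z) (RR_mono hr.le h z) hq (d + 2)
  refine ext_bound (by positivity) (fun u w => ?_)
  rw [sub_apply, inner_sub_left, Hop_inner, Hop_inner]
  have e : (RR r z ^ d)⁻¹ * ⟪u, w⟫ - d * (RR r z ^ (d + 2))⁻¹ * ⟪z, u⟫ * ⟪z, w⟫ -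
      ((RR δ z ^ d)⁻¹ * ⟪u, w⟫ - d * (RR δ z ^ (d + 2))⁻¹ * ⟪z, u⟫ * ⟪z, w⟫) =
      ((RR r z ^ d)⁻¹ - (RR δ z ^ d)⁻¹) * ⟪u, w⟫ -
       d * ((RR r z ^ (d + 2))⁻¹ - (RR δ z ^ (d + 2))⁻¹) * (⟪z, u⟫ * ⟪z, w⟫) := by ring
  rw [e]
  have c1 := abs_real_inner_le_norm u w
  have c2 := abs_real_inner_le_norm z u
  have c3 := abs_real_inner_le_norm z w
  calc _ ≤ |((RR r z ^ d)⁻¹ - (RR δ z ^ d)⁻¹) * ⟪u, w⟫| + 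
       |d * ((RR r z ^ (d + 2))⁻¹ - (RR δ z ^ (d + 2))⁻¹) * (⟪z, u⟫ * ⟪z, w⟫)| := abs_sub _ _
    _ ≤ (d * δ ^ 2 * (‖z‖ ^ (d + 2))⁻¹) * (‖u‖ * ‖w‖) +
       d * ((d + 2 : ℕ) * δ ^ 2 * (‖z‖ ^ (d + 2 + 2))⁻¹) * ((‖z‖ * ‖u‖) * (‖z‖ * ‖w‖)) := by
        rw [abs_mul, abs_mul, abs_mul, abs_mul, abs_of_nonneg a2, abs_of_nonneg b2, Nat.abs_cast]
        gcongr
    _ = _ := by push_cast; field_simp; ring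

lemma Hop_continuous {r : ℝ} (hr : 0 < r) : Continuous (fun z : Eu d => Hop r z) := by
  have h1 : Continuous (fun z : Eu d => ((RR r z) ^ d)⁻¹) :=
    ((RR_continuous' r).pow d).inv₀ (fun z => (pow_pos (RR_pos hr z) _).ne')
  have h2 : Continuous (fun z : Eu d => ((RR r z) ^ (d+2))⁻¹) :=
    ((RR_continuous' r).pow _).inv₀ (fun z => (pow_pos (RR_pos hr z) _).ne')
  have h3 : Continuous (fun z : Eu d => (innerSL ℝ z).smulRight z) := by
    have : Continuous (fun z : Eu d => ContinuousLinearMap.smulRightL ℝ (Eu d) (Eu d) (innerSL ℝ z) z) := by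
      fun_prop
    exact this
  unfold Hop
  fun_prop

lemma Kr_continuous {r : ℝ} (hr : 0 < r) : Continuous (fun z : Eu d => Kr r z) := by
  have h1 : Continuous (fun z : Eu d => ((RR r z) ^ d)⁻¹) :=
    ((RR_continuous' r).pow d).inv₀ (fun z => (pow_pos (RR_pos hr z) _).ne')
  unfold Kr
  fun_prop

lemma eta_continuous {r : ℝ} (hr : 0 < r) : Continuous (fun z : Eu d => eta r z) := by
  have h2 : Continuous (fun z : Eu d => ((RR r z) ^ (d+2))⁻¹) :=
    ((RR_continuous' r).pow _).inv₀ (fun z => (pow_pos (RR_pos hr z) _).ne')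
  unfold eta
  fun_prop

end AggPatch

namespace AggPatch
variable {d : ℕ}

/-! ### Weights -/

noncomputable def wtf (d : ℕ) (p q l s : ℝ) : ℝ :=
  if s ≤ l then s ^ (p - d) * l ^ (-p) else s ^ (-(d : ℝ) - q) * l ^ q

noncomputable def wt (p q l : ℝ) (z : Eu d) : ℝ := wtf d p q l ‖z‖

noncomputable def cd (d : ℕ) : ℝ := d * volume.real (ball (0 : Eu d) 1)

lemma cd_nonneg (d : ℕ) : 0 ≤ cd d := by unfold cd; positivity

lemma wt_aux (hd : 2 ≤ d) {p q l : ℝ} (hp : 0 < p) (hq : 0 < q) (hl : 0 < l) :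
    IntegrableOn (fun s : ℝ => s ^ (d - 1) * wtf d p q l s) (Ioi 0) ∧
    ∫ s in Ioi (0 : ℝ), s ^ (d - 1) * wtf d p q l s = 1 / p + 1 / q := by
  have e1 : EqOn (fun s : ℝ => s ^ (p - 1) * l ^ (-p)) (fun s : ℝ => s ^ (d - 1) * wtf d p q l s) (Ioc 0 l) := by
    intro s hs
    have : s ^ (d - 1) = s ^ ((d : ℝ) - 1) := by
      rw [← Real.rpow_natCast]; congr 1; push_cast [Nat.cast_sub (by omega : 1 ≤ d)]; ring
    simp only [wtf, if_pos hs.2]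
    rw [this, ← mul_assoc, ← Real.rpow_add hs.1]; congr 2; ring
  have e2 : EqOn (fun s : ℝ => s ^ (-q - 1) * l ^ q) (fun s : ℝ => s ^ (d - 1) * wtf d p q l s) (Ioi l) := by
    intro s hs
    have hs' : l < s := hs
    have hs0 : 0 < s := hl.trans hs'
    have : s ^ (d - 1) = s ^ ((d : ℝ) - 1) := by
      rw [← Real.rpow_natCast]; congr 1; push_cast [Nat.cast_sub (by omega : 1 ≤ d)]; ring
    simp only [wtf, if_neg (not_le.2 hs')]
    rw [this, ← mul_assoc, ← Real.rpow_add hs0]; congr 2; ring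
  have i1' : IntegrableOn (fun s : ℝ => s ^ (p - 1) * l ^ (-p)) (Ioc 0 l) := by
    have := (intervalIntegral.intervalIntegrable_rpow' (a := 0) (b := l) (r := p - 1) (by linarith))
    rw [intervalIntegrable_iff_integrableOn_Ioc_of_le hl.le] at this
    exact this.mul_const _
  have i2' : IntegrableOn (fun s : ℝ => s ^ (-q - 1) * l ^ q) (Ioi l) :=
    (integrableOn_Ioi_rpow_of_lt (by linarith) hl).mul_const _
  have i1 := i1'.congr_fun e1 measurableSet_Ioc
  have i2 := i2'.congr_fun e2 measurableSet_Ioi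
  have hu : Ioi (0 : ℝ) = Ioc 0 l ∪ Ioi l := (Ioc_union_Ioi_eq_Ioi hl.le).symm
  refine ⟨by rw [hu]; exact i1.union i2, ?_⟩
  have hdis : Disjoint (Ioc 0 l) (Ioi l) := Set.disjoint_left.2 fun x hx hx' => (not_lt.2 hx.2) hx'
  rw [hu, setIntegral_union hdis measurableSet_Ioi i1 i2,
    ← setIntegral_congr_fun measurableSet_Ioc e1, ← setIntegral_congr_fun measurableSet_Ioi e2,
    integral_mul_const, integral_mul_const, integral_Ioi_rpow_of_lt (by linarith) hl,
    ← intervalIntegral.integral_of_le hl.le, integral_rpow (Or.inl (by linarith))]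
  have a1 : (0 : ℝ) ^ (p - 1 + 1) = 0 := Real.zero_rpow (by linarith)
  rw [a1]
  have a2 : l ^ (p - 1 + 1) * l ^ (-p) = 1 := by
    rw [← Real.rpow_add hl]; simp
  have a3 : l ^ (-q - 1 + 1) * l ^ q = 1 := by
    rw [← Real.rpow_add hl]; simp
  have b1 : (l ^ (p - 1 + 1) - 0) / (p - 1 + 1) * l ^ (-p) = 1 / p := by
    rw [sub_zero, div_mul_eq_mul_div, a2]; congr 1; ring
  have b2 : -l ^ (-q - 1 + 1) / (-q - 1 + 1) * l ^ q = 1 / q := by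
    rw [div_mul_eq_mul_div, neg_mul, a3]
    have : -q - 1 + 1 = - q := by ring
    rw [this, neg_div_neg_eq]
  rw [b1, b2]

lemma wt_integral (hd : 2 ≤ d) {p q l : ℝ} (hp : 0 < p) (hq : 0 < q) (hl : 0 < l) :
    Integrable (wt (d := d) p q l) ∧ ∫ z, wt (d := d) p q l z = cd d * (1 / p + 1 / q) := by
  have : NeZero d := ⟨by omega⟩
  obtain ⟨h1, h2⟩ := wt_aux hd hp hq hl
  have hf : Module.finrank ℝ (Eu d) = d := by simp
  constructor
  · have := (integrable_fun_norm_addHaar (E := Eu d) volume (f := wtf d p q l)).2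
      (by rw [hf]; simpa [smul_eq_mul] using h1)
    exact this
  · have := integral_fun_norm_addHaar (E := Eu d) volume (wtf d p q l)
    rw [hf] at this
    simp only [smul_eq_mul, nsmul_eq_mul] at this
    rw [h2] at this
    simp only [wt, cd]
    rw [this]; ring

lemma wt_nonneg {p q l : ℝ} (hl : 0 < l) (z : Eu d) : 0 ≤ wt p q l z := by
  unfold wt wtf
  split_ifs <;> positivity

lemma wt_shift {p q l : ℝ} (b : ℝ) (hl : 0 < l) {z : Eu d} (hz : z ≠ 0) :
    wt p q l z * ‖z‖ ^ b = l ^ b * wt (p + b) (q - b) l z := by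
  have h0 : 0 < ‖z‖ := norm_pos_iff.2 hz
  unfold wt wtf
  split_ifs
  · have e1 : ‖z‖ ^ (p + b - d) = ‖z‖ ^ (p - d) * ‖z‖ ^ b := by rw [← Real.rpow_add h0]; ring_nf
    have e2 : l ^ (-p) = l ^ b * l ^ (-(p + b)) := by rw [← Real.rpow_add hl]; ring_nf
    rw [e1, e2]; ring
  · have e1 : ‖z‖ ^ (-(d : ℝ) - (q - b)) = ‖z‖ ^ (-(d : ℝ) - q) * ‖z‖ ^ b := by rw [← Real.rpow_add h0]; ring_nf
    have e2 : l ^ q = l ^ b * l ^ (q - b) := by rw [← Real.rpow_add hl]; ring_nf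
    rw [e1, e2]; ring

section
variable {V : Type*} [NormedAddCommGroup V] [NormedSpace ℝ V]

lemma ae_ne (hd : 2 ≤ d) (x : Eu d) : ∀ᵐ y : Eu d, y ≠ x := by
  have : NeZero d := ⟨by omega⟩
  simp [ae_iff]

lemma wt_bound (hd : 2 ≤ d) {p q l C : ℝ} (hp : 0 < p) (hq : 0 < q) (hl : 0 < l) (x : Eu d) {F : Eu d → V}
    (h : ∀ y, y ≠ x → ‖F y‖ ≤ C * wt p q l (x - y)) :
    ‖∫ y, F y‖ ≤ C * (cd d * (1 / p + 1 / q)) := by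
  obtain ⟨h1, h2⟩ := wt_integral hd hp hq hl
  have h3 : Integrable (fun y => C * wt p q l (x - y)) := (h1.comp_sub_left x).const_mul C
  refine (norm_integral_le_of_norm_le h3 ((ae_ne hd x).mono h)).trans (le_of_eq ?_)
  rw [integral_const_mul, integral_sub_left_eq_self (fun z => wt p q l z), h2]

lemma wt_integrable (hd : 2 ≤ d) {p q l C : ℝ} (hp : 0 < p) (hq : 0 < q) (hl : 0 < l) (x : Eu d) {F : Eu d → V}
    (hm : AEStronglyMeasurable F)
    (h : ∀ y, y ≠ x → ‖F y‖ ≤ C * wt p q l (x - y)) :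
    Integrable F := by
  obtain ⟨h1, h2⟩ := wt_integral hd hp hq hl
  have h3 : Integrable (fun y => C * wt p q l (x - y)) := (h1.comp_sub_left x).const_mul C
  exact h3.mono' hm ((ae_ne hd x).mono h)

lemma loc_pt {b l : ℝ} (hb : 0 < b) (hbd : b ≤ d) (hl : 0 < l) {z : Eu d} (hz : z ≠ 0) :
    ‖z‖ ^ (b - d) ≤ l ^ b * wt b 1 l z + l ^ (b - d) := by
  have h0 : 0 < ‖z‖ := norm_pos_iff.2 hz
  by_cases h : ‖z‖ ≤ l
  · have : l ^ b * wt b 1 l z = ‖z‖ ^ (b - d) := by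
      simp only [wt, wtf, if_pos h]
      rw [mul_left_comm, ← Real.rpow_add hl]; simp
    rw [this]; linarith [Real.rpow_nonneg hl.le (b - d)]
  · have : ‖z‖ ^ (b - d) ≤ l ^ (b - d) :=
      Real.rpow_le_rpow_of_nonpos hl (not_le.1 h).le (by linarith)
    have := mul_nonneg (Real.rpow_nonneg hl.le b) (wt_nonneg (p := b) (q := 1) hl z)
    linarith

/-- local integral bound -/
lemma loc_bound (hd : 2 ≤ d) {b l C R : ℝ} (hb : 0 < b) (hbd : b ≤ d) (hl : 0 < l) (hC : 0 ≤ C) (x : Eu d)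
    {F : Eu d → V}
    (h : ∀ y, y ≠ x → ‖F y‖ ≤ C * ‖x - y‖ ^ (b - d)) (h' : ∀ y, y ∉ closedBall (0 : Eu d) R → F y = 0) :
    ‖∫ y, F y‖ ≤ C * (l ^ b * (cd d * (1 / b + 1)) + l ^ (b - d) * volume.real (closedBall (0 : Eu d) R)) := by
  obtain ⟨h1, h2⟩ := wt_integral hd hb one_pos hl
  have h3 : Integrable (fun y => l ^ b * wt b 1 l (x - y)) := (h1.comp_sub_left x).const_mul _
  have h4 : Integrable (indicator (closedBall (0 : Eu d) R) (fun _ => l ^ (b - d))) :=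
    (integrable_indicator_iff measurableSet_closedBall).2 (integrableOn_const (measure_closedBall_lt_top).ne)
  have h5 := ((h3.add h4).const_mul C)
  refine (norm_integral_le_of_norm_le h5 ((ae_ne hd x).mono fun y hy => ?_)).trans (le_of_eq ?_)
  · by_cases hR : y ∈ closedBall (0 : Eu d) R
    · refine (h y hy).trans ?_
      simp only [Pi.add_apply, indicator_of_mem hR]
      gcongr
      exact loc_pt hb hbd hl (sub_ne_zero.2 hy.symm)
    · rw [h' y hR]
      simp only [Pi.add_apply, indicator_of_notMem hR, norm_zero]
      have := wt_nonneg (p := b) (q := 1) hl (x - y)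
      positivity
  · rw [integral_const_mul]
    congr 1
    simp only [Pi.add_apply]
    rw [integral_add h3 h4, integral_const_mul, integral_sub_left_eq_self (fun z => wt b 1 l z), h2,
      integral_indicator measurableSet_closedBall, setIntegral_const, smul_eq_mul]
    ring

end

/-! pointwise kernel bounds by weights -/

lemma RRinv_le {r : ℝ} (hr : 0 < r) {z : Eu d} (hz : z ≠ 0) (n : ℕ) :
    ((RR r z) ^ (d + n))⁻¹ ≤ r ^ (-(n : ℝ)) * wt d n r z := by
  have h0 : 0 < ‖z‖ := norm_pos_iff.2 hz
  have hR := RR_pos hr z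
  unfold wt wtf
  split_ifs with h
  · have e : r ^ (-(n : ℝ)) * (‖z‖ ^ ((d : ℝ) - d) * r ^ (-(d : ℝ))) = (r ^ (d + n))⁻¹ := by
      rw [sub_self, Real.rpow_zero, one_mul, ← Real.rpow_add hr, ← Real.rpow_natCast, ← Real.rpow_neg hr.le]
      congr 1; push_cast; ring
    rw [e]; gcongr; exact le_RR r z
  · have e : r ^ (-(n : ℝ)) * (‖z‖ ^ (-(d : ℝ) - n) * r ^ (n : ℝ)) = (‖z‖ ^ (d + n))⁻¹ := by
      rw [mul_left_comm, ← Real.rpow_add hr, ← Real.rpow_natCast, ← Real.rpow_neg h0.le]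
      simp; ring_nf
    rw [e]; gcongr; exact norm_le_RR r z

lemma eta_le {r : ℝ} (hr : 0 < r) {z : Eu d} (hz : z ≠ 0) : eta r z ≤ d * wt d 2 r z := by
  have := RRinv_le hr hz 2
  unfold eta
  calc (d : ℝ) * r ^ 2 * ((RR r z) ^ (d + 2))⁻¹ ≤ d * r ^ 2 * (r ^ (-((2 : ℕ) : ℝ)) * wt d (2 : ℕ) r z) := by gcongr
    _ = _ := by
      rw [Real.rpow_neg hr.le, Real.rpow_natCast]; push_cast; field_simp

lemma Hdiff_le {r δ : ℝ} (hr : 0 < r) (h : r ≤ δ) {z : Eu d} (hz : z ≠ 0) :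
    ‖Hop r z - Hop δ z‖ ≤ (2 + 2 * d + d * (d + 3)) * wt 0 2 δ z := by
  have h0 : 0 < ‖z‖ := norm_pos_iff.2 hz
  have hδ : 0 < δ := hr.trans_le h
  by_cases hzd : ‖z‖ ≤ δ
  · have e : wt 0 2 δ z = (‖z‖ ^ d)⁻¹ := by
      simp only [wt, wtf, if_pos hzd]
      rw [zero_sub, Real.rpow_neg h0.le]; simp
    rw [e]
    have h1 := Hop_norm_le r z (RR_pos hr z)
    have h2 := Hop_norm_le δ z (RR_pos hδ z)
    have h3 : ((RR r z) ^ d)⁻¹ ≤ (‖z‖ ^ d)⁻¹ := by gcongr; exact norm_le_RR r z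
    have h4 : ((RR δ z) ^ d)⁻¹ ≤ (‖z‖ ^ d)⁻¹ := by gcongr; exact norm_le_RR δ z
    have h5 : 0 < (‖z‖ ^ d)⁻¹ := by positivity
    calc _ ≤ ‖Hop r z‖ + ‖Hop δ z‖ := norm_sub_le _ _
      _ ≤ (1 + d) * (‖z‖ ^ d)⁻¹ + (1 + d) * (‖z‖ ^ d)⁻¹ := by
        gcongr
        · exact h1.trans (by gcongr)
        · exact h2.trans (by gcongr)
      _ ≤ _ := by
        have : 0 ≤ (d : ℝ) * (d + 3) * (‖z‖ ^ d)⁻¹ := by positivity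
        linarith
  · have e : wt 0 2 δ z = δ ^ 2 * (‖z‖ ^ (d + 2))⁻¹ := by
      simp only [wt, wtf, if_neg hzd]
      rw [mul_comm, ← Real.rpow_natCast, ← Real.rpow_natCast, ← Real.rpow_neg h0.le]; push_cast; ring_nf
    rw [e]
    refine (Hop_diff_le hr h z hz).trans ?_
    gcongr
    linarith [Nat.cast_nonneg (α := ℝ) d]

end AggPatch

namespace AggPatch
variable {d : ℕ}

/-! ### Densities and potentials -/

/-- Abstract data: density `ρ`, `f` with `∇ f = ρ g`. -/
structure Dat (γ y R : ℝ) (ρ f : Eu d → ℝ) (g : Eu d → Eu d) : Prop where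
  cont : Continuous ρ
  nn : ∀ x, 0 ≤ ρ x
  le1 : ∀ x, ρ x ≤ 1
  supp : ∀ x, x ∉ closedBall (0 : Eu d) R → ρ x = 0
  fsupp : ∀ x, x ∉ closedBall (0 : Eu d) R → f x = 0
  fder : ∀ x, HasFDerivAt f (ρ x • innerSL ℝ (g x)) x
  fneg : ∀ x, f x ≤ 0
  gcont : Continuous g
  y0 : 0 ≤ y
  hol : ∀ x x', ‖g x - g x'‖ ≤ y * ‖x - x'‖ ^ γ
  R0 : 0 ≤ R

noncomputable def vel (r : ℝ) (ρ : Eu d → ℝ) (x : Eu d) : Eu d := ∫ y, ρ y • Kr r (x - y)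
noncomputable def SS (r : ℝ) (ρ : Eu d → ℝ) (x : Eu d) : Eu d →L[ℝ] Eu d := ∫ y, ρ y • Hop r (x - y)
noncomputable def cc (r : ℝ) (f : Eu d → ℝ) (x : Eu d) : ℝ := ∫ y, f y * eta r (x - y)
noncomputable def gc (r : ℝ) (ρ : Eu d → ℝ) (g : Eu d → Eu d) (x : Eu d) : Eu d :=
  ∫ y, (ρ y * eta r (x - y)) • g y
noncomputable def comm (r : ℝ) (ρ : Eu d → ℝ) (g : Eu d → Eu d) (x : Eu d) : Eu d :=
  SS r ρ x (g x) - gc r ρ g x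

lemma cpt_integrable {V : Type*} [NormedAddCommGroup V] {R : ℝ} {F : Eu d → V} (hF : Continuous F)
    (h : ∀ x, x ∉ closedBall (0 : Eu d) R → F x = 0) : Integrable F :=
  hF.integrable_of_hasCompactSupport (HasCompactSupport.intro (isCompact_closedBall 0 R) h)

section
variable {V : Type*} [NormedAddCommGroup V] [NormedSpace ℝ V]

lemma hasFDerivAt_conv {R M : ℝ} {φ : Eu d → ℝ} (hφ : Continuous φ)
    (h : ∀ x, x ∉ closedBall (0 : Eu d) R → φ x = 0)
    {k : Eu d → V} {k' : Eu d → Eu d →L[ℝ] V} (hk : ∀ z, HasFDerivAt k (k' z) z)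
    (hk' : Continuous k') (hb : ∀ z, ‖k' z‖ ≤ M) (x : Eu d) :
    HasFDerivAt (fun x => ∫ y, φ y • k (x - y)) (∫ y, φ y • k' (x - y)) x := by
  have kc : Continuous k := continuous_iff_continuousAt.2 fun z => (hk z).continuousAt
  refine hasFDerivAt_integral_of_dominated_of_fderiv_le (bound := fun y => |φ y| * M) (s := univ)
    (F' := fun x y => φ y • k' (x - y)) Filter.univ_mem
    (Filter.Eventually.of_forall fun x => ?_) ?_ ?_ ?_ ?_ ?_
  · exact (by fun_prop : Continuous fun y => φ y • k (x - y)).aestronglyMeasurable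
  · exact cpt_integrable (R := R) (by fun_prop) (fun y hy => by simp [h y hy])
  · exact (by fun_prop : Continuous fun y => φ y • k' (x - y)).aestronglyMeasurable
  · refine Filter.Eventually.of_forall fun y x _ => ?_
    rw [norm_smul, Real.norm_eq_abs]
    gcongr; exact hb _
  · exact cpt_integrable (R := R) (by fun_prop) (fun y hy => by simp [h y hy])
  · refine Filter.Eventually.of_forall fun y x _ => ?_
    have h1 : HasFDerivAt (fun x : Eu d => x - y) (ContinuousLinearMap.id ℝ (Eu d)) x := (hasFDerivAt_id x).sub_const y
    have h2 := (hk (x - y)).comp x h1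
    exact HasFDerivAt.congr_fderiv (h2.const_smul (φ y)) (by simp)

end

variable {γ y R : ℝ} {ρ f : Eu d → ℝ} {g : Eu d → Eu d}

lemma Dat.fcont (h : Dat γ y R ρ f g) : Continuous f :=
  continuous_iff_continuousAt.2 fun z => (h.fder z).continuousAt

lemma Dat.ibp (h : Dat γ y R ρ f g) {ψ : Eu d → ℝ} {ψ' : Eu d → Eu d →L[ℝ] ℝ} (hk : ∀ z, HasFDerivAt ψ (ψ' z) z)
    (hk' : ∀ p, Continuous fun z => ψ' z p) (x p : Eu d) :
    ∫ y, ψ (x - y) * (ρ y * ⟪g y, p⟫) = ∫ y, f y * ψ' (x - y) p := by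
  have hc := h.cont
  have hgc := h.gcont
  have hfc := h.fcont
  have kc : Continuous ψ := continuous_iff_continuousAt.2 fun z => (hk z).continuousAt
  have hd1 : ∀ y, HasFDerivAt (fun y => ψ (x - y)) (-(ψ' (x - y))) y := by
    intro y
    have h1 : HasFDerivAt (fun y : Eu d => x - y) (-ContinuousLinearMap.id ℝ (Eu d)) y := (hasFDerivAt_id y).const_sub x
    have h2 := (hk (x - y)).comp y h1
    exact HasFDerivAt.congr_fderiv h2 (by simp)
  have e1 : ∀ y, (fderiv ℝ f y) p = ρ y * ⟪g y, p⟫ := by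
    intro y; rw [(h.fder y).fderiv]; simp
  have e2 : ∀ y, (fderiv ℝ (fun y => ψ (x - y)) y) p = - ψ' (x - y) p := by
    intro y; rw [(hd1 y).fderiv]; simp
  have hk'' : Continuous fun y => ψ' (x - y) p := (hk' p).comp (by fun_prop : Continuous fun y => x - y)
  have := integral_mul_fderiv_eq_neg_fderiv_mul_of_integrable (μ := (volume : Measure (Eu d)))
    (f := fun y => ψ (x - y)) (g := f) (v := p) ?_ ?_ ?_ (fun y _ => (hd1 y).differentiableAt)
    (fun y _ => (h.fder y).differentiableAt)
  · simp only [e1, e2] at this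
    rw [this, ← integral_neg]
    congr 1; ext y; ring
  · simp only [e2]
    exact cpt_integrable (R := R) (by fun_prop) (fun y hy => by simp [h.fsupp y hy])
  · simp only [e1]
    exact cpt_integrable (R := R) (by fun_prop) (fun y hy => by simp [h.supp y hy])
  · exact cpt_integrable (R := R) (by fun_prop) (fun y hy => by simp [h.fsupp y hy])

lemma Top3_cont {r : ℝ} (hr : 0 < r) (u w p : Eu d) : Continuous (fun z => Top3 r z u w p) := by
  have h2 : Continuous (fun z : Eu d => ((RR r z) ^ (d+2))⁻¹) :=
    ((RR_continuous' r).pow _).inv₀ (fun z => (pow_pos (RR_pos hr z) _).ne')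
  have h3 : Continuous (fun z : Eu d => ((RR r z) ^ (d+4))⁻¹) :=
    ((RR_continuous' r).pow _).inv₀ (fun z => (pow_pos (RR_pos hr z) _).ne')
  simp only [Top3, add_apply, smul_apply, innerSL_apply_apply, smul_eq_mul]
  fun_prop

/-- trilinear form -/
noncomputable def BB (r : ℝ) (ρ : Eu d → ℝ) (g : Eu d → Eu d) (x u w p : Eu d) : ℝ :=
  ∫ y, ⟪Hop r (x - y) u, w⟫ * (ρ y * ⟪g y, p⟫)

lemma Dat.BB_symm (h : Dat γ y R ρ f g) {r : ℝ} (hr : 0 < r) (x u w p : Eu d) :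
    BB r ρ g x u w p = BB r ρ g x u p w := by
  unfold BB
  rw [h.ibp (fun z => hasFDerivAt_Hop hr z u w) (fun p => Top3_cont hr u w p),
    h.ibp (fun z => hasFDerivAt_Hop hr z u p) (fun q => Top3_cont hr u p q)]
  simp only [Top3_symm _ _ u w p]

lemma BB_symm' (r : ℝ) (x u w p : Eu d) :
    BB r ρ g x u w p = BB r ρ g x w u p := by
  unfold BB
  congr 1; ext y; rw [Hop_symm, real_inner_comm]

lemma Dat.intH (h : Dat γ y R ρ f g) {r : ℝ} (hr : 0 < r) (x : Eu d) :
    Integrable (fun y => ρ y • Hop r (x - y)) := by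
  have hc := h.cont
  have := Hop_continuous (d := d) hr
  exact cpt_integrable (R := R) (by fun_prop) (fun y hy => by rw [h.supp y hy]; exact zero_smul ℝ (Hop r (x - y)))

lemma Dat.intHg (h : Dat γ y R ρ f g) {r : ℝ} (hr : 0 < r) (x : Eu d) {v : Eu d → Eu d} (hv : Continuous v) :
    Integrable (fun y => ρ y • Hop r (x - y) (v y)) := by
  have hc := h.cont
  have := Hop_continuous (d := d) hr
  exact cpt_integrable (R := R) (by fun_prop) (fun y hy => by simp [h.supp y hy])

lemma Dat.SS_apply (h : Dat γ y R ρ f g) {r : ℝ} (hr : 0 < r) (x u : Eu d) :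
    SS r ρ x u = ∫ y, ρ y • Hop r (x - y) u := by
  unfold SS
  rw [ContinuousLinearMap.integral_apply (h.intH hr x)]
  rfl

lemma Dat.SS_inner (h : Dat γ y R ρ f g) {r : ℝ} (hr : 0 < r) (x u w : Eu d) :
    ⟪SS r ρ x u, w⟫ = ∫ y, ρ y * ⟪Hop r (x - y) u, w⟫ := by
  rw [h.SS_apply hr, real_inner_comm, ← integral_inner (h.intHg hr x continuous_const)]
  congr 1; ext y; rw [real_inner_smul_right, real_inner_comm]

lemma Dat.SS_symm (h : Dat γ y R ρ f g) {r : ℝ} (hr : 0 < r) (x u w : Eu d) :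
    ⟪SS r ρ x u, w⟫ = ⟪u, SS r ρ x w⟫ := by
  rw [real_inner_comm (SS r ρ x w), h.SS_inner hr, h.SS_inner hr]
  congr 1; ext y; rw [Hop_symm, real_inner_comm]

lemma Dat.eta_int (h : Dat γ y R ρ f g) {r : ℝ} (hr : 0 < r) (x : Eu d) {V : Type*} [NormedAddCommGroup V]
    [NormedSpace ℝ V] {v : Eu d → V} (hv : Continuous v) :
    Integrable (fun y => (ρ y * eta r (x - y)) • v y) := by
  have hc := h.cont
  have := eta_continuous (d := d) hr
  exact cpt_integrable (R := R) (by fun_prop) (fun y hy => by simp [h.supp y hy])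

lemma Dat.BB_int (h : Dat γ y R ρ f g) {r : ℝ} (hr : 0 < r) (x u w p : Eu d) :
    Integrable (fun y => ⟪Hop r (x - y) u, w⟫ * (ρ y * ⟪g y, p⟫)) := by
  have hc := h.cont
  have hg := h.gcont
  have := Hop_continuous (d := d) hr
  exact cpt_integrable (R := R) (by fun_prop) (fun y hy => by simp [h.supp y hy])

lemma Dat.gc_eq (h : Dat γ y R ρ f g) {r : ℝ} (hr : 0 < r) (x : Eu d) :
    gc r ρ g x = ∫ y, ρ y • Hop r (x - y) (g y) := by
  set b := EuclideanSpace.basisFun (Fin d) ℝ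
  refine ext_inner_left ℝ fun w => ?_
  unfold gc
  rw [← integral_inner (h.eta_int hr x h.gcont), ← integral_inner (h.intHg hr x h.gcont)]
  have e1 : ∀ y, ⟪w, (ρ y * eta r (x - y)) • g y⟫ = ∑ i, ⟪Hop r (x - y) (b i), b i⟫ * (ρ y * ⟪g y, w⟫) := by
    intro y
    rw [real_inner_smul_right, ← Finset.sum_mul, Hop_trace hr, real_inner_comm]; ring
  have e2 : ∀ y, ⟪w, ρ y • Hop r (x - y) (g y)⟫ = ∑ i, ⟪Hop r (x - y) w, b i⟫ * (ρ y * ⟪g y, b i⟫) := by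
    intro y
    rw [real_inner_smul_right, ← Hop_symm, ← b.sum_inner_mul_inner, Finset.mul_sum]
    refine Finset.sum_congr rfl fun i _ => ?_
    rw [real_inner_comm (b i) (g y)]; ring
  simp only [e1, e2]
  rw [integral_finsetSum _ (fun i _ => h.BB_int hr x _ _ _), integral_finsetSum _ (fun i _ => h.BB_int hr x _ _ _)]
  refine Finset.sum_congr rfl fun i _ => ?_
  change BB r ρ g x (b i) (b i) w = BB r ρ g x w (b i) (b i)
  rw [h.BB_symm hr, BB_symm']
  
lemma Dat.comm_eq (h : Dat γ y R ρ f g) {r : ℝ} (hr : 0 < r) (x : Eu d) :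
    comm r ρ g x = ∫ y, ρ y • Hop r (x - y) (g x - g y) := by
  unfold comm
  rw [h.gc_eq hr, h.SS_apply hr, ← integral_sub (h.intHg hr x continuous_const) (h.intHg hr x h.gcont)]
  congr 1; ext y; rw [map_sub, smul_sub]

lemma Dat.hasFDerivAt_vel (h : Dat γ y R ρ f g) {r : ℝ} (hr : 0 < r) (x : Eu d) :
    HasFDerivAt (vel r ρ) (SS r ρ x) x := by
  refine hasFDerivAt_conv (M := (1 + d) * (r ^ d)⁻¹) h.cont h.supp (fun z => hasFDerivAt_Kr hr z) (Hop_continuous hr) (fun z => ?_) x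
  refine (Hop_norm_le r z (RR_pos hr z)).trans ?_
  gcongr; exact le_RR r z

lemma Dat.hasFDerivAt_cc (h : Dat γ y R ρ f g) {r : ℝ} (hr : 0 < r) (x : Eu d) :
    HasFDerivAt (cc r f) (innerSL ℝ (gc r ρ g x)) x := by
  set k' : Eu d → Eu d →L[ℝ] ℝ := fun z =>
    (d * r ^ 2 * (-((d + 2 : ℕ) : ℝ) * ((RR r z) ^ (d + 2 + 2))⁻¹)) • innerSL ℝ z with hk'
  have hder : ∀ z : Eu d, HasFDerivAt (fun z => eta r z) (k' z) z := by
    intro z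
    have := (hasFDerivAt_RR_pow hr z (d + 2)).const_mul (d * r ^ 2)
    exact HasFDerivAt.congr_fderiv this (by rw [hk', smul_smul])
  have h3 : Continuous (fun z : Eu d => ((RR r z) ^ (d+2+2))⁻¹) :=
    ((RR_continuous' r).pow _).inv₀ (fun z => (pow_pos (RR_pos hr z) _).ne')
  have kc : Continuous k' := by rw [hk']; fun_prop
  have hM : ∀ z, ‖k' z‖ ≤ d * r ^ 2 * ((d + 2 : ℕ) * (r ^ (d + 3))⁻¹) := by
    intro z
    have h0 := RR_pos hr z
    rw [hk', norm_smul, innerSL_apply_norm, neg_mul, mul_neg, norm_neg, Real.norm_of_nonneg (by positivity)]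
    have h1 : ((RR r z) ^ (d+2+2))⁻¹ * ‖z‖ ≤ (r ^ (d + 3))⁻¹ := by
      calc ((RR r z) ^ (d+2+2))⁻¹ * ‖z‖ ≤ ((RR r z) ^ (d+2+2))⁻¹ * RR r z := by gcongr; exact norm_le_RR r z
        _ = ((RR r z) ^ (d+3))⁻¹ := by field_simp; ring
        _ ≤ _ := by gcongr; exact le_RR r z
    calc _ = d * r ^ 2 * ((d + 2 : ℕ) * (((RR r z) ^ (d+2+2))⁻¹ * ‖z‖)) := by ring
      _ ≤ _ := by gcongr
  have hfc := h.fcont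
  refine HasFDerivAt.congr_fderiv (hasFDerivAt_conv hfc h.fsupp hder kc hM x) ?_
  ext p
  rw [ContinuousLinearMap.integral_apply (cpt_integrable (R := R) (by fun_prop) (fun y hy => by simp [h.fsupp y hy]))]
  rw [innerSL_apply_apply, real_inner_comm, gc, ← integral_inner (h.eta_int hr x h.gcont)]
  have := h.ibp hder (fun p => by fun_prop) x p
  simp only [smul_apply, smul_eq_mul]
  rw [← this]
  congr 1; ext y
  rw [real_inner_smul_right, real_inner_comm]; ring

end AggPatch

namespace AggPatch
variable {d : ℕ} {γ y R : ℝ} {ρ f : Eu d → ℝ} {g : Eu d → Eu d}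

noncomputable def Ce (d : ℕ) (b : ℝ) : ℝ := d * (cd d * (1 / (d + b) + 1 / (2 - b)))

lemma Ce_nonneg (d : ℕ) {b : ℝ} (hb : 0 ≤ b) (hb2 : b < 2) : 0 ≤ Ce d b := by
  have := cd_nonneg d
  have h2 : 0 < 2 - b := by linarith
  unfold Ce; positivity

lemma eta_bound (hd : 2 ≤ d) {V : Type*} [NormedAddCommGroup V] [NormedSpace ℝ V] {r : ℝ} (hr : 0 < r) {b M : ℝ}
    (hb : 0 ≤ b) (hb2 : b < 2) (x : Eu d) {F : Eu d → V}
    (hM : 0 ≤ M) (h : ∀ y, ‖F y‖ ≤ eta r (x - y) * (M * ‖x - y‖ ^ b)) :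
    ‖∫ y, F y‖ ≤ Ce d b * (M * r ^ b) := by
  have hd' : (0 : ℝ) < d := by positivity
  have := wt_bound (C := d * (M * r ^ b)) hd (p := d + b) (q := 2 - b) (by positivity) (by linarith) hr x (F := F) ?_
  · refine this.trans (le_of_eq ?_)
    unfold Ce; ring
  intro y hy
  have hz : x - y ≠ 0 := sub_ne_zero.2 hy.symm
  have h1 := eta_le hr hz
  have h2 := wt_shift (p := d) (q := 2) b hr hz
  calc ‖F y‖ ≤ eta r (x - y) * (M * ‖x - y‖ ^ b) := h y
    _ ≤ d * wt d 2 r (x - y) * (M * ‖x - y‖ ^ b) := by gcongr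
    _ = d * M * (wt d 2 r (x - y) * ‖x - y‖ ^ b) := by ring
    _ = _ := by rw [h2]; ring

lemma Dat.gc_le (hd : 2 ≤ d) (hγ0 : 0 < γ) (hγ1 : γ < 1) (h : Dat γ y R ρ f g) {r : ℝ} (hr : 0 < r) (x : Eu d) :
    ‖gc r ρ g x‖ ≤ Ce d 0 * ‖g x‖ + Ce d γ * (y * r ^ γ) := by
  have hgc := h.gcont
  have e : gc r ρ g x = (∫ y, (ρ y * eta r (x - y)) • g x) + ∫ y, (ρ y * eta r (x - y)) • (g y - g x) := by
    rw [← integral_add (h.eta_int hr x continuous_const) (h.eta_int hr x (by fun_prop))]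
    unfold gc; congr 1; ext1 y; rw [← smul_add]; congr 1; abel
  rw [e]
  refine (norm_add_le _ _).trans (add_le_add ?_ ?_)
  · have := eta_bound hd hr (b := 0) (M := ‖g x‖) le_rfl (by norm_num) x
      (F := fun y => (ρ y * eta r (x - y)) • g x) (norm_nonneg _) ?_
    · simpa using this
    intro y
    have h1 := eta_nonneg r (x - y)
    rw [norm_smul, Real.norm_of_nonneg (mul_nonneg (h.nn y) h1)]
    have := h.le1 y
    simp only [Real.rpow_zero, mul_one]
    have h3 : 0 ≤ eta r (x - y) * ‖g x‖ := by positivity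
    nlinarith
  · refine eta_bound hd hr hγ0.le (by linarith) x h.y0 ?_
    intro z
    have h1 := eta_nonneg r (x - z)
    rw [norm_smul, Real.norm_of_nonneg (mul_nonneg (h.nn z) h1)]
    have h2 := h.hol z x
    rw [norm_sub_rev z x] at h2
    calc ρ z * eta r (x - z) * ‖g z - g x‖ ≤ 1 * eta r (x - z) * (y * ‖x - z‖ ^ γ) := by
          gcongr
          · exact h.le1 z
      _ = _ := by ring

/-- L2 -/
lemma Dat.comm_le2 (hd : 2 ≤ d) (hγ0 : 0 < γ) (hγ1 : γ < 1) (h : Dat γ y R ρ f g) {r : ℝ} (hr : 0 < r) (x : Eu d) :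
    ‖comm r ρ g x‖ ≤ (‖SS r ρ x‖ + Ce d 0) * ‖g x‖ + Ce d γ * (y * r ^ γ) := by
  unfold comm
  have h1 := h.gc_le hd hγ0 hγ1 hr x
  have h2 := (SS r ρ x).le_opNorm (g x)
  have h3 := norm_sub_le (SS r ρ x (g x)) (gc r ρ g x)
  linarith

lemma Hop_le_rpow {r : ℝ} (hr : 0 < r) {z : Eu d} (hz : z ≠ 0) : ‖Hop r z‖ ≤ (1 + d) * ‖z‖ ^ (-(d : ℝ)) := by
  have h0 : 0 < ‖z‖ := norm_pos_iff.2 hz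
  refine (Hop_norm_le r z (RR_pos hr z)).trans ?_
  rw [Real.rpow_neg h0.le, Real.rpow_natCast]
  gcongr; exact norm_le_RR r z

/-- L1 -/
lemma comm_le1 (hd : 2 ≤ d) (hγ0 : 0 < γ) (hγ1 : γ < 1) (R : ℝ) :
    ∃ C, 0 ≤ C ∧ ∀ (y : ℝ) (ρ f : Eu d → ℝ) (g : Eu d → Eu d), Dat γ y R ρ f g → ∀ r, 0 < r → ∀ x,
    ‖comm r ρ g x‖ ≤ C * y := by
  have := cd_nonneg d
  refine ⟨(1 + d) * (1 ^ γ * (cd d * (1 / γ + 1)) + 1 ^ (γ - d) * volume.real (closedBall (0 : Eu d) R)),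
    by positivity, ?_⟩
  intro y ρ f g h r hr x
  have hy := h.y0
  have hd' : (2 : ℝ) ≤ d := by exact_mod_cast hd
  rw [h.comm_eq hr]
  have := loc_bound (C := (1 + d) * y) (R := R) (l := 1) hd hγ0 (by linarith) one_pos (by positivity) x
    (F := fun z => ρ z • Hop r (x - z) (g x - g z)) ?_ (fun z hz => by simp [h.supp z hz])
  · refine this.trans (le_of_eq (by ring))
  intro z hz
  have hz' : x - z ≠ 0 := sub_ne_zero.2 hz.symm
  have h0 : 0 < ‖x - z‖ := norm_pos_iff.2 hz'
  rw [norm_smul, Real.norm_of_nonneg (h.nn z)]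
  calc ρ z * ‖Hop r (x - z) (g x - g z)‖ ≤ 1 * (((1 + d) * ‖x - z‖ ^ (-(d : ℝ))) * (y * ‖x - z‖ ^ γ)) := by
        gcongr
        · exact h.le1 z
        · exact ((Hop r (x - z)).le_opNorm _).trans (by gcongr; exacts [Hop_le_rpow hr hz', h.hol x z])
    _ = (1 + d) * y * (‖x - z‖ ^ γ * ‖x - z‖ ^ (-(d : ℝ))) := by ring
    _ = _ := by rw [← Real.rpow_add h0]; ring_nf

noncomputable def Cd (d : ℕ) (γ : ℝ) : ℝ := (2 + 2 * d + d * (d + 3)) * (cd d * (1 / γ + 1 / (2 - γ)))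

lemma Cd_nonneg (d : ℕ) {b : ℝ} (hb : 0 < b) (hb2 : b < 1) : 0 ≤ Cd d b := by
  have := cd_nonneg d
  have h2 : 0 < 2 - b := by linarith
  unfold Cd; positivity

/-- W4 -/
lemma Hdiff_bound (hd : 2 ≤ d) (hγ0 : 0 < γ) (hγ1 : γ < 1) {V : Type*} [NormedAddCommGroup V] [NormedSpace ℝ V] {r δ : ℝ} (hr : 0 < r) (hrδ : r ≤ δ) {M : ℝ}
    (x : Eu d) {F : Eu d → V}
    (hM : 0 ≤ M) (h : ∀ y, ‖F y‖ ≤ ‖Hop r (x - y) - Hop δ (x - y)‖ * (M * ‖x - y‖ ^ γ)) :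
    ‖∫ y, F y‖ ≤ Cd d γ * (M * δ ^ γ) := by
  have hd' : (0 : ℝ) < d := by positivity
  have hδ := hr.trans_le hrδ
  have := wt_bound (C := (2 + 2 * d + d * (d + 3)) * (M * δ ^ γ)) hd (p := 0 + γ) (q := 2 - γ) (by linarith) (by linarith) hδ x (F := F) ?_
  · refine this.trans (le_of_eq ?_)
    unfold Cd; rw [zero_add]; ring
  intro y hy
  have hz : x - y ≠ 0 := sub_ne_zero.2 hy.symm
  have h1 := Hdiff_le hr hrδ hz
  have h2 := wt_shift (p := 0) (q := 2) γ hδ hz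
  calc ‖F y‖ ≤ ‖Hop r (x - y) - Hop δ (x - y)‖ * (M * ‖x - y‖ ^ γ) := h y
    _ ≤ (2 + 2 * d + d * (d + 3)) * wt 0 2 δ (x - y) * (M * ‖x - y‖ ^ γ) := by gcongr
    _ = (2 + 2 * d + d * (d + 3)) * M * (wt 0 2 δ (x - y) * ‖x - y‖ ^ γ) := by ring
    _ = _ := by rw [h2]; ring

/-- L3 -/
lemma comm_le3 (hd : 2 ≤ d) (hγ0 : 0 < γ) (hγ1 : γ < 1) :
    ∃ C, 0 ≤ C ∧ ∀ (y R A : ℝ) (ρ f : Eu d → ℝ) (g : Eu d → Eu d), Dat γ y R ρ f g → ∀ r, 0 < r → 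
    (∀ R', r ≤ R' → ∀ x, ‖SS R' ρ x‖ ≤ A) → ∀ x x',
    ‖comm r ρ g x - comm r ρ g x'‖ ≤ (C + A) * (y * ‖x - x'‖ ^ γ) := by
  have hcd := cd_nonneg d
  have hCd := Cd_nonneg d hγ0 hγ1
  have hγ2 : 0 < 1 - γ := by linarith
  set C8 : ℝ := (d * (d + 5) * 2 ^ (d + 1)) * (cd d * (1 / (d + γ) + 1 / (1 - γ))) with hC8
  refine ⟨2 * Cd d γ + C8, by positivity, ?_⟩
  intro y R A ρ f g h r hr hA x x'
  have hy := h.y0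
  rcases eq_or_ne x x' with rfl | hne
  · simp [Real.zero_rpow hγ0.ne']
  have hl : 0 < ‖x - x'‖ := norm_pos_iff.2 (sub_ne_zero.2 hne)
  set l := ‖x - x'‖ with hl_def
  set R' := max l r with hR'
  have hrR : r ≤ R' := le_max_right _ _
  have hlR : l ≤ R' := le_max_left _ _
  have hR0 : 0 < R' := hr.trans_le hrR
  have hgc := h.gcont
  have key : ∀ x : Eu d, comm r ρ g x = (∫ z, ρ z • (Hop r (x - z) - Hop R' (x - z)) (g x - g z)) +
      ∫ z, ρ z • Hop R' (x - z) (g x - g z) := by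
    intro x
    rw [h.comm_eq hr, ← integral_add]
    · congr 1; ext1 z; rw [sub_apply, ← smul_add, sub_add_cancel]
    · have := (h.intHg hr x (v := fun z => g x - g z) (by fun_prop)).sub (h.intHg hR0 x (v := fun z => g x - g z) (by fun_prop))
      refine this.congr (Filter.Eventually.of_forall fun z => ?_)
      simp [sub_apply, smul_sub]
    · exact h.intHg hR0 x (v := fun z => g x - g z) (by fun_prop)
  have near : ∀ x : Eu d, ‖∫ z, ρ z • (Hop r (x - z) - Hop R' (x - z)) (g x - g z)‖ ≤ Cd d γ * (y * l ^ γ) := by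
    intro x
    by_cases hlr : l ≤ r
    · have : R' = r := max_eq_right hlr
      rw [this]
      simp
      positivity
    · have : R' = l := max_eq_left (not_le.1 hlr).le
      rw [← this]
      refine Hdiff_bound hd hγ0 hγ1 hr hrR x hy ?_
      intro z
      rw [norm_smul, Real.norm_of_nonneg (h.nn z)]
      calc _ ≤ 1 * (‖Hop r (x - z) - Hop R' (x - z)‖ * (y * ‖x - z‖ ^ γ)) := by
            gcongr
            · exact h.le1 z
            · exact (ContinuousLinearMap.le_opNorm _ _).trans (by gcongr; exact h.hol x z)
        _ = _ := by ring
  have far : (∫ z, ρ z • Hop R' (x - z) (g x - g z)) - (∫ z, ρ z • Hop R' (x' - z) (g x' - g z)) =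
      (∫ z, ρ z • (Hop R' (x - z) - Hop R' (x' - z)) (g x' - g z)) + SS R' ρ x (g x - g x') := by
    rw [h.SS_apply hR0, ← integral_sub (h.intHg hR0 x (v := fun z => g x - g z) (by fun_prop)) 
      (h.intHg hR0 x' (v := fun z => g x' - g z) (by fun_prop)), ← integral_add]
    · congr 1; ext1 z
      rw [sub_apply, ← smul_sub, ← smul_add]
      congr 1
      simp only [map_sub]; abel
    · have := (h.intHg hR0 x (v := fun z => g x' - g z) (by fun_prop)).sub (h.intHg hR0 x' (v := fun z => g x' - g z) (by fun_prop))
      refine this.congr (Filter.Eventually.of_forall fun z => ?_)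
      simp [sub_apply, smul_sub]
    · exact h.intHg hR0 x continuous_const
  have far1 : ‖∫ z, ρ z • (Hop R' (x - z) - Hop R' (x' - z)) (g x' - g z)‖ ≤ C8 * (y * l ^ γ) := by
    have := wt_bound (C := (d * (d + 5) * 2 ^ (d + 1)) * (y * l ^ γ)) hd (p := d + γ) (q := 1 - γ) (by positivity) hγ2 hR0 x' 
      (F := fun z => ρ z • (Hop R' (x - z) - Hop R' (x' - z)) (g x' - g z)) ?_
    · refine this.trans (le_of_eq ?_); rw [hC8]; ring
    intro z hz
    have hz' : x' - z ≠ 0 := sub_ne_zero.2 hz.symm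
    rw [norm_smul, Real.norm_of_nonneg (h.nn z)]
    have e : x - z - (x' - z) = x - x' := by abel
    have h1 := Hop_sub_le hR0 (x - z) (x' - z) (by rw [e]; exact hlR)
    rw [e] at h1
    have h2 := RRinv_le hR0 hz' 1
    have h3 := wt_shift (p := d) (q := 1) γ hR0 hz'
    have hw := wt_nonneg (p := d + γ) (q := 1 - γ) hR0 (x' - z)
    have hw' := wt_nonneg (p := d) (q := (1 : ℕ)) hR0 (x' - z)
    have h4 : l * (R' ^ (-((1 : ℕ) : ℝ)) * R' ^ γ) ≤ l ^ γ := by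
      rw [← Real.rpow_add hR0]
      calc l * R' ^ (-((1 : ℕ) : ℝ) + γ) ≤ l * l ^ (-((1 : ℕ) : ℝ) + γ) := by
            gcongr ?_ * ?_
            exact Real.rpow_le_rpow_of_nonpos hl hlR (by push_cast; linarith)
        _ = l ^ (1 : ℝ) * l ^ (-((1 : ℕ) : ℝ) + γ) := by rw [Real.rpow_one]
        _ = _ := by rw [← Real.rpow_add hl]; push_cast; ring_nf
    calc ρ z * ‖(Hop R' (x - z) - Hop R' (x' - z)) (g x' - g z)‖
        ≤ 1 * (((d * (d + 5) * 2 ^ (d + 1)) * (R' ^ (-((1 : ℕ) : ℝ)) * wt d (1 : ℕ) R' (x' - z)) * l) * (y * ‖x' - z‖ ^ γ)) := by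
          gcongr
          · exact h.le1 z
          · refine (ContinuousLinearMap.le_opNorm _ _).trans ?_
            gcongr
            · exact h1.trans (by gcongr)
            · exact h.hol x' z
      _ = (d * (d + 5) * 2 ^ (d + 1)) * y * l * R' ^ (-((1 : ℕ) : ℝ)) * (wt d 1 R' (x' - z) * ‖x' - z‖ ^ γ) := by
          push_cast; ring
      _ = (d * (d + 5) * 2 ^ (d + 1)) * (y * (l * (R' ^ (-((1 : ℕ) : ℝ)) * R' ^ γ))) * wt (d + γ) (1 - γ) R' (x' - z) := by
          rw [h3]; ring
      _ ≤ _ := by gcongr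
  have far2 : ‖SS R' ρ x (g x - g x')‖ ≤ A * (y * l ^ γ) :=
    (ContinuousLinearMap.le_opNorm _ _).trans (mul_le_mul (hA R' hrR x) (h.hol x x') (norm_nonneg _)
      ((norm_nonneg _).trans (hA R' hrR x)))
  rw [key x, key x']
  have e : ∀ a b c e : Eu d, a + b - (c + e) = a - c + (b - e) := by intros; abel
  rw [e, far]
  have n1 := near x
  have n2 := near x'
  calc _ ≤ _ := norm_add_le _ _
    _ ≤ _ := add_le_add (norm_sub_le _ _) (norm_add_le _ _)
    _ ≤ (Cd d γ * (y * l ^ γ) + Cd d γ * (y * l ^ γ)) + (C8 * (y * l ^ γ) + A * (y * l ^ γ)) := by gcongr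
    _ = _ := by ring

end AggPatch

namespace AggPatch
variable {d : ℕ} {γ y R : ℝ} {ρ f : Eu d → ℝ} {g : Eu d → Eu d}

/-! ### L4 -/

/-- linear algebra -/
lemma linalg1 (S : Eu d →L[ℝ] Eu d) (hS : ∀ u w, ⟪S u, w⟫ = ⟪u, S w⟫) {G : Eu d} (hG : 0 < ‖G‖) {E T : ℝ}
    (hE : 0 ≤ E)
    (h1 : ∀ u w p, |⟪S u, w⟫ * ⟪G, p⟫ - ⟪S u, p⟫ * ⟪G, w⟫| ≤ E * ‖G‖ * (‖u‖ * ‖w‖ * ‖p‖))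
    (hT : |∑ i, ⟪S (EuclideanSpace.basisFun (Fin d) ℝ i), EuclideanSpace.basisFun (Fin d) ℝ i⟫| ≤ T) :
    ‖S‖ ≤ T + (d + 2) * E := by
  set b := EuclideanSpace.basisFun (Fin d) ℝ
  have hT0 : 0 ≤ T := (abs_nonneg _).trans hT
  set n : Eu d := ‖G‖⁻¹ • G with hn
  have hn1 : ‖n‖ = 1 := by rw [hn, norm_smul, norm_inv, norm_norm]; field_simp
  have hGn : G = ‖G‖ • n := by rw [hn, smul_smul]; field_simp; simp
  have hnn : ⟪n, n⟫ = 1 := by rw [real_inner_self_eq_norm_sq, hn1]; norm_num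
  have a1 : ∀ u w, |⟪S u, w⟫ - ⟪S u, n⟫ * ⟪n, w⟫| ≤ E * (‖u‖ * ‖w‖) := by
    intro u w
    have := h1 u w n
    have e1 : ⟪G, n⟫ = ‖G‖ := by conv_lhs => rw [hGn]
                                 rw [real_inner_smul_left, hnn, mul_one]
    have e2 : ⟪G, w⟫ = ‖G‖ * ⟪n, w⟫ := by conv_lhs => rw [hGn]
                                          rw [real_inner_smul_left]
    rw [e1, e2, hn1] at this
    have e3 : ⟪S u, w⟫ * ‖G‖ - ⟪S u, n⟫ * (‖G‖ * ⟪n, w⟫) = ‖G‖ * (⟪S u, w⟫ - ⟪S u, n⟫ * ⟪n, w⟫) := by ring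
    rw [e3, abs_mul, abs_of_pos hG] at this
    have : ‖G‖ * |⟪S u, w⟫ - ⟪S u, n⟫ * ⟪n, w⟫| ≤ ‖G‖ * (E * (‖u‖ * ‖w‖)) := this.trans (le_of_eq (by ring))
    exact le_of_mul_le_mul_left this hG
  have a2 : |⟪S n, n⟫| ≤ T + d * E := by
    have e1 : ∑ i, ⟪S (b i), n⟫ * ⟪n, b i⟫ = ⟪S n, n⟫ := by
      have : ∀ i, ⟪S (b i), n⟫ * ⟪n, b i⟫ = ⟪n, b i⟫ * ⟪b i, S n⟫ := by
        intro i; rw [hS]; ring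
      rw [Finset.sum_congr rfl (fun i _ => this i), b.sum_inner_mul_inner, real_inner_comm]
    have e2 : |∑ i, (⟪S (b i), b i⟫ - ⟪S (b i), n⟫ * ⟪n, b i⟫)| ≤ d * E := by
      refine (Finset.abs_sum_le_sum_abs _ _).trans ?_
      refine (Finset.sum_le_sum (fun i _ => a1 (b i) (b i))).trans ?_
      simp
    rw [Finset.sum_sub_distrib, e1] at e2
    rw [abs_le] at *
    constructor <;> linarith [hT.1, hT.2, e2.1, e2.2]
  have a3 : ∀ u, |⟪S u, n⟫| ≤ (T + (d + 1) * E) * ‖u‖ := by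
    intro u
    have h3 := a1 n u
    have e : ⟪S n, u⟫ = ⟪S u, n⟫ := by rw [hS, real_inner_comm]
    rw [e, hn1, one_mul] at h3
    have h4 : |⟪S n, n⟫ * ⟪n, u⟫| ≤ (T + d * E) * ‖u‖ := by
      rw [abs_mul]
      have := abs_real_inner_le_norm n u
      rw [hn1, one_mul] at this
      gcongr
    have := abs_sub_abs_le_abs_sub ⟪S u, n⟫ (⟪S n, n⟫ * ⟪n, u⟫)
    linarith
  refine ext_bound (by positivity) fun u w => ?_
  have h3 := a1 u w
  have h4 : |⟪S u, n⟫ * ⟪n, w⟫| ≤ (T + (d + 1) * E) * ‖u‖ * ‖w‖ := by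
    rw [abs_mul]
    have := abs_real_inner_le_norm n w
    rw [hn1, one_mul] at this
    have := a3 u
    gcongr
  have := abs_sub_abs_le_abs_sub ⟪S u, w⟫ (⟪S u, n⟫ * ⟪n, w⟫)
  linarith

lemma Dat.tr_eq (h : Dat γ y R ρ f g) {r : ℝ} (hr : 0 < r) (x : Eu d) :
    ∑ i, ⟪SS r ρ x (EuclideanSpace.basisFun (Fin d) ℝ i), EuclideanSpace.basisFun (Fin d) ℝ i⟫ =
      ∫ z, ρ z * eta r (x - z) := by
  have hc := h.cont
  have hh := Hop_continuous (d := d) hr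
  simp only [h.SS_inner hr]
  rw [← integral_finsetSum]
  · congr 1; ext z; rw [← Finset.mul_sum, Hop_trace hr]
  · intro i _
    exact cpt_integrable (R := R) (by fun_prop) (fun y hy => by simp [h.supp y hy])

lemma Dat.tr_le (hd : 2 ≤ d) (h : Dat γ y R ρ f g) {r : ℝ} (hr : 0 < r) (x : Eu d) :
    |∑ i, ⟪SS r ρ x (EuclideanSpace.basisFun (Fin d) ℝ i), EuclideanSpace.basisFun (Fin d) ℝ i⟫| ≤ Ce d 0 := by
  rw [h.tr_eq hr, ← Real.norm_eq_abs]
  have := eta_bound hd hr (b := 0) (M := 1) le_rfl (by norm_num) x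
      (F := fun z => ρ z * eta r (x - z)) zero_le_one ?_
  · simpa using this
  intro z
  have h1 := eta_nonneg r (x - z)
  rw [Real.norm_of_nonneg (mul_nonneg (h.nn z) h1)]
  have := h.le1 z
  simp only [Real.rpow_zero, mul_one]
  nlinarith

lemma Dat.case1 (hd : 2 ≤ d) (hγ0 : 0 < γ) (hγ1 : γ < 1) (h : Dat γ y R ρ f g) {r δ : ℝ} (hr : 0 < r) (hrδ : r ≤ δ)
    (x : Eu d) (hg0 : 0 < ‖g x‖) (hg : y * δ ^ γ ≤ ‖g x‖) :
    ‖SS r ρ x - SS δ ρ x‖ ≤ 2 * Ce d 0 + (d + 2) * (2 * Cd d γ) := by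
  have hδ := hr.trans_le hrδ
  have hCd := Cd_nonneg d hγ0 hγ1
  have hy := h.y0
  refine linalg1 _ ?_ hg0 (by positivity) ?_ ?_
  · intro u w
    rw [sub_apply, sub_apply, inner_sub_left, inner_sub_right, h.SS_symm hr, h.SS_symm hδ]
  · have key : ∀ u w p, |⟪(SS r ρ x - SS δ ρ x) u, w⟫ * ⟪g x, p⟫ - (BB r ρ g x u w p - BB δ ρ g x u w p)| ≤
       Cd d γ * ‖g x‖ * (‖u‖ * ‖w‖ * ‖p‖) := by
      intro u w p
      have hc := h.cont
      have hgc := h.gcont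
      have i1 : ∀ r, 0 < r → Integrable (fun z => ρ z * ⟪Hop r (x - z) u, w⟫ * ⟪g x, p⟫) := by
        intro r hr
        have := Hop_continuous (d := d) hr
        exact cpt_integrable (R := R) (by fun_prop) (fun y hy => by simp [h.supp y hy])
      have i2 : ∀ r, 0 < r → Integrable (fun z => ρ z * ⟪Hop r (x - z) u, w⟫) := by
        intro r hr
        have := Hop_continuous (d := d) hr
        exact cpt_integrable (R := R) (by fun_prop) (fun y hy => by simp [h.supp y hy])
      have e : ⟪(SS r ρ x - SS δ ρ x) u, w⟫ * ⟪g x, p⟫ - (BB r ρ g x u w p - BB δ ρ g x u w p) =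
          ∫ z, ρ z * ⟪(Hop r (x - z) - Hop δ (x - z)) u, w⟫ * ⟪g x - g z, p⟫ := by
        rw [sub_apply, inner_sub_left, h.SS_inner hr, h.SS_inner hδ, sub_mul, ← integral_mul_const, ← integral_mul_const]
        unfold BB
        rw [← integral_sub (i1 r hr) (i1 δ hδ), ← integral_sub (h.BB_int hr _ _ _ _) (h.BB_int hδ _ _ _ _)]
        refine (integral_sub ((i1 r hr).sub (i1 δ hδ)) ((h.BB_int hr x u w p).sub (h.BB_int hδ x u w p))).symm.trans ?_
        congr 1; ext z
        simp only [sub_apply, inner_sub_left, Pi.sub_apply]; ring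
      rw [e, ← Real.norm_eq_abs]
      refine (Hdiff_bound hd hγ0 hγ1 hr hrδ x (M := y * (‖u‖ * ‖w‖ * ‖p‖)) (by positivity) ?_).trans ?_
      · intro z
        rw [norm_mul, norm_mul, Real.norm_of_nonneg (h.nn z)]
        have b1 : ‖⟪(Hop r (x - z) - Hop δ (x - z)) u, w⟫‖ ≤ ‖Hop r (x - z) - Hop δ (x - z)‖ * ‖u‖ * ‖w‖ :=
          (norm_inner_le_norm _ _).trans (by gcongr; exact ContinuousLinearMap.le_opNorm _ _)
        have b2 : ‖⟪g x - g z, p⟫‖ ≤ y * ‖x - z‖ ^ γ * ‖p‖ :=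
          (norm_inner_le_norm _ _).trans (by gcongr; exact h.hol x z)
        calc _ ≤ 1 * (‖Hop r (x - z) - Hop δ (x - z)‖ * ‖u‖ * ‖w‖) * (y * ‖x - z‖ ^ γ * ‖p‖) := by
              gcongr
              exact h.le1 z
          _ = _ := by ring
      · calc Cd d γ * (y * (‖u‖ * ‖w‖ * ‖p‖) * δ ^ γ) = Cd d γ * (y * δ ^ γ) * (‖u‖ * ‖w‖ * ‖p‖) := by ring
          _ ≤ _ := by gcongr
    intro u w p
    have k1 := key u w p
    have k2 := key u p w
    rw [h.BB_symm hr x u p w, h.BB_symm hδ x u p w] at k2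
    rw [abs_le] at *
    have e : ‖u‖ * ‖p‖ * ‖w‖ = ‖u‖ * ‖w‖ * ‖p‖ := by ring
    rw [e] at k2
    constructor <;> linarith [k1.1, k1.2, k2.1, k2.2]
  · simp only [sub_apply, inner_sub_left, Finset.sum_sub_distrib]
    have t1 := h.tr_le hd hr x
    have t2 := h.tr_le hd hδ x
    refine (abs_sub _ _).trans ?_
    linarith

/-! Case 2: isotropy -/

lemma polar_bound (Q : Eu d →L[ℝ] Eu d) (hS : ∀ u w, ⟪Q u, w⟫ = ⟪u, Q w⟫) {T : ℝ} (hT : 0 ≤ T)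
    (h : ∀ u, |⟪Q u, u⟫| ≤ T * ‖u‖ ^ 2) : ‖Q‖ ≤ T := by
  refine ext_bound hT fun u w => ?_
  rcases eq_or_ne u 0 with rfl | hu
  · simp
  rcases eq_or_ne w 0 with rfl | hw
  · simp
  have ha : 0 < ‖u‖ := norm_pos_iff.2 hu
  have hb : 0 < ‖w‖ := norm_pos_iff.2 hw
  have e : ∀ u w, 4 * ⟪Q u, w⟫ = ⟪Q (u + w), u + w⟫ - ⟪Q (u - w), u - w⟫ := by
    intro u w
    have : ⟪Q w, u⟫ = ⟪Q u, w⟫ := by rw [hS, real_inner_comm]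
    simp only [map_add, map_sub, inner_add_left, inner_add_right, inner_sub_left, inner_sub_right]
    linarith
  have h1 : ∀ u w : Eu d, 4 * |⟪Q u, w⟫| ≤ 2 * T * (‖u‖ ^ 2 + ‖w‖ ^ 2) := by
    intro u w
    have p := parallelogram_law_with_norm ℝ u w
    have h1 := h (u + w)
    have h2 := h (u - w)
    have h3 : |4 * ⟪Q u, w⟫| = 4 * |⟪Q u, w⟫| := by rw [abs_mul]; norm_num
    rw [← h3, e]
    refine (abs_sub _ _).trans ?_
    have p' : ‖u + w‖ ^ 2 + ‖u - w‖ ^ 2 = 2 * (‖u‖ ^ 2 + ‖w‖ ^ 2) := by nlinarith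
    nlinarith
  have h2 := h1 (‖w‖ • u) (‖u‖ • w)
  rw [map_smul, real_inner_smul_left, real_inner_smul_right, abs_mul, abs_mul, abs_norm, abs_norm, norm_smul, norm_smul, norm_norm, norm_norm] at h2
  have h3 : (‖u‖ * ‖w‖) * |⟪Q u, w⟫| ≤ (‖u‖ * ‖w‖) * (T * (‖u‖ * ‖w‖)) := by nlinarith
  exact le_of_mul_le_mul_left h3 (by positivity)

lemma iso_bound (hd : 2 ≤ d) {r δ : ℝ} (hr : 0 < r) (hδ : 0 < δ) :
    ‖∫ z in ball (0 : Eu d) δ, Hop r z‖ ≤ Ce d 0 := by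
  have hHc := Hop_continuous (d := d) hr
  have hIntg : IntegrableOn (fun z => Hop r z) (ball (0 : Eu d) δ) :=
    (hHc.continuousOn.integrableOn_compact (isCompact_closedBall (0 : Eu d) δ)).mono_set ball_subset_closedBall
  set Q := ∫ z in ball (0 : Eu d) δ, Hop r z with hQ
  have hQa : ∀ u, Q u = ∫ z in ball (0 : Eu d) δ, Hop r z u := fun u => ContinuousLinearMap.integral_apply hIntg u
  have hIntg' : ∀ u, IntegrableOn (fun z => Hop r z u) (ball (0 : Eu d) δ) := fun u =>
    ((hHc.clm_apply continuous_const).continuousOn.integrableOn_compact (isCompact_closedBall (0 : Eu d) δ)).mono_set ball_subset_closedBall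
  have hQi : ∀ u w, ⟪Q u, w⟫ = ∫ z in ball (0 : Eu d) δ, ⟪Hop r z u, w⟫ := by
    intro u w
    rw [hQa, real_inner_comm, ← integral_inner (hIntg' u)]
    congr 1; ext z; rw [real_inner_comm]
  have hQs : ∀ u w, ⟪Q u, w⟫ = ⟪u, Q w⟫ := by
    intro u w
    rw [real_inner_comm (Q w), hQi, hQi]
    congr 1; ext z; rw [Hop_symm, real_inner_comm]
  have hrot : ∀ (e : Eu d ≃ₗᵢ[ℝ] Eu d) (u : Eu d), ⟪Q (e u), e u⟫ = ⟪Q u, u⟫ := by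
    intro e u
    rw [hQi, hQi, ← e.measurePreserving.setIntegral_preimage_emb e.toMeasurableEquiv.measurableEmbedding]
    have : (e : Eu d → Eu d) ⁻¹' ball 0 δ = ball 0 δ := by
      ext z; simp
    rw [this]
    congr 1; ext z
    have hR : RR r (e z) = RR r z := by simp [RR]
    rw [Hop_inner, Hop_inner, hR, e.inner_map_map, e.inner_map_map]
  set b := EuclideanSpace.basisFun (Fin d) ℝ
  have hu1 : ∀ u : Eu d, ‖u‖ = 1 → |⟪Q u, u⟫| ≤ Ce d 0 := by
    intro u hu
    have hi : ∀ i, ⟪Q (b i), b i⟫ = ⟪Q u, u⟫ := by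
      intro i
      have := Submodule.reflection_sub (v := u) (w := b i) (by rw [hu]; simp [b])
      have h2 := hrot ((Submodule.span ℝ {u - b i})ᗮ.reflection) u
      rw [this] at h2; exact h2
    have hs : ∑ i, ⟪Q (b i), b i⟫ = ∫ z in ball (0 : Eu d) δ, eta r z := by
      simp only [hQi]
      rw [← integral_finsetSum]
      · congr 1; ext z; exact Hop_trace hr z
      · intro i _
        exact ((hHc.clm_apply continuous_const).inner continuous_const).continuousOn.integrableOn_compact (isCompact_closedBall (0 : Eu d) δ) |>.mono_set ball_subset_closedBall
    simp only [hi, Finset.sum_const, Finset.card_univ, Fintype.card_fin, nsmul_eq_mul] at hs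
    have hb : ‖∫ z in ball (0 : Eu d) δ, eta r z‖ ≤ Ce d 0 := by
      rw [← integral_indicator measurableSet_ball]
      have := eta_bound hd hr (b := 0) (M := 1) le_rfl (by norm_num) (0 : Eu d)
        (F := indicator (ball (0 : Eu d) δ) (fun z => eta r z)) zero_le_one ?_
      · simpa using this
      intro z
      have en : eta r (0 - z) = eta r z := by simp [eta, RR]
      rw [en]
      have h1 := eta_nonneg r z
      by_cases hz : z ∈ ball (0 : Eu d) δ
      · rw [indicator_of_mem hz, Real.norm_of_nonneg h1]; simp
      · rw [indicator_of_notMem hz]; simp [h1]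
    rw [← hs, Real.norm_eq_abs, abs_mul, Nat.abs_cast] at hb
    have : (1 : ℝ) ≤ d := by exact_mod_cast (by omega : 1 ≤ d)
    nlinarith [abs_nonneg ⟪Q u, u⟫]
  refine polar_bound Q hQs (Ce_nonneg d le_rfl (by norm_num)) fun u => ?_
  rcases eq_or_ne u 0 with rfl | hu
  · simp
  have ha : 0 < ‖u‖ := norm_pos_iff.2 hu
  have h1 := hu1 (‖u‖⁻¹ • u) (by rw [norm_smul, norm_inv, norm_norm]; field_simp)
  rw [map_smul, real_inner_smul_left, real_inner_smul_right, abs_mul, abs_mul, abs_inv, abs_norm] at h1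
  have : ‖u‖⁻¹ * (‖u‖⁻¹ * |⟪Q u, u⟫|) = |⟪Q u, u⟫| / ‖u‖ ^ 2 := by field_simp
  rw [this, div_le_iff₀ (by positivity)] at h1
  exact h1

lemma ind_int {E : Type*} [NormedAddCommGroup E] {G : Eu d → E} {s : Set (Eu d)} (h : IntegrableOn G s)
    (hs : MeasurableSet s) : Integrable (indicator s G) := h.integrable_indicator hs

set_option maxHeartbeats 1000000 in
lemma Dat.case2 (hd : 2 ≤ d) (h : Dat γ y R ρ f g) {r δ : ℝ} (hr : 0 < r) (hrδ : r ≤ δ)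
    (x : Eu d) (hx : ∀ x' ∈ ball x δ, ρ x' = ρ x) :
    ‖SS r ρ x - SS δ ρ x‖ ≤ (d * (d + 3)) * (cd d * (1 / d + 1 / 2)) + 2 * Ce d 0 := by
  have hδ := hr.trans_le hrδ
  have hd' : (0 : ℝ) < d := by positivity
  have h1c := Hop_continuous (d := d) hr
  have h2c := Hop_continuous (d := d) hδ
  set G : Eu d → (Eu d →L[ℝ] Eu d) := fun z => Hop r z - Hop δ z with hG
  have hGc : Continuous G := h1c.sub h2c
  have hGi : IntegrableOn G (ball (0 : Eu d) δ) :=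
    (hGc.continuousOn.integrableOn_compact (isCompact_closedBall (0 : Eu d) δ)).mono_set ball_subset_closedBall
  have i1 : IntegrableOn (fun z => Hop r z) (ball (0 : Eu d) δ) :=
    (h1c.continuousOn.integrableOn_compact (isCompact_closedBall (0 : Eu d) δ)).mono_set ball_subset_closedBall
  have i2 : IntegrableOn (fun z => Hop δ z) (ball (0 : Eu d) δ) :=
    (h2c.continuousOn.integrableOn_compact (isCompact_closedBall (0 : Eu d) δ)).mono_set ball_subset_closedBall
  have hQ : ‖∫ z in ball (0 : Eu d) δ, G z‖ ≤ 2 * Ce d 0 := by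
    rw [hG, integral_sub i1 i2]
    have t1 := iso_bound hd hr hδ
    have t2 := iso_bound hd hδ hδ
    exact (norm_sub_le _ _).trans (by linarith)
  have hind : Integrable (indicator (ball (0 : Eu d) δ) G) := ind_int hGi measurableSet_ball
  have hind' : Integrable (fun z => indicator (ball (0 : Eu d) δ) G (x - z)) := hind.comp_sub_left x
  have e0 : SS r ρ x - SS δ ρ x = ∫ z, ρ z • G (x - z) := by
    unfold SS
    rw [← integral_sub (h.intH hr x) (h.intH hδ x)]
    congr 1; ext1 z; rw [hG]; simp only [smul_sub]
  have e1 : ∫ z, ρ z • G (x - z) = (∫ z, (ρ z • G (x - z) - ρ x • indicator (ball (0 : Eu d) δ) G (x - z))) +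
      ρ x • ∫ z in ball (0 : Eu d) δ, G z := by
    rw [integral_sub, integral_smul, integral_sub_left_eq_self (fun z => indicator (ball (0 : Eu d) δ) G z) volume x,
      integral_indicator measurableSet_ball]
    · abel
    · have := (h.intH hr x).sub (h.intH hδ x)
      refine this.congr (Filter.Eventually.of_forall fun z => ?_)
      simp only [hG, smul_sub, Pi.sub_apply]
    · exact hind'.smul (ρ x)
  rw [e0, e1]
  refine (norm_add_le _ _).trans (add_le_add ?_ ?_)
  · refine wt_bound hd hd' two_pos hδ x ?_
    intro z hz
    have hz' : x - z ≠ 0 := sub_ne_zero.2 hz.symm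
    have h0 : 0 < ‖x - z‖ := norm_pos_iff.2 hz'
    have hw := wt_nonneg (p := d) (q := 2) hδ (x - z)
    by_cases hb : x - z ∈ ball (0 : Eu d) δ
    · rw [indicator_of_mem hb]
      have : z ∈ ball x δ := by
        rw [mem_ball, dist_eq_norm, norm_sub_rev]; simpa using hb
      rw [hx z this]
      simp only [sub_self, norm_zero]
      positivity
    · rw [indicator_of_notMem hb]
      have hbz : δ ≤ ‖x - z‖ := by simpa using hb
      have hz0 : ρ x • (0 : Eu d →L[ℝ] Eu d) = 0 := by ext; simp
      have hz1 : ρ z • G (x - z) - ρ x • (0 : Eu d →L[ℝ] Eu d) = ρ z • G (x - z) := by rw [hz0, sub_zero]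
      refine (congrArg norm hz1).le.trans ?_
      rw [norm_smul, Real.norm_of_nonneg (h.nn z)]
      have t1 := Hop_diff_le hr hrδ (x - z) hz'
      have t2 : δ ^ 2 * (‖x - z‖ ^ (d + 2))⁻¹ ≤ wt d 2 δ (x - z) := by
        simp only [wt, wtf]
        split_ifs with hh
        · have : ‖x - z‖ = δ := le_antisymm hh hbz
          rw [this, sub_self, Real.rpow_zero, one_mul, Real.rpow_neg hδ.le, Real.rpow_natCast]
          apply le_of_eq; field_simp; ring
        · rw [mul_comm, ← Real.rpow_natCast, ← Real.rpow_natCast, ← Real.rpow_neg h0.le]; push_cast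
          apply le_of_eq; ring_nf
      have t3 : 0 ≤ ‖G (x - z)‖ := norm_nonneg _
      have t4 := h.le1 z
      have t5 : ‖G (x - z)‖ ≤ (d * (d + 3)) * wt d 2 δ (x - z) := t1.trans (by gcongr)
      nlinarith [h.nn z]
  · rw [norm_smul, Real.norm_of_nonneg (h.nn x)]
    have := h.le1 x
    have t3 := norm_nonneg (∫ z in ball (0 : Eu d) δ, G z)
    nlinarith [h.nn x]

/-- W6 -/
lemma Dat.S_far (hd : 2 ≤ d) (h : Dat γ y R ρ f g) {r δ : ℝ} (hδ : 0 < δ) (hδ1 : δ ≤ 1) (hr : δ ≤ r) (x : Eu d) :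
    ‖SS r ρ x‖ ≤ (1 + d) * Real.exp 1 * (cd d * 2 + volume.real (closedBall (0 : Eu d) R)) * (1 + Real.log (1 / δ)) := by
  have hd' : (2 : ℝ) ≤ d := by exact_mod_cast hd
  have hr0 := hδ.trans_le hr
  have hlog : 0 ≤ Real.log (1 / δ) := Real.log_nonneg (by rw [le_div_iff₀ hδ]; linarith)
  set L := 1 + Real.log (1 / δ) with hL
  have hL1 : 1 ≤ L := by linarith
  set κ := 1 / L with hκ
  have hκ0 : 0 < κ := by positivity
  have hκ1 : κ ≤ 1 := by rw [hκ, div_le_one (by linarith)]; exact hL1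
  have hexp : δ ^ (-κ) ≤ Real.exp 1 := by
    rw [Real.rpow_def_of_pos hδ]
    apply Real.exp_le_exp.2
    have : Real.log δ = - (L - 1) := by rw [hL, one_div, Real.log_inv]; ring
    rw [this, hκ]
    have : -(L - 1) * -(1 / L) = 1 - 1 / L := by field_simp
    rw [this]; linarith
  have := loc_bound (C := (1 + d) * Real.exp 1) (R := R) (l := 1) hd hκ0 (by linarith) one_pos (by positivity) x
    (F := fun z => ρ z • Hop r (x - z)) ?_ (fun z hz => by rw [h.supp z hz]; exact zero_smul ℝ (Hop r (x - z)))
  · refine this.trans ?_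
    simp only [Real.one_rpow, one_mul]
    have hcd := cd_nonneg d
    have hk : 1 / κ = L := by rw [hκ]; simp
    rw [hk, mul_assoc ((1 + (d : ℝ)) * Real.exp 1)]
    refine mul_le_mul_of_nonneg_left ?_ (by positivity)
    have hv : 0 ≤ volume.real (closedBall (0 : Eu d) R) := by positivity
    nlinarith
  · intro z hz
    have hz' : x - z ≠ 0 := sub_ne_zero.2 hz.symm
    have h0 : 0 < ‖x - z‖ := norm_pos_iff.2 hz'
    have hR0 := RR_pos hr0 (x - z)
    rw [norm_smul, Real.norm_of_nonneg (h.nn z)]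
    have h1 := Hop_norm_le r (x - z) hR0
    have h2 : ((RR r (x - z)) ^ d)⁻¹ ≤ Real.exp 1 * ‖x - z‖ ^ (κ - d) := by
      have : ((RR r (x - z)) ^ d)⁻¹ = RR r (x - z) ^ (-κ) * RR r (x - z) ^ (κ - d) := by
        rw [← Real.rpow_add hR0, ← Real.rpow_natCast, ← Real.rpow_neg hR0.le]; ring_nf
      rw [this]
      have a1 : RR r (x - z) ^ (-κ) ≤ Real.exp 1 :=
        (Real.rpow_le_rpow_of_nonpos hδ (hr.trans (le_RR r _)) (by linarith)).trans hexp
      have a2 : RR r (x - z) ^ (κ - d) ≤ ‖x - z‖ ^ (κ - d) :=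
        Real.rpow_le_rpow_of_nonpos h0 (norm_le_RR r _) (by linarith)
      gcongr
    calc ρ z * ‖Hop r (x - z)‖ ≤ 1 * ((1 + d) * (Real.exp 1 * ‖x - z‖ ^ (κ - d))) := by
          gcongr
          · exact h.le1 z
          · exact h1.trans (by gcongr)
      _ = _ := by ring

/-- L4 -/
lemma S_bound (hd : 2 ≤ d) (hγ0 : 0 < γ) (hγ1 : γ < 1) (R : ℝ) :
    ∃ C, 0 ≤ C ∧ ∀ (y : ℝ) (ρ f : Eu d → ℝ) (g : Eu d → Eu d), Dat γ y R ρ f g → ∀ δ, 0 < δ → δ ≤ 1 →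
      (∀ x, (0 < ‖g x‖ ∧ y * δ ^ γ ≤ ‖g x‖) ∨ ∀ x' ∈ ball x δ, ρ x' = ρ x) →
      ∀ r, 0 < r → ∀ x, ‖SS r ρ x‖ ≤ C * (1 + Real.log (1 / δ)) := by
  have hcd := cd_nonneg d
  have hCe := Ce_nonneg d (b := 0) le_rfl (by norm_num)
  have hCd := Cd_nonneg d hγ0 hγ1
  set A1 := (1 + d) * Real.exp 1 * (cd d * 2 + volume.real (closedBall (0 : Eu d) R)) with hA1
  set A2 := 2 * Ce d 0 + (d + 2) * (2 * Cd d γ) with hA2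
  set A3 := (d * (d + 3)) * (cd d * (1 / d + 1 / 2)) + 2 * Ce d 0 with hA3
  have p1 : 0 ≤ A1 := by positivity
  have p2 : 0 ≤ A2 := by positivity
  have p3 : 0 ≤ A3 := by positivity
  refine ⟨A1 + A2 + A3, by positivity, ?_⟩
  intro y ρ f g h δ hδ hδ1 hcase r hr x
  have hlog : 0 ≤ Real.log (1 / δ) := Real.log_nonneg (by rw [le_div_iff₀ hδ]; linarith)
  rcases le_total δ r with hrd | hrd
  · refine (h.S_far hd hδ hδ1 hrd x).trans ?_
    gcongr
    linarith
  · have f1 := h.S_far hd hδ hδ1 le_rfl x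
    have f2 : ‖SS r ρ x - SS δ ρ x‖ ≤ A2 + A3 := by
      rcases hcase x with ⟨a, b⟩ | a
      · exact (h.case1 hd hγ0 hγ1 hr hrd x a b).trans (by linarith)
      · exact (h.case2 hd hr hrd x a).trans (by linarith)
    have f3 := norm_add_le (SS r ρ x - SS δ ρ x) (SS δ ρ x)
    rw [sub_add_cancel] at f3
    have : 0 ≤ (A2 + A3) * Real.log (1 / δ) := by positivity
    nlinarith

end AggPatch

namespace AggPatch
variable {d : ℕ} {γ y R : ℝ} {ρ f : Eu d → ℝ} {g : Eu d → Eu d}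

/-! ### Further estimates -/

lemma Hop_holder (hγ0 : 0 < γ) (hγ1 : γ < 1) {r : ℝ} (hr : 0 < r) (z z' : Eu d) :
    ‖Hop r z - Hop r z'‖ ≤ ((d * (d + 5) * 2 ^ (d + 1)) * (r ^ (d + 1))⁻¹ * r ^ (1 - γ) +
      2 * ((1 + d) * (r ^ d)⁻¹) * r ^ (-γ)) * ‖z - z'‖ ^ γ := by
  have hn := norm_nonneg (z - z')
  rcases le_total ‖z - z'‖ r with h | h
  · have h1 := Hop_sub_le hr z z' h
    have h2 : ‖z - z'‖ ≤ r ^ (1 - γ) * ‖z - z'‖ ^ γ := by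
      rcases hn.eq_or_lt with h0 | h0
      · rw [← h0, Real.zero_rpow hγ0.ne', mul_zero]
      calc ‖z - z'‖ = ‖z - z'‖ ^ (1 - γ) * ‖z - z'‖ ^ γ := by
            rw [← Real.rpow_add h0]; simp
        _ ≤ _ := by gcongr
    have h3 : ((RR r z') ^ (d + 1))⁻¹ ≤ (r ^ (d + 1))⁻¹ := by gcongr; exact le_RR r z'
    calc _ ≤ _ := h1
      _ ≤ (d * (d + 5) * 2 ^ (d + 1)) * (r ^ (d + 1))⁻¹ * (r ^ (1 - γ) * ‖z - z'‖ ^ γ) := by gcongr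
      _ ≤ _ := by
        have : 0 ≤ 2 * ((1 + (d : ℝ)) * (r ^ d)⁻¹) * r ^ (-γ) * ‖z - z'‖ ^ γ := by positivity
        linarith
  · have b : ∀ w : Eu d, ‖Hop r w‖ ≤ (1 + d) * (r ^ d)⁻¹ := fun w => by
      refine (Hop_norm_le r w (RR_pos hr w)).trans ?_
      gcongr; exact le_RR r w
    have h2 : 1 ≤ r ^ (-γ) * ‖z - z'‖ ^ γ := by
      calc 1 = r ^ (-γ) * r ^ γ := by rw [← Real.rpow_add hr]; simp
        _ ≤ _ := by gcongr
    have h3 : 2 * ((1 + (d : ℝ)) * (r ^ d)⁻¹) * 1 ≤ 2 * ((1 + (d : ℝ)) * (r ^ d)⁻¹) * (r ^ (-γ) * ‖z - z'‖ ^ γ) := by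
      gcongr
    have h4 := norm_sub_le (Hop r z) (Hop r z')
    have h5 := b z
    have h6 := b z'
    have : 0 ≤ (d * (d + 5) * 2 ^ (d + 1)) * (r ^ (d + 1))⁻¹ * r ^ (1 - γ) * ‖z - z'‖ ^ γ := by positivity
    linarith

/-- L5 -/
lemma SS_holder (hγ0 : 0 < γ) (hγ1 : γ < 1) (R : ℝ) {r : ℝ} (hr : 0 < r) :
    ∃ C, 0 ≤ C ∧ ∀ (y : ℝ) (ρ f : Eu d → ℝ) (g : Eu d → Eu d), Dat γ y R ρ f g → ∀ x x',
      ‖SS r ρ x - SS r ρ x'‖ ≤ C * ‖x - x'‖ ^ γ := by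
  set K := ((d * (d + 5) * 2 ^ (d + 1)) * (r ^ (d + 1))⁻¹ * r ^ (1 - γ) +
      2 * ((1 + (d:ℝ)) * (r ^ d)⁻¹) * r ^ (-γ)) with hK
  have hK0 : 0 ≤ K := by positivity
  refine ⟨K * volume.real (closedBall (0 : Eu d) R), by positivity, ?_⟩
  intro y ρ f g h x x'
  have e : SS r ρ x - SS r ρ x' = ∫ z, ρ z • (Hop r (x - z) - Hop r (x' - z)) := by
    unfold SS
    rw [← integral_sub (h.intH hr x) (h.intH hr x')]
    congr 1; ext1 z; rw [smul_sub]
  rw [e, ← setIntegral_eq_integral_of_forall_compl_eq_zero (s := closedBall (0 : Eu d) R)]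
  · have := norm_setIntegral_le_of_norm_le_const (μ := volume) (s := closedBall (0 : Eu d) R) (C := K * ‖x - x'‖ ^ γ)
      (f := fun z => ρ z • (Hop r (x - z) - Hop r (x' - z))) measure_closedBall_lt_top ?_
    · linarith
    intro z hz
    rw [norm_smul, Real.norm_of_nonneg (h.nn z)]
    have h1 := Hop_holder hγ0 hγ1 hr (x - z) (x' - z)
    rw [sub_sub_sub_cancel_right] at h1
    calc ρ z * _ ≤ 1 * (K * ‖x - x'‖ ^ γ) := by gcongr; exact h.le1 z
      _ = _ := one_mul _
  · intro z hz
    rw [h.supp z hz]; exact zero_smul ℝ (Hop r (x - z) - Hop r (x' - z))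

lemma Kr_norm_le' {r : ℝ} {z : Eu d} (hz : z ≠ 0) : ‖Kr r z‖ ≤ ‖z‖ ^ ((1:ℝ) - d) := by
  have h0 : 0 < ‖z‖ := norm_pos_iff.2 hz
  refine (Kr_norm_le r z).trans ?_
  rw [Real.rpow_sub h0, Real.rpow_one, Real.rpow_natCast, div_eq_mul_inv, mul_comm]
  gcongr
  exact norm_le_RR r z

/-- L6 -/
lemma vel_le (hd : 2 ≤ d) : ∃ C, 0 ≤ C ∧ ∀ (R r : ℝ) (ρ : Eu d → ℝ), 0 < R → (∀ x, 0 ≤ ρ x) → (∀ x, ρ x ≤ 1) →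
    (∀ x, x ∉ closedBall (0 : Eu d) R → ρ x = 0) → ∀ x, ‖vel r ρ x‖ ≤ C * R := by
  have hcd := cd_nonneg d
  refine ⟨cd d * 2 + volume.real (ball (0 : Eu d) 1), by positivity, ?_⟩
  intro R r ρ hR hn h1 hs x
  have hd1 : (1 : ℝ) ≤ d := by exact_mod_cast (by omega : 1 ≤ d)
  have := loc_bound hd (b := 1) (l := R) (C := 1) (R := R) one_pos hd1 hR zero_le_one x
    (F := fun z => ρ z • Kr r (x - z)) ?_ ?_
  · refine this.trans (le_of_eq ?_)
    rw [Measure.addHaar_real_closedBall _ _ hR.le, finrank_euclideanSpace_fin, Real.rpow_sub hR, Real.rpow_one,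
      Real.rpow_natCast]
    field_simp
    ring
  · intro z hz
    rw [norm_smul, Real.norm_of_nonneg (hn z)]
    have := Kr_norm_le' (r := r) (sub_ne_zero.2 hz.symm : x - z ≠ 0)
    gcongr; exact h1 z
  · intro z hz; simp [hs z hz]

lemma Dat.cc_nonpos (h : Dat γ y R ρ f g) (r : ℝ) (x : Eu d) : cc r f x ≤ 0 := by
  refine integral_nonpos fun z => ?_
  exact mul_nonpos_of_nonpos_of_nonneg (h.fneg z) (eta_nonneg r _)

/-- L7 -/
lemma Dat.cc_le (hd : 2 ≤ d) (h : Dat γ y R ρ f g) {r M : ℝ} (hr : 0 < r) (hM0 : 0 ≤ M)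
    (hM : ∀ x ∈ closedBall (0 : Eu d) R, ‖g x‖ ≤ M) (x : Eu d) (hx : x ∈ closedBall (0 : Eu d) R) :
    -cc r f x ≤ (Ce d 0 + Ce d 1) * (-f x + r * M) := by
  have hlip : ∀ z, f x - f z ≤ M * ‖x - z‖ := by
    intro z
    by_cases hz : z ∈ closedBall (0 : Eu d) R
    · have := (convex_closedBall (0 : Eu d) R).norm_image_sub_le_of_norm_hasFDerivWithin_le (f := f) (C := M)
        (fun w hw => (h.fder w).hasFDerivWithinAt) ?_ hz hx
      · exact (le_abs_self _).trans this
      intro w hw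
      rw [norm_smul, innerSL_apply_norm, Real.norm_of_nonneg (h.nn w)]
      calc ρ w * ‖g w‖ ≤ 1 * M := by gcongr; exacts [h.le1 w, hM w hw]
        _ = M := one_mul _
    · rw [h.fsupp z hz]
      have := h.fneg x
      have : 0 ≤ M * ‖x - z‖ := by positivity
      linarith
  have hfc := h.fcont
  have hec := eta_continuous (d := d) hr
  set F1 : Eu d → ℝ := fun z => max (f z) (f x) * eta r (x - z) with hF1
  set F2 : Eu d → ℝ := fun z => (f z - max (f z) (f x)) * eta r (x - z) with hF2
  have i1 : Integrable F1 := cpt_integrable (R := R) (by fun_prop) (fun z hz => by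
    simp [hF1, h.fsupp z hz, h.fneg x])
  have i2 : Integrable F2 := cpt_integrable (R := R) (by fun_prop) (fun z hz => by
    simp [hF2, h.fsupp z hz, h.fneg x])
  have e : cc r f x = (∫ z, F1 z) + ∫ z, F2 z := by
    rw [← integral_add i1 i2]; unfold cc
    congr 1; ext z; simp only [hF1, hF2]; ring
  have b1 := eta_bound hd hr (b := 0) (M := -f x) le_rfl (by norm_num) x (F := F1) (by linarith [h.fneg x]) (by
    intro z
    have := eta_nonneg r (x - z)
    rw [hF1, norm_mul, Real.norm_of_nonneg this, mul_comm, Real.rpow_zero, mul_one, Real.norm_eq_abs]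
    gcongr
    rw [abs_le]
    have h1 := le_max_right (f z) (f x)
    have h2 : max (f z) (f x) ≤ 0 := max_le (h.fneg z) (h.fneg x)
    constructor <;> linarith [h.fneg x])
  have b2 := eta_bound hd hr (b := 1) (M := M) zero_le_one (by norm_num) x (F := F2) hM0 (by
    intro z
    have := eta_nonneg r (x - z)
    rw [hF2, norm_mul, Real.norm_of_nonneg this, mul_comm, Real.rpow_one, Real.norm_eq_abs]
    gcongr
    have h1 := hlip z
    have h0 : 0 ≤ M * ‖x - z‖ := by positivity
    rw [abs_le]
    rcases le_total (f z) (f x) with h2 | h2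
    · rw [max_eq_right h2]; constructor <;> linarith
    · rw [max_eq_left h2]; constructor <;> linarith)
  rw [Real.rpow_zero, mul_one, Real.norm_eq_abs] at b1
  rw [Real.rpow_one, Real.norm_eq_abs] at b2
  have c1 := neg_abs_le (∫ z, F1 z)
  have c2 := neg_abs_le (∫ z, F2 z)
  have p1 := Ce_nonneg d (b := 0) le_rfl (by norm_num)
  have p2 := Ce_nonneg d (b := 1) zero_le_one (by norm_num)
  have := h.fneg x
  have q1 : 0 ≤ Ce d 0 * (r * M) := by positivity
  have q2 : 0 ≤ Ce d 1 * (-f x) := mul_nonneg p2 (by linarith)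
  nlinarith

/-! ### Cut-off functions -/

noncomputable def th (ε z : ℝ) : ℝ := max 0 (min 1 (-z / ε))
noncomputable def Th (ε z : ℝ) : ℝ := ∫ t in (0:ℝ)..z, th ε t

lemma th_cont (ε : ℝ) : Continuous (th ε) := by unfold th; fun_prop
lemma th_nn (ε z : ℝ) : 0 ≤ th ε z := le_max_left _ _
lemma th_le1 (ε z : ℝ) : th ε z ≤ 1 := max_le zero_le_one (min_le_left _ _)
lemma th_pos {ε : ℝ} (hε : 0 < ε) {z : ℝ} (hz : 0 ≤ z) : th ε z = 0 := by
  unfold th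
  refine max_eq_left ((min_le_right _ _).trans ?_)
  exact div_nonpos_of_nonpos_of_nonneg (by linarith) hε.le
lemma th_one {ε : ℝ} (hε : 0 < ε) {z : ℝ} (hz : z ≤ -ε) : th ε z = 1 := by
  unfold th
  have : 1 ≤ -z / ε := by rw [le_div_iff₀ hε]; linarith
  rw [min_eq_left this]; simp
lemma Th_der (ε z : ℝ) : HasDerivAt (Th ε) (th ε z) z :=
  intervalIntegral.integral_hasDerivAt_right ((th_cont ε).intervalIntegrable _ _)
    ((th_cont ε).stronglyMeasurableAtFilter _ _) (th_cont ε).continuousAt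
lemma Th_pos {ε : ℝ} (hε : 0 < ε) {z : ℝ} (hz : 0 ≤ z) : Th ε z = 0 := by
  unfold Th
  rw [intervalIntegral.integral_congr (g := fun _ => 0)]
  · simp
  intro t ht
  rw [uIcc_of_le hz] at ht
  exact th_pos hε ht.1
lemma Th_neg {ε : ℝ} (hε : 0 < ε) (z : ℝ) : Th ε z ≤ 0 := by
  rcases le_total 0 z with hz | hz
  · exact (Th_pos hε hz).le
  · unfold Th
    rw [intervalIntegral.integral_symm, neg_nonpos]
    exact intervalIntegral.integral_nonneg hz fun t _ => th_nn ε t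
lemma Th_ge {ε : ℝ} (hε : 0 < ε) (z : ℝ) : -Th ε z ≤ max 0 (-z) := by
  rcases le_total 0 z with hz | hz
  · rw [Th_pos hε hz]; simp
  · unfold Th
    rw [intervalIntegral.integral_symm, neg_neg]
    refine le_trans ?_ (le_max_right _ _)
    have := intervalIntegral.integral_mono_on (μ := volume) hz ((th_cont ε).intervalIntegrable _ _)
      ((continuous_const : Continuous fun _ : ℝ => (1:ℝ)).intervalIntegrable z 0) (fun t _ => th_le1 ε t)
    simpa using this

lemma Dat_mk {ε : ℝ} (hε : 0 < ε) {Φ : Eu d → ℝ} (hγ0 : 0 < γ) (hR : 0 ≤ R) (hy : 0 ≤ y)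
    (hΦ : ∀ x, HasFDerivAt Φ (innerSL ℝ (g x)) x) (hol : ∀ x x', ‖g x - g x'‖ ≤ y * ‖x - x'‖ ^ γ)
    (hs : ∀ x, Φ x < 0 → x ∈ closedBall (0 : Eu d) R) :
    Dat γ y R (fun x => th ε (Φ x)) (fun x => Th ε (Φ x)) g where
  cont := (th_cont ε).comp (continuous_iff_continuousAt.2 fun x => (hΦ x).continuousAt)
  nn x := th_nn _ _
  le1 x := th_le1 _ _
  supp x hx := th_pos hε (not_lt.1 fun h => hx (hs x h))
  fsupp x hx := Th_pos hε (not_lt.1 fun h => hx (hs x h))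
  fder x := (Th_der ε (Φ x)).comp_hasFDerivAt x (hΦ x)
  fneg x := Th_neg hε _
  gcont := by
    rw [continuous_iff_continuousAt]
    intro x
    refine tendsto_iff_norm_sub_tendsto_zero.2 ?_
    refine squeeze_zero (fun _ => norm_nonneg _) (fun x' => hol x' x) ?_
    have : ContinuousAt (fun x' : Eu d => y * ‖x' - x‖ ^ γ) x := by
      refine continuousAt_const.mul (ContinuousAt.rpow_const (by fun_prop) (Or.inr hγ0.le))
    simpa [ContinuousAt, Real.zero_rpow hγ0.ne'] using this
  y0 := hy
  hol := hol
  R0 := hR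

end AggPatch

namespace AggPatch
variable {d : ℕ} {γ y R : ℝ} {ρ f : Eu d → ℝ} {g : Eu d → Eu d}

/-! ### One step of the Euler scheme -/

noncomputable def Ymap (r τ : ℝ) (ρ : Eu d → ℝ) (x : Eu d) : Eu d := x - τ • vel r ρ x
noncomputable def Pmap (r τ : ℝ) (ρ f Φ : Eu d → ℝ) (u : Eu d) : ℝ :=
  Φ (Function.invFun (Ymap r τ ρ) u) - τ * cc r f (Function.invFun (Ymap r τ ρ) u)

lemma Dat.vel_lip (h : Dat γ y R ρ f g) {r A : ℝ} (hr : 0 < r) (hA : ∀ x, ‖SS r ρ x‖ ≤ A) (x x' : Eu d) :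
    ‖vel r ρ x - vel r ρ x'‖ ≤ A * ‖x - x'‖ :=
  convex_univ.norm_image_sub_le_of_norm_hasFDerivWithin_le (fun w _ => (h.hasFDerivAt_vel hr w).hasFDerivWithinAt)
    (fun w _ => hA w) (mem_univ _) (mem_univ _)

lemma Dat.Y_bi (h : Dat γ y R ρ f g) {r A τ : ℝ} (hr : 0 < r) (hA : ∀ x, ‖SS r ρ x‖ ≤ A) (hτ : 0 ≤ τ)
    (x x' : Eu d) : (1 - τ * A) * ‖x - x'‖ ≤ ‖Ymap r τ ρ x - Ymap r τ ρ x'‖ ∧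
      ‖Ymap r τ ρ x - Ymap r τ ρ x'‖ ≤ (1 + τ * A) * ‖x - x'‖ := by
  have h1 := h.vel_lip hr hA x x'
  have e : Ymap r τ ρ x - Ymap r τ ρ x' = (x - x') - τ • (vel r ρ x - vel r ρ x') := by
    unfold Ymap; rw [smul_sub]; abel
  have h2 : ‖τ • (vel r ρ x - vel r ρ x')‖ ≤ τ * A * ‖x - x'‖ := by
    rw [norm_smul, Real.norm_of_nonneg hτ, mul_assoc]; gcongr
  rw [e]
  constructor
  · have := norm_sub_norm_le (x - x') (τ • (vel r ρ x - vel r ρ x'))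
    linarith
  · have := norm_sub_le (x - x') (τ • (vel r ρ x - vel r ρ x'))
    linarith

lemma Dat.Y_bij (h : Dat γ y R ρ f g) {r A τ : ℝ} (hr : 0 < r) (hA : ∀ x, ‖SS r ρ x‖ ≤ A) (hτ : 0 ≤ τ)
    (hτA : τ * A ≤ 1 / 2) : Function.Bijective (Ymap r τ ρ) := by
  constructor
  · intro x x' hx
    have := (h.Y_bi hr hA hτ x x').1
    rw [hx, sub_self, norm_zero] at this
    have hn := norm_nonneg (x - x')
    have : ‖x - x'‖ ≤ 0 := by nlinarith
    exact sub_eq_zero.1 (norm_le_zero_iff.1 this)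
  · intro u
    have hc : ContractingWith (1 / 2) (fun x : Eu d => u + τ • vel r ρ x) := by
      refine ⟨by norm_num, LipschitzWith.of_dist_le_mul fun x x' => ?_⟩
      rw [dist_eq_norm, dist_eq_norm, add_sub_add_left_eq_sub, ← smul_sub, norm_smul, Real.norm_of_nonneg hτ]
      have h1 := h.vel_lip hr hA x x'
      calc τ * ‖vel r ρ x - vel r ρ x'‖ ≤ τ * (A * ‖x - x'‖) := by gcongr
        _ = τ * A * ‖x - x'‖ := by ring
        _ ≤ 1 / 2 * ‖x - x'‖ := by gcongr
        _ = _ := by simp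
    refine ⟨hc.fixedPoint, ?_⟩
    have := hc.fixedPoint_isFixedPt
    unfold Ymap
    have e : u + τ • vel r ρ (hc.fixedPoint) = hc.fixedPoint := this
    rw [sub_eq_iff_eq_add]; exact e.symm

lemma Dat.step (h : Dat γ y R ρ f g) {r A τ : ℝ} (hr : 0 < r) (hA : ∀ x, ‖SS r ρ x‖ ≤ A) (hτ : 0 ≤ τ)
    (hτA : τ * A ≤ 1 / 2) {Φ : Eu d → ℝ} (hΦ : ∀ x, HasFDerivAt Φ (innerSL ℝ (g x)) x) :
    ∃ g' : Eu d → Eu d, (∀ u, HasFDerivAt (Pmap r τ ρ f Φ) (innerSL ℝ (g' u)) u) ∧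
      ∀ x, g' (Ymap r τ ρ x) - g x = τ • comm r ρ g x + τ • SS r ρ x (g' (Ymap r τ ρ x) - g x) := by
  have hbij := h.Y_bij hr hA hτ hτA
  have hnorm : ∀ x, ‖τ • SS r ρ x‖ < 1 := fun x => by
    rw [norm_smul, Real.norm_of_nonneg hτ]
    have := hA x
    calc τ * ‖SS r ρ x‖ ≤ τ * A := by gcongr
      _ < 1 := by linarith
  set Z := Function.invFun (Ymap r τ ρ) with hZ
  have hZ1 : ∀ u, Ymap r τ ρ (Z u) = u := Function.rightInverse_invFun hbij.2
  have hZ2 : ∀ x, Z (Ymap r τ ρ x) = x := Function.leftInverse_invFun hbij.1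
  set E : Eu d → (Eu d ≃L[ℝ] Eu d) := fun x => ContinuousLinearEquiv.ofUnit (Units.oneSub _ (hnorm x)) with hE
  have hEa : ∀ x p, E x p = p - τ • SS r ρ x p := fun x p => rfl
  have hEc : ∀ x, (E x : Eu d →L[ℝ] Eu d) = ContinuousLinearMap.id ℝ (Eu d) - τ • SS r ρ x := fun x => rfl
  have hZc : Continuous Z := by
    refine LipschitzWith.continuous (K := 2) (LipschitzWith.of_dist_le_mul fun u u' => ?_)
    have := (h.Y_bi hr hA hτ (Z u) (Z u')).1
    rw [hZ1, hZ1] at this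
    rw [dist_eq_norm, dist_eq_norm]
    have hn := norm_nonneg (Z u - Z u')
    push_cast
    nlinarith
  have hYd : ∀ x, HasFDerivAt (Ymap r τ ρ) (E x : Eu d →L[ℝ] Eu d) x := fun x => by
    rw [hEc]
    exact (hasFDerivAt_id x).sub ((h.hasFDerivAt_vel hr x).const_smul τ)
  have hZd : ∀ u, HasFDerivAt Z ((E (Z u)).symm : Eu d →L[ℝ] Eu d) u := fun u =>
    HasFDerivAt.of_local_left_inverse hZc.continuousAt (hYd (Z u)) (Filter.Eventually.of_forall hZ1)
  have hsym : ∀ x p q, ⟪E x p, q⟫ = ⟪p, E x q⟫ := fun x p q => by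
    rw [hEa, hEa, inner_sub_left, inner_sub_right, real_inner_smul_left, real_inner_smul_right, h.SS_symm hr]
  refine ⟨fun u => (E (Z u)).symm (g (Z u) - τ • gc r ρ g (Z u)), ?_, ?_⟩
  · intro u
    have h1 : HasFDerivAt (fun x => Φ x - τ * cc r f x) (innerSL ℝ (g (Z u)) - τ • innerSL ℝ (gc r ρ g (Z u))) (Z u) :=
      (hΦ (Z u)).sub ((h.hasFDerivAt_cc hr (Z u)).const_mul τ)
    refine HasFDerivAt.congr_fderiv (h1.comp u (hZd u)) ?_
    ext p
    have h2 := hsym (Z u) ((E (Z u)).symm (g (Z u) - τ • gc r ρ g (Z u))) ((E (Z u)).symm p)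
    rw [ContinuousLinearEquiv.apply_symm_apply, ContinuousLinearEquiv.apply_symm_apply] at h2
    rw [innerSL_apply_apply, ← h2]
    simp only [ContinuousLinearMap.comp_apply, sub_apply, smul_apply, innerSL_apply_apply, inner_sub_left,
      real_inner_smul_left, smul_eq_mul]
    rfl
  · intro x
    simp only [hZ2]
    have h3 := hEa x ((E x).symm (g x - τ • gc r ρ g x))
    rw [ContinuousLinearEquiv.apply_symm_apply] at h3
    set q := (E x).symm (g x - τ • gc r ρ g x)
    have h4 : q = g x - τ • gc r ρ g x + τ • SS r ρ x q := by rw [h3]; abel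
    unfold comm
    rw [map_sub, smul_sub, smul_sub]
    nth_rewrite 1 [h4]
    abel

/-- The bounds for one step. -/
lemma step_bounds (hd : 2 ≤ d) (hγ0 : 0 < γ) (hγ1 : γ < 1) (R : ℝ) : ∃ C, 1 ≤ C ∧
    ∀ r, 0 < r → ∃ C5, 0 ≤ C5 ∧ ∀ (y A τ : ℝ) (ρ f Φ : Eu d → ℝ) (g : Eu d → Eu d), Dat γ y R ρ f g →
    (∀ R', r ≤ R' → ∀ x, ‖SS R' ρ x‖ ≤ A) → 0 ≤ τ → τ * A ≤ 1 / 2 → τ * C5 ≤ 1 →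
    (∀ x, HasFDerivAt Φ (innerSL ℝ (g x)) x) →
    ∃ g' : Eu d → Eu d, (∀ u, HasFDerivAt (Pmap r τ ρ f Φ) (innerSL ℝ (g' u)) u) ∧
      (∀ x, ‖g' (Ymap r τ ρ x) - g x‖ ≤ τ * C * y) ∧
      (∀ x, y * r ^ γ ≤ ‖g x‖ → (1 - τ * (C * (1 + A))) * ‖g x‖ ≤ ‖g' (Ymap r τ ρ x)‖) ∧
      (∀ u u', ‖g' u - g' u'‖ ≤ y * (1 + τ * (C * (1 + A))) * ‖u - u'‖ ^ γ) := by
  obtain ⟨C1, hC1, H1⟩ := comm_le1 (d := d) hd hγ0 hγ1 R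
  obtain ⟨C3, hC3, H3⟩ := comm_le3 (d := d) hd hγ0 hγ1
  have hc0 := Ce_nonneg d (b := 0) le_rfl (by norm_num)
  have hcγ := Ce_nonneg d (b := γ) hγ0.le (by linarith)
  refine ⟨4 * C3 + 8 * C1 + 6 + 2 * Ce d 0 + 2 * Ce d γ, by linarith, ?_⟩
  intro r hr
  obtain ⟨C5, hC5, H5⟩ := SS_holder (d := d) hγ0 hγ1 R hr
  refine ⟨C5, hC5, ?_⟩
  intro y A τ ρ f Φ g h hA hτ hτA hτC hΦ
  have hAr := hA r le_rfl
  have hA0 : 0 ≤ A := (norm_nonneg _).trans (hAr 0)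
  obtain ⟨g', hg', hid⟩ := h.step hr hAr hτ hτA hΦ
  have hbij := h.Y_bij hr hAr hτ hτA
  have hy := h.y0
  set D : Eu d → Eu d := fun x => g' (Ymap r τ ρ x) - g x with hD
  have hid' : ∀ x, D x = τ • comm r ρ g x + τ • SS r ρ x (D x) := hid
  clear_value D
  have hS : ∀ x p, ‖τ • SS r ρ x p‖ ≤ 1 / 2 * ‖p‖ := fun x p => by
    rw [norm_smul, Real.norm_of_nonneg hτ]
    calc τ * ‖SS r ρ x p‖ ≤ τ * (‖SS r ρ x‖ * ‖p‖) := by gcongr; exact ContinuousLinearMap.le_opNorm _ _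
      _ ≤ τ * (A * ‖p‖) := by gcongr; exact hAr x
      _ = τ * A * ‖p‖ := by ring
      _ ≤ _ := by gcongr
  have hDc : ∀ x, ‖D x‖ ≤ 2 * (τ * ‖comm r ρ g x‖) := fun x => by
    have h1 := norm_add_le (τ • comm r ρ g x) (τ • SS r ρ x (D x))
    rw [← hid' x, norm_smul τ (comm r ρ g x), Real.norm_of_nonneg hτ] at h1
    have := hS x (D x)
    linarith
  have hD1 : ∀ x, ‖D x‖ ≤ 2 * τ * (C1 * y) := fun x => by
    have h1 := H1 y ρ f g h r hr x
    have h2 := hDc x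
    calc _ ≤ _ := h2
      _ ≤ 2 * (τ * (C1 * y)) := by gcongr
      _ = _ := by ring
  refine ⟨g', hg', ?_, ?_, ?_⟩
  · intro x
    refine (le_of_eq (by rw [hD])).trans ((hD1 x).trans ?_)
    calc 2 * τ * (C1 * y) = τ * (2 * C1) * y := by ring
      _ ≤ _ := by gcongr; linarith
  · intro x hx
    have h1 := h.comm_le2 hd hγ0 hγ1 hr x
    have hSx := hAr x
    have hn := norm_nonneg (g x)
    have h2 : ‖comm r ρ g x‖ ≤ (A + Ce d 0 + Ce d γ) * ‖g x‖ := by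
      calc _ ≤ _ := h1
        _ ≤ (A + Ce d 0) * ‖g x‖ + Ce d γ * ‖g x‖ := by gcongr
        _ = _ := by ring
    have h3 := hDc x
    have h4 := norm_sub_norm_le (g x) (g x - g' (Ymap r τ ρ x))
    rw [sub_sub_cancel, norm_sub_rev] at h4
    have h50 : 2 * (A + Ce d 0 + Ce d γ) ≤ (4 * C3 + 8 * C1 + 6 + 2 * Ce d 0 + 2 * Ce d γ) * (1 + A) := by
      have p1 : 0 ≤ C3 * A := by positivity
      have p2 : 0 ≤ C1 * A := by positivity
      have p3 : 0 ≤ Ce d 0 * A := by positivity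
      have p4 : 0 ≤ Ce d γ * A := by positivity
      linarith
    have h5 : ‖D x‖ ≤ τ * ((4 * C3 + 8 * C1 + 6 + 2 * Ce d 0 + 2 * Ce d γ) * (1 + A)) * ‖g x‖ := by
      calc ‖D x‖ ≤ 2 * (τ * ((A + Ce d 0 + Ce d γ) * ‖g x‖)) := h3.trans (by gcongr)
        _ = τ * (2 * (A + Ce d 0 + Ce d γ)) * ‖g x‖ := by ring
        _ ≤ _ := mul_le_mul_of_nonneg_right (mul_le_mul_of_nonneg_left h50 hτ) hn
    have h6 : ‖D x‖ = ‖g' (Ymap r τ ρ x) - g x‖ := by rw [hD]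
    linarith
  · intro u u'
    obtain ⟨x, rfl⟩ := hbij.2 u
    obtain ⟨x', rfl⟩ := hbij.2 u'
    have hYb := (h.Y_bi hr hAr hτ x x').1
    set N := ‖x - x'‖ with hN
    set N' := ‖Ymap r τ ρ x - Ymap r τ ρ x'‖ with hN'
    have hN0 : 0 ≤ N := norm_nonneg _
    have hN0' : 0 ≤ N' := norm_nonneg _
    have hDD : ‖D x - D x'‖ ≤ 2 * (τ * (C3 + A + 2 * C1) * (y * N ^ γ)) := by
      have e : D x - D x' = τ • (comm r ρ g x - comm r ρ g x') + τ • SS r ρ x (D x - D x') +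
          τ • (SS r ρ x - SS r ρ x') (D x') := by
        have a := hid' x
        have b := hid' x'
        have c : D x - D x' = (τ • comm r ρ g x + τ • SS r ρ x (D x)) - (τ • comm r ρ g x' + τ • SS r ρ x' (D x')) := by
          rw [← a, ← b]
        rw [smul_sub, map_sub, smul_sub, sub_apply, smul_sub, c]
        abel
      have n1 : ‖τ • (comm r ρ g x - comm r ρ g x')‖ ≤ τ * ((C3 + A) * (y * N ^ γ)) := by
        rw [norm_smul, Real.norm_of_nonneg hτ]
        gcongr
        exact H3 y R A ρ f g h r hr hA x x'
      have n2 := hS x (D x - D x')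
      have n3 : ‖τ • (SS r ρ x - SS r ρ x') (D x')‖ ≤ τ * (2 * C1 * (y * N ^ γ)) := by
        rw [norm_smul, Real.norm_of_nonneg hτ]
        have k1 := (SS r ρ x - SS r ρ x').le_opNorm (D x')
        have k2 := H5 y ρ f g h x x'
        have k3 := hD1 x'
        have k4 : ‖(SS r ρ x - SS r ρ x') (D x')‖ ≤ (C5 * N ^ γ) * (2 * τ * (C1 * y)) :=
          k1.trans (by gcongr)
        have k5 : (C5 * N ^ γ) * (2 * τ * (C1 * y)) = (τ * C5) * (2 * C1 * (y * N ^ γ)) := by ring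
        have k6 : (τ * C5) * (2 * C1 * (y * N ^ γ)) ≤ 1 * (2 * C1 * (y * N ^ γ)) := by gcongr
        gcongr
        linarith
      have n4 := norm_add₃_le (a := τ • (comm r ρ g x - comm r ρ g x')) (b := τ • SS r ρ x (D x - D x'))
        (c := τ • (SS r ρ x - SS r ρ x') (D x'))
      rw [← e] at n4
      linarith
    have hNN : N ^ γ ≤ (1 + 2 * (τ * A)) * N' ^ γ := by
      have t0 : 0 ≤ τ * A := by positivity
      have k1 : N ≤ (1 + 2 * (τ * A)) * N' := by
        calc N ≤ (1 + 2 * (τ * A)) * ((1 - τ * A) * N) := by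
              have : 0 ≤ (τ * A) * (1 - 2 * (τ * A)) * N := by
                have : 0 ≤ 1 - 2 * (τ * A) := by linarith
                positivity
              nlinarith
          _ ≤ _ := by gcongr
      calc N ^ γ ≤ ((1 + 2 * (τ * A)) * N') ^ γ := by gcongr
        _ = (1 + 2 * (τ * A)) ^ γ * N' ^ γ := Real.mul_rpow (by positivity) hN0'
        _ ≤ (1 + 2 * (τ * A)) ^ (1:ℝ) * N' ^ γ := by
          gcongr
          linarith
        _ = _ := by rw [Real.rpow_one]
    have e2 : g' (Ymap r τ ρ x) - g' (Ymap r τ ρ x') = (g x - g x') + (D x - D x') := by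
      simp only [hD]; abel
    rw [e2]
    have k1 := norm_add_le (g x - g x') (D x - D x')
    have k2 := h.hol x x'
    set Q := C3 + A + 2 * C1 with hQ
    have hQ0 : 0 ≤ Q := by positivity
    calc _ ≤ y * N ^ γ + 2 * (τ * Q * (y * N ^ γ)) := by linarith
      _ = y * (1 + 2 * τ * Q) * N ^ γ := by ring
      _ ≤ y * (1 + 2 * τ * Q) * ((1 + 2 * (τ * A)) * N' ^ γ) := by gcongr
      _ = y * ((1 + 2 * τ * Q) * (1 + 2 * (τ * A))) * N' ^ γ := by ring
      _ ≤ _ := by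
        gcongr
        have t1 : (1 + 2 * τ * Q) * (1 + 2 * (τ * A)) ≤ 1 + τ * (4 * Q + 2 * A) := by
          have : τ * Q * (τ * A) ≤ τ * Q * (1 / 2) := by gcongr
          nlinarith
        refine t1.trans ?_
        gcongr
        have p1 : 0 ≤ C3 * A := by positivity
        have p2 : 0 ≤ C1 * A := by positivity
        have p3 : 0 ≤ Ce d 0 * A := by positivity
        have p4 : 0 ≤ Ce d γ * A := by positivity
        rw [hQ]
        linarith

end AggPatch

namespace AggPatch
variable {d : ℕ} {γ : ℝ}

/-! ### The Euler scheme -/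

/-- The iterates `(Φ_k, X_k)`. -/
noncomputable def sq (ε τ : ℝ) (Φ0 : Eu d → ℝ) : ℕ → (Eu d → ℝ) × (Eu d → Eu d)
  | 0 => (Φ0, id)
  | k + 1 => (Pmap ε τ (fun x => th ε ((sq ε τ Φ0 k).1 x)) (fun x => Th ε ((sq ε τ Φ0 k).1 x)) (sq ε τ Φ0 k).1,
      fun α => Ymap ε τ (fun x => th ε ((sq ε τ Φ0 k).1 x)) ((sq ε τ Φ0 k).2 α))

/-- Quantitative assumptions on the initial defining function. -/
structure Init (γ y0 m0 ε0 R0 : ℝ) (Φ0 : Eu d → ℝ) (g0 : Eu d → Eu d) : Prop where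
  der : ∀ x, HasFDerivAt Φ0 (innerSL ℝ (g0 x)) x
  hol : ∀ x x', ‖g0 x - g0 x'‖ ≤ y0 * ‖x - x'‖ ^ γ
  hm0 : 0 < m0
  my : m0 ≤ y0
  he0 : 0 < ε0
  hR0 : 0 < R0
  bd : ∀ x, Φ0 x ≤ 0 → ‖x‖ ≤ R0
  low : ∀ x, -ε0 ≤ Φ0 x → Φ0 x ≤ 0 → m0 ≤ ‖g0 x‖

lemma layer_case {ε y m δ : ℝ} {Φ : Eu d → ℝ} {g : Eu d → Eu d} (hγ0 : 0 < γ) (hε : 0 < ε) (hy : 0 ≤ y) (hm : 0 < m)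
    (hδ : 0 < δ) (hol : ∀ x x', ‖g x - g x'‖ ≤ y * ‖x - x'‖ ^ γ) (hc : Continuous Φ)
    (hl : ∀ x, -ε ≤ Φ x → Φ x ≤ 0 → m ≤ ‖g x‖) (hyd : y * δ ^ γ ≤ m / 2) (x : Eu d) :
    (0 < ‖g x‖ ∧ y * δ ^ γ ≤ ‖g x‖) ∨ ∀ x' ∈ ball x δ, th ε (Φ x') = th ε (Φ x) := by
  by_cases hz : ∃ z ∈ ball x δ, -ε ≤ Φ z ∧ Φ z ≤ 0
  · left
    obtain ⟨z, hz, h1, h2⟩ := hz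
    have h3 := hl z h1 h2
    have h4 := hol z x
    have h5 : y * ‖z - x‖ ^ γ ≤ y * δ ^ γ := by
      have : ‖z - x‖ ≤ δ := by rw [← dist_eq_norm]; exact (mem_ball.1 hz).le
      gcongr
    have h6 := norm_sub_norm_le (g z) (g x)
    constructor <;> linarith
  · right
    push Not at hz
    intro x' hx'
    have hx : x ∈ ball x δ := mem_ball_self hδ
    have hpc : IsPreconnected (ball x δ) := (convex_ball x δ).isPreconnected
    have key : ∀ a ∈ ball x δ, ∀ b ∈ ball x δ, Φ a < -ε → 0 < Φ b → False := by
      intro a ha b hb h1 h2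
      obtain ⟨z, hz1, hz2⟩ := hpc.intermediate_value ha hb hc.continuousOn (⟨h1.le.trans (by linarith), h2.le⟩ : (0:ℝ) ∈ Icc (Φ a) (Φ b))
      have := hz z hz1 (by rw [hz2]; linarith)
      linarith
    rcases lt_or_ge (Φ x) (-ε) with h1 | h1 <;> rcases lt_or_ge (Φ x') (-ε) with h2 | h2
    · rw [th_one hε h1.le, th_one hε h2.le]
    · exact (key x hx x' hx' h1 (hz x' hx' h2)).elim
    · exact (key x' hx' x hx h2 (hz x hx h1)).elim
    · rw [th_pos hε (hz x hx h1).le, th_pos hε (hz x' hx' h2).le]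

lemma delta_ex (hγ0 : 0 < γ) {y0 m0 q : ℝ} (hm : 0 < m0) (hmy : m0 ≤ y0) (hq : 0 ≤ q) :
    ∃ δ, 0 < δ ∧ δ ≤ 1 ∧ y0 * Real.exp q * δ ^ γ ≤ m0 * Real.exp (-q) / 2 ∧
      Real.log (1 / δ) = (Real.log (2 * y0 / m0) + 2 * q) / γ := by
  have hy : 0 < y0 := hm.trans_le hmy
  have hl : 0 ≤ Real.log (2 * y0 / m0) := Real.log_nonneg (by rw [le_div_iff₀ hm]; linarith)
  refine ⟨Real.exp (-((Real.log (2 * y0 / m0) + 2 * q) / γ)), Real.exp_pos _, ?_, ?_, ?_⟩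
  · rw [Real.exp_le_one_iff]
    have : 0 ≤ (Real.log (2 * y0 / m0) + 2 * q) / γ := by positivity
    linarith
  · rw [← Real.exp_mul]
    have e : -((Real.log (2 * y0 / m0) + 2 * q) / γ) * γ = -Real.log (2 * y0 / m0) + (-q + -q) := by
      field_simp; ring
    rw [e, Real.exp_add, Real.exp_add, Real.exp_neg (Real.log _), Real.exp_log (by positivity), Real.exp_neg q]
    refine le_of_eq ?_
    have := Real.exp_pos q
    field_simp
  · rw [one_div, ← Real.exp_neg, Real.log_exp, neg_neg]

lemma pow_up {τ C S : ℝ} {k : ℕ} (hτ : 0 ≤ τ) (hC : 0 ≤ C) (hk : k * τ ≤ S) : (1 + τ * C) ^ k ≤ Real.exp (C * S) := by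
  have h1 : 1 + τ * C ≤ Real.exp (τ * C) := by linarith [Real.add_one_le_exp (τ * C)]
  calc (1 + τ * C) ^ k ≤ (Real.exp (τ * C)) ^ k := by gcongr
    _ = Real.exp (k * τ * C) := by rw [← Real.exp_nat_mul]; ring_nf
    _ ≤ _ := by rw [Real.exp_le_exp]; nlinarith

lemma one_sub_ge {t : ℝ} (h0 : 0 ≤ t) (h : t ≤ 1 / 2) : Real.exp (-(2 * t)) ≤ 1 - t := by
  have h1 : 1 + 2 * t ≤ Real.exp (2 * t) := by linarith [Real.add_one_le_exp (2 * t)]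
  rw [Real.exp_neg, inv_le_comm₀ (Real.exp_pos _) (by linarith)]
  refine le_trans ?_ h1
  rw [inv_le_iff_one_le_mul₀ (by linarith)]
  nlinarith

lemma pow_dn {τ C S : ℝ} {k : ℕ} (hτ : 0 ≤ τ) (hC : 0 ≤ C) (hτC : τ * C ≤ 1 / 2) (hk : k * τ ≤ S) :
    Real.exp (-(2 * C * S)) ≤ (1 - τ * C) ^ k := by
  have h1 := one_sub_ge (t := τ * C) (by positivity) hτC
  calc Real.exp (-(2 * C * S)) ≤ Real.exp (-(2 * (k * τ * C))) := by rw [Real.exp_le_exp]; nlinarith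
    _ = (Real.exp (-(2 * (τ * C)))) ^ k := by rw [← Real.exp_nat_mul]; ring_nf
    _ ≤ _ := by gcongr

end AggPatch

namespace AggPatch
variable {d : ℕ} {γ : ℝ}

noncomputable def Aq (γ y0 m0 C4 q : ℝ) : ℝ := C4 * (1 + (Real.log (2 * y0 / m0) + 2 * q) / γ)

/-- All the constants of the construction. -/
structure Setup (γ : ℝ) (Φ0 : Eu d → ℝ) (g0 : Eu d → Eu d) where
  (y0 m0 ε0 R0 S R C C4 C5 C6 C7 Cp Q Y A M ε τ : ℝ)
  hd : 2 ≤ d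
  hγ0 : 0 < γ
  hγ1 : γ < 1
  init : Init γ y0 m0 ε0 R0 Φ0 g0
  hS : 0 ≤ S
  hR : R = R0 * Real.exp (C6 * S)
  hC : 1 ≤ C
  hC4 : 0 ≤ C4
  hC5 : 0 ≤ C5
  hC6 : 0 ≤ C6
  hC7 : C7 = Ce d 0 + Ce d 1
  hCp0 : 0 ≤ Cp
  hCp : ∀ q, 0 ≤ q → 2 * (C * (1 + Aq γ y0 m0 C4 q)) ≤ Cp * (1 + q)
  hQ : Q = Real.exp (Cp * S)
  hY : Y = y0 * Real.exp Q
  hA : A = Aq γ y0 m0 C4 Q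
  hM : M = ‖g0 0‖ + S * (C * Y) + Y * (2 * R) ^ γ
  hε : 0 < ε
  hτ : 0 < τ
  hε1 : Y * ε ^ γ ≤ m0 * Real.exp (-Q)
  hε2 : Real.exp (2 * C7 * S) * (ε * (1 + S * C7 * M)) ≤ ε0
  hτ1 : τ * A ≤ 1 / 2
  hτ2 : τ * C5 ≤ 1
  hτ3 : τ * C7 ≤ 1 / 2
  hτ4 : τ * (Cp * (1 + Q)) ≤ 1
  stp : ∀ (y A τ : ℝ) (ρ f Φ : Eu d → ℝ) (g : Eu d → Eu d), Dat γ y R ρ f g →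
    (∀ R', ε ≤ R' → ∀ x, ‖SS R' ρ x‖ ≤ A) → 0 ≤ τ → τ * A ≤ 1 / 2 → τ * C5 ≤ 1 →
    (∀ x, HasFDerivAt Φ (innerSL ℝ (g x)) x) →
    ∃ g' : Eu d → Eu d, (∀ u, HasFDerivAt (Pmap ε τ ρ f Φ) (innerSL ℝ (g' u)) u) ∧
      (∀ x, ‖g' (Ymap ε τ ρ x) - g x‖ ≤ τ * C * y) ∧
      (∀ x, y * ε ^ γ ≤ ‖g x‖ → (1 - τ * (C * (1 + A))) * ‖g x‖ ≤ ‖g' (Ymap ε τ ρ x)‖) ∧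
      (∀ u u', ‖g' u - g' u'‖ ≤ y * (1 + τ * (C * (1 + A))) * ‖u - u'‖ ^ γ)
  sbd : ∀ (y : ℝ) (ρ f : Eu d → ℝ) (g : Eu d → Eu d), Dat γ y R ρ f g → ∀ δ, 0 < δ → δ ≤ 1 →
      (∀ x, (0 < ‖g x‖ ∧ y * δ ^ γ ≤ ‖g x‖) ∨ ∀ x' ∈ ball x δ, ρ x' = ρ x) →
      ∀ r, 0 < r → ∀ x, ‖SS r ρ x‖ ≤ C4 * (1 + Real.log (1 / δ))
  vbd : ∀ (R r : ℝ) (ρ : Eu d → ℝ), 0 < R → (∀ x, 0 ≤ ρ x) → (∀ x, ρ x ≤ 1) →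
    (∀ x, x ∉ closedBall (0 : Eu d) R → ρ x = 0) → ∀ x, ‖vel r ρ x‖ ≤ C6 * R

namespace Setup
variable {Φ0 : Eu d → ℝ} {g0 : Eu d → Eu d} (P : Setup γ Φ0 g0)

noncomputable def Φ (k : ℕ) : Eu d → ℝ := (sq P.ε P.τ Φ0 k).1
noncomputable def X (k : ℕ) : Eu d → Eu d := (sq P.ε P.τ Φ0 k).2
noncomputable def ρ (k : ℕ) : Eu d → ℝ := fun x => th P.ε (P.Φ k x)
noncomputable def f (k : ℕ) : Eu d → ℝ := fun x => Th P.ε (P.Φ k x)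
noncomputable def q (k : ℕ) : ℝ := (1 + P.τ * P.Cp) ^ k - 1
noncomputable def Rk (k : ℕ) : ℝ := P.R0 * (1 + P.τ * P.C6) ^ k

lemma X_succ (k : ℕ) (α : Eu d) : P.X (k + 1) α = Ymap P.ε P.τ (P.ρ k) (P.X k α) := rfl
lemma Φ_succ (k : ℕ) : P.Φ (k + 1) = Pmap P.ε P.τ (P.ρ k) (P.f k) (P.Φ k) := rfl

structure Inv (k : ℕ) (g : Eu d → Eu d) : Prop where
  der : ∀ x, HasFDerivAt (P.Φ k) (innerSL ℝ (g x)) x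
  hol : ∀ x x', ‖g x - g x'‖ ≤ P.y0 * Real.exp (P.q k) * ‖x - x'‖ ^ γ
  low : ∀ α, -P.ε0 ≤ Φ0 α → Φ0 α ≤ 0 → P.m0 * Real.exp (-P.q k) ≤ ‖g (P.X k α)‖
  up : ∀ α, ‖g (P.X k α)‖ ≤ ‖g0 α‖ + k * P.τ * (P.C * P.Y)
  rad : ∀ α, ‖α‖ ≤ P.R0 → ‖P.X k α‖ ≤ P.Rk k
  bij : Function.Bijective (P.X k)
  lip1 : ∀ α β, (1 - P.τ * P.A) ^ k * ‖α - β‖ ≤ ‖P.X k α - P.X k β‖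
  lip2 : ∀ α β, ‖P.X k α - P.X k β‖ ≤ (1 + P.τ * P.A) ^ k * ‖α - β‖
  phi1 : ∀ α, Φ0 α ≤ P.Φ k (P.X k α)
  phi2 : ∀ α, Φ0 α ≤ 0 → P.Φ k (P.X k α) ≤ (1 - P.τ * P.C7) ^ k * Φ0 α + k * P.τ * (P.C7 * (P.ε * P.M))

lemma hy0 : 0 < P.y0 := P.init.hm0.trans_le P.init.my
lemma hY0 : 0 < P.Y := by rw [P.hY]; have := P.hy0; positivity
lemma hR0 : 0 < P.R := by rw [P.hR]; have := P.init.hR0; positivity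
lemma hM0 : 0 ≤ P.M := by
  have := P.hY0; have := P.hR0; have := P.hS; have := P.hC
  have : 0 ≤ P.C := by linarith
  rw [P.hM]; positivity
lemma hC70 : 0 ≤ P.C7 := by
  rw [P.hC7]
  have p1 := Ce_nonneg d (b := 0) le_rfl (by norm_num)
  have p2 := Ce_nonneg d (b := 1) zero_le_one (by norm_num)
  linarith
lemma hlog : 0 ≤ Real.log (2 * P.y0 / P.m0) :=
  Real.log_nonneg (by rw [le_div_iff₀ P.init.hm0]; linarith [P.init.my, P.init.hm0])
lemma Aq_mono {a b : ℝ} (h : a ≤ b) : Aq γ P.y0 P.m0 P.C4 a ≤ Aq γ P.y0 P.m0 P.C4 b := by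
  have := P.hγ0; have := P.hC4
  unfold Aq; gcongr
lemma hA0 : 0 ≤ P.A := by
  rw [P.hA, Aq]
  have := P.hlog; have := P.hC4; have := P.hγ0
  have : 0 ≤ P.Q := by rw [P.hQ]; positivity
  positivity
lemma q_nonneg (k : ℕ) : 0 ≤ P.q k := by
  have h1 : 1 ≤ 1 + P.τ * P.Cp := by have := P.hτ; have := P.hCp0; have : 0 ≤ P.τ * P.Cp := by positivity
                                     linarith
  have := one_le_pow₀ h1 (n := k)
  unfold q; linarith
lemma q_le {k : ℕ} (hk : k * P.τ ≤ P.S) : P.q k ≤ P.Q := by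
  have := pow_up P.hτ.le P.hCp0 hk
  rw [P.hQ]; unfold q; linarith
lemma q_succ (k : ℕ) : P.q (k + 1) = P.q k + P.τ * (P.Cp * (1 + P.q k)) := by
  unfold q; ring
lemma Rk_pos (k : ℕ) : 0 < P.Rk k := by
  have := P.init.hR0; have := P.hτ; have := P.hC6
  unfold Rk; positivity
lemma Rk_le {k : ℕ} (hk : k * P.τ ≤ P.S) : P.Rk k ≤ P.R := by
  have := pow_up P.hτ.le P.hC6 hk
  have := P.init.hR0
  rw [P.hR]; unfold Rk; gcongr
lemma yk_le {k : ℕ} (hk : k * P.τ ≤ P.S) : P.y0 * Real.exp (P.q k) ≤ P.Y := by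
  have := P.hy0
  have := P.q_le hk
  rw [P.hY]; gcongr

variable {P} {k : ℕ} {g : Eu d → Eu d}

lemma Inv.supp (I : P.Inv k g) (x : Eu d) (hx : P.Φ k x < 0) : x ∈ closedBall (0 : Eu d) (P.Rk k) := by
  obtain ⟨α, rfl⟩ := I.bij.2 x
  have := I.rad α (P.init.bd α ((I.phi1 α).trans hx.le))
  simpa using this

lemma Inv.dat (I : P.Inv k g) {r : ℝ} (hr : P.Rk k ≤ r) :
    Dat γ (P.y0 * Real.exp (P.q k)) r (P.ρ k) (P.f k) g :=
  Dat_mk P.hε P.hγ0 ((P.Rk_pos k).le.trans hr) (by have := P.hy0; positivity) I.der I.hol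
    fun x hx => closedBall_subset_closedBall hr (I.supp x hx)

lemma Inv.Mbd (I : P.Inv k g) (hk : k * P.τ ≤ P.S) (x : Eu d) (hx : x ∈ closedBall (0 : Eu d) P.R) :
    ‖g x‖ ≤ P.M := by
  have h1 := I.hol x (P.X k 0)
  have h2 := I.up 0
  have h3 := I.rad 0 (by simpa using P.init.hR0.le)
  have h4 := P.Rk_le hk
  have h5 : ‖x - P.X k 0‖ ≤ 2 * P.R := by
    have := norm_sub_le x (P.X k 0)
    have : ‖x‖ ≤ P.R := by simpa using hx
    linarith
  have h6 := norm_sub_norm_le (g x) (g (P.X k 0))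
  have hg := P.hγ0
  have hY := P.hY0
  have hC := P.hC
  have h7 : P.y0 * Real.exp (P.q k) * ‖x - P.X k 0‖ ^ γ ≤ P.Y * (2 * P.R) ^ γ := by
    have := P.yk_le hk
    gcongr
  have h8 : k * P.τ * (P.C * P.Y) ≤ P.S * (P.C * P.Y) := by
    have : 0 ≤ P.C * P.Y := mul_nonneg (by linarith) hY.le
    gcongr
  rw [P.hM]
  linarith

lemma Inv.layer (I : P.Inv k g) (hk : k * P.τ ≤ P.S) (x : Eu d) (h1 : -P.ε ≤ P.Φ k x) (h2 : P.Φ k x ≤ 0) :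
    P.m0 * Real.exp (-P.q k) ≤ ‖g x‖ := by
  obtain ⟨α, rfl⟩ := I.bij.2 x
  have h3 : Φ0 α ≤ 0 := (I.phi1 α).trans h2
  refine I.low α ?_ h3
  have h4 := I.phi2 α h3
  have h5 := pow_dn P.hτ.le P.hC70 P.hτ3 hk
  have hM := P.hM0
  have hC7 := P.hC70
  have he := P.hε
  have h6 : k * P.τ * (P.C7 * (P.ε * P.M)) ≤ P.S * (P.C7 * (P.ε * P.M)) := by gcongr
  have h7 : (1 - P.τ * P.C7) ^ k * Φ0 α ≤ Real.exp (-(2 * P.C7 * P.S)) * Φ0 α :=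
    mul_le_mul_of_nonpos_right h5 h3
  have h8 : -(P.ε * (1 + P.S * P.C7 * P.M)) ≤ Real.exp (-(2 * P.C7 * P.S)) * Φ0 α := by linarith
  have h9 : Real.exp (2 * P.C7 * P.S) * -(P.ε * (1 + P.S * P.C7 * P.M)) ≤
      Real.exp (2 * P.C7 * P.S) * (Real.exp (-(2 * P.C7 * P.S)) * Φ0 α) := by gcongr
  rw [← mul_assoc, ← Real.exp_add, add_neg_cancel, Real.exp_zero, one_mul] at h9
  have := P.hε2
  linarith

lemma Inv.Sbd (I : P.Inv k g) (hk : k * P.τ ≤ P.S) (r : ℝ) (hr : 0 < r) (x : Eu d) :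
    ‖SS r (P.ρ k) x‖ ≤ Aq γ P.y0 P.m0 P.C4 (P.q k) := by
  obtain ⟨δ, hδ, hδ1, h1, h2⟩ := delta_ex P.hγ0 P.init.hm0 P.init.my (P.q_nonneg k)
  have hm := P.init.hm0
  have hy := P.hy0
  have := P.sbd _ _ _ _ (I.dat (P.Rk_le hk)) δ hδ hδ1 (fun x => layer_case P.hγ0 P.hε (by positivity)
    (m := P.m0 * Real.exp (-P.q k)) (by positivity) hδ I.hol
    (continuous_iff_continuousAt.2 fun x => (I.der x).continuousAt) (I.layer hk) h1 x) r hr x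
  rw [h2] at this
  exact this

lemma Inv.Sbd' (I : P.Inv k g) (hk : k * P.τ ≤ P.S) (r : ℝ) (hr : 0 < r) (x : Eu d) :
    ‖SS r (P.ρ k) x‖ ≤ P.A := by
  rw [P.hA]
  exact (I.Sbd hk r hr x).trans (P.Aq_mono (P.q_le hk))

lemma Inv.vbd (I : P.Inv k g) (x : Eu d) : ‖vel P.ε (P.ρ k) x‖ ≤ P.C6 * P.Rk k := by
  have D := I.dat le_rfl
  exact P.vbd _ _ _ (P.Rk_pos k) D.nn D.le1 D.supp x

lemma inv_zero : P.Inv 0 g0 where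
  der := P.init.der
  hol := by simpa [q] using P.init.hol
  low α h1 h2 := by
    have := P.init.low α h1 h2
    show P.m0 * Real.exp (-P.q 0) ≤ ‖g0 α‖
    simpa [q] using this
  up α := by simp [X, sq]
  rad α h := by simpa [Rk, X, sq] using h
  bij := Function.bijective_id
  lip1 α β := by simp [X, sq]
  lip2 α β := by simp [X, sq]
  phi1 α := by simp [X, sq, Φ]
  phi2 α h := by simp [X, sq, Φ]

lemma Inv.succ (I : P.Inv k g) (hk : (k + 1 : ℕ) * P.τ ≤ P.S) : ∃ g', P.Inv (k + 1) g' := by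
  have hτ := P.hτ
  have hk' : k * P.τ ≤ P.S := by push_cast at hk; linarith
  have hD := I.dat (P.Rk_le hk')
  have hA0 := P.hA0
  have hε := P.hε
  have hy0 := P.hy0
  have hm0 := P.init.hm0
  have hq := P.q_nonneg k
  have hqQ := P.q_le hk'
  have hyk := P.yk_le hk'
  have hC : 0 ≤ P.C := by linarith [P.hC]
  have hC70 := P.hC70
  set Ak := Aq γ P.y0 P.m0 P.C4 (P.q k) with hAk
  have hAkA : Ak ≤ P.A := by rw [P.hA]; exact P.Aq_mono hqQ
  have hAk0 : 0 ≤ Ak := (norm_nonneg _).trans (I.Sbd hk' 1 one_pos 0)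
  have hτA : P.τ * Ak ≤ 1 / 2 := (mul_le_mul_of_nonneg_left hAkA hτ.le).trans P.hτ1
  obtain ⟨g', G1, G2, G3, G4⟩ := P.stp _ Ak P.τ (P.ρ k) (P.f k) (P.Φ k) g hD
    (fun R' hR' x => I.Sbd hk' R' (hε.trans_le hR') x) hτ.le hτA P.hτ2 I.der
  have hSA : ∀ x, ‖SS P.ε (P.ρ k) x‖ ≤ P.A := fun x => I.Sbd' hk' _ hε x
  have hYbi := fun x x' => hD.Y_bi hε hSA hτ.le x x'
  have hYbij := hD.Y_bij hε hSA hτ.le P.hτ1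
  have hinv : ∀ x, Function.invFun (Ymap P.ε P.τ (P.ρ k)) (Ymap P.ε P.τ (P.ρ k) x) = x :=
    Function.leftInverse_invFun hYbij.1
  have hPhi : ∀ x, P.Φ (k + 1) (Ymap P.ε P.τ (P.ρ k) x) = P.Φ k x - P.τ * cc P.ε (P.f k) x := fun x => by
    rw [Φ_succ, Pmap, hinv]
  set t := P.τ * (P.Cp * (1 + P.q k)) / 2 with ht
  have ht0 : 0 ≤ t := by have := P.hCp0; positivity
  have ht1 : t ≤ 1 / 2 := by
    have h1 := P.hτ4
    have : P.τ * (P.Cp * (1 + P.q k)) ≤ P.τ * (P.Cp * (1 + P.Q)) := by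
      have := P.hCp0; gcongr
    linarith
  have hCt : P.τ * (P.C * (1 + Ak)) ≤ t := by
    have := mul_le_mul_of_nonneg_left (P.hCp (P.q k) hq) hτ.le
    rw [ht]; linarith
  have hqs : P.q (k + 1) = P.q k + 2 * t := by rw [q_succ, ht]; ring
  refine ⟨g', G1, ?_, ?_, ?_, ?_, ?_, ?_, ?_, ?_, ?_⟩
  · intro x x'
    refine (G4 x x').trans ?_
    have : 1 + P.τ * (P.C * (1 + Ak)) ≤ Real.exp (2 * t) := by
      have := Real.add_one_le_exp (2 * t)
      linarith
    rw [hqs, Real.exp_add, ← mul_assoc P.y0]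
    exact mul_le_mul_of_nonneg_right (mul_le_mul_of_nonneg_left this (by positivity)) (by positivity)
  · intro α h1 h2
    have h3 := I.low α h1 h2
    rw [X_succ]
    have hp : P.y0 * Real.exp (P.q k) * P.ε ^ γ ≤ ‖g (P.X k α)‖ := by
      refine le_trans ?_ h3
      calc _ ≤ P.Y * P.ε ^ γ := by gcongr
        _ ≤ _ := P.hε1
        _ ≤ _ := by gcongr
    refine le_trans ?_ (G3 _ hp)
    have h5 := one_sub_ge ht0 ht1
    have h6 : Real.exp (-(2 * t)) ≤ 1 - P.τ * (P.C * (1 + Ak)) := by linarith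
    calc P.m0 * Real.exp (-P.q (k + 1)) = Real.exp (-(2 * t)) * (P.m0 * Real.exp (-P.q k)) := by
          rw [hqs, neg_add, Real.exp_add]; ring
      _ ≤ _ := mul_le_mul h6 h3 (by positivity) (le_trans (Real.exp_pos _).le h6)
  · intro α
    rw [X_succ]
    have h1 := G2 (P.X k α)
    have h2 := I.up α
    have h3 := norm_sub_norm_le (g' (Ymap P.ε P.τ (P.ρ k) (P.X k α))) (g (P.X k α))
    have h4 : P.τ * P.C * (P.y0 * Real.exp (P.q k)) ≤ P.τ * P.C * P.Y := by gcongr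
    push_cast
    linarith
  · intro α hα
    have h1 := I.rad α hα
    have h2 := I.vbd (P.X k α)
    rw [X_succ, Ymap]
    have h3 := norm_sub_le (P.X k α) (P.τ • vel P.ε (P.ρ k) (P.X k α))
    rw [norm_smul, Real.norm_of_nonneg hτ.le] at h3
    have h4 : P.τ * ‖vel P.ε (P.ρ k) (P.X k α)‖ ≤ P.τ * (P.C6 * P.Rk k) := by gcongr
    have h5 : P.Rk (k + 1) = P.Rk k + P.τ * (P.C6 * P.Rk k) := by unfold Rk; ring
    linarith
  · exact hYbij.comp I.bij
  · intro α β
    rw [X_succ, X_succ]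
    have h1 := (hYbi (P.X k α) (P.X k β)).1
    have h2 := I.lip1 α β
    have h3 : 0 ≤ 1 - P.τ * P.A := by linarith [P.hτ1]
    calc _ = (1 - P.τ * P.A) * ((1 - P.τ * P.A) ^ k * ‖α - β‖) := by ring
      _ ≤ (1 - P.τ * P.A) * ‖P.X k α - P.X k β‖ := by gcongr
      _ ≤ _ := h1
  · intro α β
    rw [X_succ, X_succ]
    have h1 := (hYbi (P.X k α) (P.X k β)).2
    have h2 := I.lip2 α β
    calc _ ≤ (1 + P.τ * P.A) * ‖P.X k α - P.X k β‖ := h1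
      _ ≤ (1 + P.τ * P.A) * ((1 + P.τ * P.A) ^ k * ‖α - β‖) := by gcongr
      _ = _ := by ring
  · intro α
    rw [X_succ, hPhi]
    have h1 := I.phi1 α
    have h2 := mul_nonneg hτ.le (neg_nonneg.2 (hD.cc_nonpos P.ε (P.X k α)))
    linarith
  · intro α hα
    rw [X_succ, hPhi]
    have h1 := I.phi2 α hα
    have h2 : P.X k α ∈ closedBall (0 : Eu d) P.R := by
      have := (I.rad α (P.init.bd α hα)).trans (P.Rk_le hk')
      simpa using this
    have h3 := hD.cc_le P.hd hε P.hM0 (I.Mbd hk') _ h2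
    rw [← P.hC7] at h3
    have h4 : -P.f k (P.X k α) ≤ max 0 (-P.Φ k (P.X k α)) := Th_ge hε _
    set φ := P.Φ k (P.X k α) with hφ
    have h5 : -(P.τ * cc P.ε (P.f k) (P.X k α)) ≤ P.τ * (P.C7 * (max 0 (-φ) + P.ε * P.M)) := by
      rw [← mul_neg]
      gcongr
      refine h3.trans ?_
      gcongr
    have hb : 0 ≤ 1 - P.τ * P.C7 := by linarith [P.hτ3]
    have htc : 0 ≤ P.τ * P.C7 := by positivity
    push_cast
    rw [pow_succ]
    rcases le_total φ 0 with h6 | h6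
    · rw [max_eq_right (by linarith)] at h5
      have h7 := mul_le_mul_of_nonneg_left h1 hb
      have h8 : 0 ≤ (P.τ * P.C7) * (k * P.τ * (P.C7 * (P.ε * P.M))) := by
        have := P.hM0; positivity
      nlinarith
    · rw [max_eq_left (by linarith)] at h5
      have h8 : (1 - P.τ * P.C7) ^ k * Φ0 α * (P.τ * P.C7) ≤ 0 :=
        mul_nonpos_of_nonpos_of_nonneg (mul_nonpos_of_nonneg_of_nonpos (by positivity) hα) htc
      nlinarith

lemma inv_all (P : Setup γ Φ0 g0) (k : ℕ) (hk : k * P.τ ≤ P.S) : ∃ g, P.Inv k g := by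
  induction k with
  | zero => exact ⟨g0, inv_zero⟩
  | succ k ih =>
    obtain ⟨g, I⟩ := ih (by have := P.hτ; push_cast at hk; linarith)
    exact I.succ hk

end Setup
end AggPatch

namespace AggPatch
open Filter Topology
variable {d : ℕ} {γ : ℝ}

/-- Constants of the uniform estimates. -/
structure Con where
  (Y m M R L V c B : ℝ)
  hY : 0 < Y
  hm : 0 < m
  hM : 0 ≤ M
  hR : 0 < R
  hL : 0 < L
  hV : 0 ≤ V
  hc : 0 < c
  hB : 0 ≤ B

structure Good (K : Con) (γ ε0 : ℝ) (Φ0 : Eu d → ℝ) (ε : ℝ) (Φ : Eu d → ℝ) (X : Eu d → Eu d)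
    (g : Eu d → Eu d) : Prop where
  der : ∀ x, HasFDerivAt Φ (innerSL ℝ (g x)) x
  hol : ∀ x x', ‖g x - g x'‖ ≤ K.Y * ‖x - x'‖ ^ γ
  low : ∀ α, -ε0 ≤ Φ0 α → Φ0 α ≤ 0 → K.m ≤ ‖g (X α)‖
  up : ∀ x, x ∈ closedBall (0 : Eu d) K.R → ‖g x‖ ≤ K.M
  bij : Function.Bijective X
  lip1 : ∀ α β, ‖α - β‖ ≤ K.L * ‖X α - X β‖
  lip2 : ∀ α β, ‖X α - X β‖ ≤ K.L * ‖α - β‖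
  phi1 : ∀ α, Φ0 α ≤ Φ (X α)
  phi2 : ∀ α, Φ0 α ≤ 0 → Φ (X α) ≤ K.c * Φ0 α + K.B * ε
  rad : ∀ α, Φ0 α ≤ 0 → X α ∈ closedBall (0 : Eu d) K.R
  vbd : ∀ x, ‖vel ε (fun x => th ε (Φ x)) x‖ ≤ K.V

lemma ev_small (c : ℝ) {b : ℝ} (hb : 0 < b) : ∀ᶠ τ in 𝓝[>] (0 : ℝ), τ * c ≤ b := by
  have h : Tendsto (fun τ : ℝ => τ * c) (𝓝 0) (𝓝 0) :=
    (continuous_id.mul continuous_const).tendsto' 0 0 (by simp)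
  exact (h.mono_left nhdsWithin_le_nhds).eventually_le_const hb

lemma ev_small_pow (hγ : 0 < γ) (c : ℝ) {b : ℝ} (hb : 0 < b) : ∀ᶠ τ in 𝓝[>] (0 : ℝ), c * τ ^ γ ≤ b := by
  have h : Tendsto (fun τ : ℝ => c * τ ^ γ) (𝓝 0) (𝓝 0) :=
    (continuous_const.mul (Real.continuous_rpow_const hγ.le)).tendsto' 0 0 (by simp [hγ.ne'])
  exact (h.mono_left nhdsWithin_le_nhds).eventually_le_const hb

lemma main_prop (hd : 2 ≤ d) (hγ0 : 0 < γ) (hγ1 : γ < 1) {y0 m0 ε0 R0 : ℝ} {Φ0 : Eu d → ℝ} {g0 : Eu d → Eu d}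
    (hi : Init γ y0 m0 ε0 R0 Φ0 g0) (S : ℝ) (hS : 0 ≤ S) :
    ∃ K : Con, ∀ᶠ ε in 𝓝[>] (0 : ℝ), ∀ᶠ τ in 𝓝[>] (0 : ℝ), ∀ k : ℕ, k * τ ≤ S →
      ∃ g, Good K γ ε0 Φ0 ε (sq ε τ Φ0 k).1 (sq ε τ Φ0 k).2 g := by
  have hm0 := hi.hm0
  have hy0 : 0 < y0 := hm0.trans_le hi.my
  have hR0 := hi.hR0
  obtain ⟨C6, hC6, vbd⟩ := vel_le (d := d) hd
  set R := R0 * Real.exp (C6 * S) with hR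
  obtain ⟨C4, hC4, sbd⟩ := S_bound (d := d) hd hγ0 hγ1 R
  obtain ⟨C, hC, stp⟩ := step_bounds (d := d) hd hγ0 hγ1 R
  set C7 := Ce d 0 + Ce d 1 with hC7
  have hC70 : 0 ≤ C7 := by
    have p1 := Ce_nonneg d (b := 0) le_rfl (by norm_num)
    have p2 := Ce_nonneg d (b := 1) zero_le_one (by norm_num)
    linarith
  have hlog : 0 ≤ Real.log (2 * y0 / m0) :=
    Real.log_nonneg (by rw [le_div_iff₀ hm0]; linarith [hi.my])
  set l := Real.log (2 * y0 / m0) with hl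
  have hC0 : 0 ≤ C := by linarith
  set Cp := 2 * (C * (1 + C4 * (1 + (l + 2) / γ))) with hCp
  have hCp0 : 0 ≤ Cp := by positivity
  set Q := Real.exp (Cp * S) with hQ
  have hQ0 : 0 < Q := by positivity
  set Y := y0 * Real.exp Q with hY
  have hY0 : 0 < Y := by positivity
  set A := Aq γ y0 m0 C4 Q with hA
  have hA0 : 0 ≤ A := by rw [hA, Aq, ← hl]; positivity
  have hRp : 0 < R := by positivity
  set M := ‖g0 0‖ + S * (C * Y) + Y * (2 * R) ^ γ with hM
  have hM0 : 0 ≤ M := by positivity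
  have key : ∀ q, 0 ≤ q → 2 * (C * (1 + Aq γ y0 m0 C4 q)) ≤ Cp * (1 + q) := by
    intro q hq
    rw [hCp, Aq, ← hl]
    have h1 : 1 + C4 * (1 + (l + 2 * q) / γ) ≤ (1 + C4 * (1 + (l + 2) / γ)) * (1 + q) := by
      have e : (1 + C4 * (1 + (l + 2) / γ)) * (1 + q) - (1 + C4 * (1 + (l + 2 * q) / γ)) =
        q + C4 * q + C4 * ((2 + l * q) / γ) := by ring
      have : 0 ≤ q + C4 * q + C4 * ((2 + l * q) / γ) := by positivity
      linarith
    have := mul_le_mul_of_nonneg_left h1 hC0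
    linarith
  refine ⟨⟨Y, m0 * Real.exp (-Q), M, R, Real.exp (2 * A * S), C6 * R, Real.exp (-(2 * C7 * S)), S * C7 * M,
    hY0, by positivity, hM0, hRp, by positivity, by positivity, by positivity, by positivity⟩, ?_⟩
  filter_upwards [ev_small_pow hγ0 Y (show 0 < m0 * Real.exp (-Q) by positivity),
    ev_small (Real.exp (2 * C7 * S) * (1 + S * C7 * M)) hi.he0, self_mem_nhdsWithin] with ε he1 he2 he3
  obtain ⟨C5, hC5, stp⟩ := stp ε he3
  filter_upwards [ev_small A (show (0:ℝ) < 1/2 by norm_num), ev_small C5 one_pos,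
    ev_small C7 (show (0:ℝ) < 1/2 by norm_num), ev_small (Cp * (1 + Q)) one_pos, self_mem_nhdsWithin] with τ t1 t2 t3 t4 t5 k hk
  let P : Setup γ Φ0 g0 := ⟨y0, m0, ε0, R0, S, R, C, C4, C5, C6, C7, Cp, Q, Y, A, M, ε, τ, hd, hγ0, hγ1, hi, hS, rfl,
    hC, hC4, hC5, hC6, rfl, hCp0, key, rfl, rfl, rfl, rfl, he3, t5, he1, by linarith, t1, t2, t3, t4, stp, sbd, vbd⟩
  obtain ⟨g, I⟩ := P.inv_all k hk
  have hτ : 0 < τ := t5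
  have hε : 0 < ε := he3
  refine ⟨g, I.der, ?_, ?_, I.Mbd hk, I.bij, ?_, ?_, I.phi1, ?_, ?_, ?_⟩
  · intro x x'
    exact (I.hol x x').trans (mul_le_mul_of_nonneg_right (P.yk_le hk) (by positivity))
  · intro α h1 h2
    refine le_trans ?_ (I.low α h1 h2)
    have := P.q_le hk
    show m0 * Real.exp (-Q) ≤ m0 * Real.exp (-P.q k)
    have h3 : P.q k ≤ Q := this
    gcongr
  · intro α β
    have h1 := I.lip1 α β
    have h2 := pow_dn hτ.le hA0 t1 hk
    have h3 : Real.exp (-(2 * A * S)) * ‖α - β‖ ≤ ‖P.X k α - P.X k β‖ :=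
      (mul_le_mul_of_nonneg_right h2 (norm_nonneg _)).trans h1
    have h4 := mul_le_mul_of_nonneg_left h3 (Real.exp_pos (2 * A * S)).le
    rw [← mul_assoc, ← Real.exp_add, add_neg_cancel, Real.exp_zero, one_mul] at h4
    exact h4
  · intro α β
    refine (I.lip2 α β).trans (mul_le_mul_of_nonneg_right ((pow_up hτ.le hA0 hk).trans ?_) (norm_nonneg _))
    rw [Real.exp_le_exp]
    nlinarith [mul_nonneg hA0 hS]
  · intro α hα
    refine (I.phi2 α hα).trans ?_
    have h2 := pow_dn hτ.le hC70 t3 hk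
    have h3 := mul_le_mul_of_nonpos_right h2 hα
    have h4 : k * τ * (C7 * (ε * M)) ≤ S * (C7 * (ε * M)) := by gcongr
    show (1 - τ * C7) ^ k * Φ0 α + k * τ * (C7 * (ε * M)) ≤ Real.exp (-(2 * C7 * S)) * Φ0 α + S * C7 * M * ε
    linarith
  · intro α hα
    have := (I.rad α (hi.bd α hα)).trans (P.Rk_le hk)
    exact mem_closedBall_zero_iff.2 this
  · intro x
    exact (I.vbd x).trans (mul_le_mul_of_nonneg_left (P.Rk_le hk) hC6)

/-- A sequence of parameters which works on all bounded time intervals. -/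
lemma seq_prop (hd : 2 ≤ d) (hγ0 : 0 < γ) (hγ1 : γ < 1) {y0 m0 ε0 R0 : ℝ} {Φ0 : Eu d → ℝ} {g0 : Eu d → Eu d}
    (hi : Init γ y0 m0 ε0 R0 Φ0 g0) :
    ∃ (K : ℕ → Con) (ε τ : ℕ → ℝ), (∀ n, 0 < ε n) ∧ (∀ n, 0 < τ n) ∧ Tendsto ε atTop (𝓝 0) ∧ Tendsto τ atTop (𝓝 0) ∧
      ∀ S n k : ℕ, S ≤ n → k * τ n ≤ S →
        ∃ g, Good (K S) γ ε0 Φ0 (ε n) (sq (ε n) (τ n) Φ0 k).1 (sq (ε n) (τ n) Φ0 k).2 g := by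
  choose K hK using fun S : ℕ => main_prop hd hγ0 hγ1 hi (S : ℝ) (Nat.cast_nonneg S)
  have h1 : ∀ n : ℕ, ∃ ε, 0 < ε ∧ ε ≤ 1 / ((n : ℝ) + 1) ∧ ∃ τ, 0 < τ ∧ τ ≤ 1 / ((n : ℝ) + 1) ∧
      ∀ S ∈ Finset.range (n + 1), ∀ k : ℕ, k * τ ≤ S →
      ∃ g, Good (K S) γ ε0 Φ0 ε (sq ε τ Φ0 k).1 (sq ε τ Φ0 k).2 g := by
    intro n
    have e1 := (Filter.eventually_all_finset (Finset.range (n + 1))).2 fun S _ => hK S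
    have e2 := ev_small 1 (show (0:ℝ) < 1 / ((n : ℝ) + 1) by positivity)
    obtain ⟨ε, a1, a2, a3⟩ := (e1.and (e2.and (self_mem_nhdsWithin))).exists
    have e3 := (Filter.eventually_all_finset (Finset.range (n + 1))).2 fun S hS => a1 S hS
    obtain ⟨τ, b1, b2, b3⟩ := (e3.and (e2.and (self_mem_nhdsWithin))).exists
    exact ⟨ε, a3, by linarith, τ, b3, by linarith, b1⟩
  choose ε he0 he1 τ ht0 ht1 H using h1
  refine ⟨K, ε, τ, he0, ht0, ?_, ?_, fun S n k hS hk => H n S (Finset.mem_range.2 (by omega)) k hk⟩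
  · exact squeeze_zero (fun n => (he0 n).le) he1 tendsto_one_div_add_atTop_nhds_zero_nat
  · exact squeeze_zero (fun n => (ht0 n).le) ht1 tendsto_one_div_add_atTop_nhds_zero_nat

end AggPatch

namespace AggPatch
open Filter Topology
variable {d : ℕ} {γ : ℝ}

lemma subseq_conv {Z E : Type*} [TopologicalSpace Z] [TopologicalSpace.SeparableSpace Z] [Nonempty Z]
    [NormedAddCommGroup E] [ProperSpace E] (u : ℕ → Z → E)
    (hb : ∀ z, ∃ C, ∀ᶠ n in atTop, ‖u n z‖ ≤ C)
    (he : ∀ z, ∀ η > 0, ∀ᶠ p in (atTop ×ˢ 𝓝 z : Filter (ℕ × Z)), ‖u p.1 p.2 - u p.1 z‖ ≤ η) :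
    ∃ φ : ℕ → ℕ, StrictMono φ ∧ ∃ U : Z → E, ∀ z,
      Tendsto (fun p : ℕ × Z => u (φ p.1) p.2) (atTop ×ˢ 𝓝 z) (𝓝 (U z)) := by
  classical
  choose C hC using hb
  let ds := TopologicalSpace.denseSeq Z
  let v : ℕ → ℕ → E := fun n i => if ‖u n (ds i)‖ ≤ |C (ds i)| then u n (ds i) else 0
  have hv : ∀ n, v n ∈ Set.pi univ (fun i => closedBall (0 : E) |C (ds i)|) := by
    intro n i _
    rw [mem_closedBall_zero_iff]
    by_cases h : ‖u n (ds i)‖ ≤ |C (ds i)|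
    · simp only [v, if_pos h]; exact h
    · simp only [v, if_neg h]; simp
  obtain ⟨a, -, φ, hφ, ha⟩ := (isCompact_univ_pi fun i => isCompact_closedBall (0 : E) |C (ds i)|).tendsto_subseq hv
  rw [tendsto_pi_nhds] at ha
  have ha' : ∀ i, Tendsto (fun n => u (φ n) (ds i)) atTop (𝓝 (a i)) := by
    intro i
    refine (ha i).congr' ?_
    filter_upwards [hφ.tendsto_atTop.eventually (hC (ds i))] with n hn
    simp only [v, Function.comp, if_pos (hn.trans (le_abs_self _))]
  have hc : ∀ z, ∃ b, Tendsto (fun n => u (φ n) z) atTop (𝓝 b) := by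
    intro z
    apply cauchySeq_tendsto_of_complete
    rw [Metric.cauchySeq_iff']
    intro η hη
    obtain ⟨p, hp, q, hq, hpq⟩ := Filter.eventually_prod_iff.1 (he z (η / 4) (by linarith))
    obtain ⟨w, hw'⟩ := (TopologicalSpace.denseRange_denseSeq Z).exists_mem_open isOpen_interior
      (⟨z, mem_interior_iff_mem_nhds.2 hq⟩ : (interior {x | q x}).Nonempty)
    have hqi : q (ds w) := interior_subset hw'
    obtain ⟨N1, h1⟩ := eventually_atTop.1 (hφ.tendsto_atTop.eventually hp)
    obtain ⟨N2, h2⟩ := Metric.cauchySeq_iff.1 (ha' w).cauchySeq (η / 4) (by linarith)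
    refine ⟨max N1 N2, fun n hn => ?_⟩
    have e1 := hpq (h1 n (le_trans (le_max_left _ _) hn)) hqi
    have e2 := hpq (h1 (max N1 N2) (le_max_left _ _)) hqi
    have e3 := h2 n (le_trans (le_max_right _ _) hn) (max N1 N2) (le_max_right _ _)
    rw [← dist_eq_norm] at e1 e2
    dsimp only at e1 e2
    calc dist (u (φ n) z) (u (φ (max N1 N2)) z) ≤ dist (u (φ n) z) (u (φ n) (ds w)) +
          dist (u (φ n) (ds w)) (u (φ (max N1 N2)) (ds w)) + dist (u (φ (max N1 N2)) (ds w)) (u (φ (max N1 N2)) z) :=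
          dist_triangle4 _ _ _ _
      _ < η := by rw [dist_comm (u (φ n) z)]; linarith
  choose U hU using hc
  refine ⟨φ, hφ, U, fun z => ?_⟩
  have h1 : Tendsto (fun p : ℕ × Z => u (φ p.1) p.2 - u (φ p.1) z) (atTop ×ˢ 𝓝 z) (𝓝 0) := by
    rw [tendsto_zero_iff_norm_tendsto_zero, Metric.tendsto_nhds]
    intro η hη
    have := (hφ.tendsto_atTop.prodMap (tendsto_id (x := 𝓝 z))).eventually (he z (η / 2) (by linarith))
    filter_upwards [this] with p hp
    rw [Real.dist_0_eq_abs, abs_norm]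
    simp only [Prod.map, id] at hp
    linarith
  have h2 : Tendsto (fun p : ℕ × Z => u (φ p.1) z) (atTop ×ˢ 𝓝 z) (𝓝 (U z)) := (hU z).comp tendsto_fst
  simpa using h1.add h2

/-- The time step index. -/
noncomputable def kk (τ s : ℝ) : ℕ := ⌊s / τ⌋₊

lemma kk_le {τ s : ℝ} (hτ : 0 < τ) : kk τ s * τ ≤ max s 0 := by
  rcases le_total 0 s with h | h
  · have := Nat.floor_le (div_nonneg h hτ.le)
    rw [le_div_iff₀ hτ] at this
    exact this.trans (le_max_left _ _)
  · have : kk τ s = 0 := Nat.floor_of_nonpos (div_nonpos_of_nonpos_of_nonneg h hτ.le)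
    rw [this]; simp

lemma kk_gt {τ s : ℝ} (hτ : 0 < τ) : s < (kk τ s + 1) * τ := by
  have := Nat.lt_floor_add_one (s / τ)
  rw [div_lt_iff₀ hτ] at this
  exact this

lemma kk_diff {τ s s' : ℝ} (hτ : 0 < τ) (h : s ≤ s') :
    kk τ s ≤ kk τ s' ∧ ((kk τ s' - kk τ s : ℕ) : ℝ) * τ ≤ (s' - s) + τ := by
  have h1 : kk τ s ≤ kk τ s' := Nat.floor_mono (div_le_div_of_nonneg_right h hτ.le)
  refine ⟨h1, ?_⟩
  rw [Nat.cast_sub h1]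
  have h2 := kk_le (s := s') hτ
  have h3 := kk_gt (s := s) hτ
  rcases le_total 0 s' with h4 | h4
  · rw [max_eq_left h4] at h2
    nlinarith
  · rw [max_eq_right h4] at h2
    have : 0 ≤ (kk τ s : ℝ) * τ := by positivity
    nlinarith

lemma sq_step {K : Con} {ε0 ε τ : ℝ} {Φ0 : Eu d → ℝ} (hτ : 0 < τ) {S : ℝ}
    (H : ∀ k : ℕ, k * τ ≤ S → ∃ g, Good K γ ε0 Φ0 ε (sq ε τ Φ0 k).1 (sq ε τ Φ0 k).2 g) (α : Eu d) (k j : ℕ)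
    (w : Eu d) (c : ℝ) (hw : ∀ i < j, ‖vel ε (fun x => th ε ((sq ε τ Φ0 (k + i)).1 x)) ((sq ε τ Φ0 (k + i)).2 α) - w‖ ≤ c) :
    ‖(sq ε τ Φ0 (k + j)).2 α - (sq ε τ Φ0 k).2 α + ((j : ℝ) * τ) • w‖ ≤ (j * τ) * c := by
  induction j with
  | zero => simp
  | succ j ih =>
    have h1 := ih (fun i hi => hw i (by omega))
    have h2 := hw j (by omega)
    have e : (sq ε τ Φ0 (k + (j + 1))).2 α = (sq ε τ Φ0 (k + j)).2 α -
      τ • vel ε (fun x => th ε ((sq ε τ Φ0 (k + j)).1 x)) ((sq ε τ Φ0 (k + j)).2 α) := rfl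
    rw [e]
    set v := vel ε (fun x => th ε ((sq ε τ Φ0 (k + j)).1 x)) ((sq ε τ Φ0 (k + j)).2 α)
    have e2 : (sq ε τ Φ0 (k + j)).2 α - τ • v - (sq ε τ Φ0 k).2 α + (((j + 1 : ℕ) : ℝ) * τ) • w =
      ((sq ε τ Φ0 (k + j)).2 α - (sq ε τ Φ0 k).2 α + ((j : ℝ) * τ) • w) - τ • (v - w) := by
      push_cast
      module
    rw [e2]
    refine (norm_sub_le _ _).trans ?_
    rw [norm_smul, Real.norm_of_nonneg hτ.le]
    have := mul_le_mul_of_nonneg_left h2 hτ.le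
    push_cast
    linarith

/-- The discrete flow. -/
noncomputable def Xn (Φ0 : Eu d → ℝ) (ε τ : ℝ) (α : Eu d) (s : ℝ) : Eu d := (sq ε τ Φ0 (kk τ s)).2 α
noncomputable def Fn (Φ0 : Eu d → ℝ) (ε τ : ℝ) (s : ℝ) : Eu d → ℝ := (sq ε τ Φ0 (kk τ s)).1

structure Appr (K : ℕ → Con) (γ ε0 : ℝ) (Φ0 : Eu d → ℝ) (ε τ : ℕ → ℝ) : Prop where
  e0 : ∀ n, 0 < ε n
  t0 : ∀ n, 0 < τ n
  et : Tendsto ε atTop (𝓝 0)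
  tt : Tendsto τ atTop (𝓝 0)
  good : ∀ S n k : ℕ, S ≤ n → k * τ n ≤ S →
        ∃ g, Good (K S) γ ε0 Φ0 (ε n) (sq (ε n) (τ n) Φ0 k).1 (sq (ε n) (τ n) Φ0 k).2 g

variable {K : ℕ → Con} {ε0 : ℝ} {Φ0 : Eu d → ℝ} {ε τ : ℕ → ℝ}

lemma Appr.good' (Z : Appr K γ ε0 Φ0 ε τ) {S n : ℕ} {s : ℝ} (hS : S ≤ n) (hs : s ≤ S) :
    ∃ g, Good (K S) γ ε0 Φ0 (ε n) (Fn Φ0 (ε n) (τ n) s) (fun α => Xn Φ0 (ε n) (τ n) α s) g :=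
  Z.good S n _ hS ((kk_le (Z.t0 n)).trans (max_le hs (Nat.cast_nonneg S)))

lemma Appr.time (Z : Appr K γ ε0 Φ0 ε τ) {S n : ℕ} {s s' : ℝ} (hS : S ≤ n) (hs' : s' ≤ S) (h : s ≤ s') (α : Eu d) :
    ‖Xn Φ0 (ε n) (τ n) α s' - Xn Φ0 (ε n) (τ n) α s‖ ≤ (s' - s + τ n) * (K S).V := by
  obtain ⟨h1, h2⟩ := kk_diff (Z.t0 n) h
  have h3 : (kk (τ n) s' : ℝ) * τ n ≤ S := (kk_le (Z.t0 n)).trans (max_le hs' (Nat.cast_nonneg S))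
  have := sq_step (S := S) (Z.t0 n) (fun k hk => Z.good S n k hS hk) α (kk (τ n) s) (kk (τ n) s' - kk (τ n) s) 0 (K S).V
    (fun i hi => by
      rw [sub_zero]
      obtain ⟨g, G⟩ := Z.good S n (kk (τ n) s + i) hS (by
        refine le_trans ?_ h3
        have := (Z.t0 n).le
        have : kk (τ n) s + i ≤ kk (τ n) s' := by omega
        gcongr)
      exact G.vbd _)
  rw [smul_zero, add_zero, Nat.add_sub_cancel' h1] at this
  exact this.trans (mul_le_mul_of_nonneg_right h2 (K S).hV)

lemma Appr.equi (Z : Appr K γ ε0 Φ0 ε τ) {S n : ℕ} {s s' : ℝ} (hS : S ≤ n) (hs : s ≤ S) (hs' : s' ≤ S) (α α' : Eu d) :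
    ‖Xn Φ0 (ε n) (τ n) α' s' - Xn Φ0 (ε n) (τ n) α s‖ ≤ (|s' - s| + τ n) * (K S).V + (K S).L * ‖α' - α‖ := by
  have h1 : ‖Xn Φ0 (ε n) (τ n) α s' - Xn Φ0 (ε n) (τ n) α s‖ ≤ (|s' - s| + τ n) * (K S).V := by
    rcases le_total s s' with h | h
    · rw [abs_of_nonneg (by linarith)]; exact Z.time hS hs' h α
    · rw [norm_sub_rev, abs_sub_comm, abs_of_nonneg (by linarith)]; exact Z.time hS hs h α
  obtain ⟨g, G⟩ := Z.good' hS hs'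
  have h2 := G.lip2 α' α
  have := norm_sub_le_norm_sub_add_norm_sub (Xn Φ0 (ε n) (τ n) α' s') (Xn Φ0 (ε n) (τ n) α s') (Xn Φ0 (ε n) (τ n) α s)
  linarith

lemma conv_prop (hd : 2 ≤ d) (hγ0 : 0 < γ) (hγ1 : γ < 1) {y0 m0 ε0 R0 : ℝ} {Φ0 : Eu d → ℝ} {g0 : Eu d → Eu d}
    (hi : Init γ y0 m0 ε0 R0 Φ0 g0) :
    ∃ (K : ℕ → Con) (ε τ : ℕ → ℝ), Appr K γ ε0 Φ0 ε τ ∧ ∃ X : Eu d → ℝ → Eu d, ∀ α s,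
      Tendsto (fun p : ℕ × (Eu d × ℝ) => Xn Φ0 (ε p.1) (τ p.1) p.2.1 p.2.2) (atTop ×ˢ 𝓝 (α, s)) (𝓝 (X α s)) := by
  obtain ⟨K, ε, τ, h1, h2, h3, h4, h5⟩ := seq_prop hd hγ0 hγ1 hi
  have Z : Appr K γ ε0 Φ0 ε τ := ⟨h1, h2, h3, h4, h5⟩
  have hb : ∀ z : Eu d × ℝ, ∃ C, ∀ᶠ n in atTop, ‖Xn Φ0 (ε n) (τ n) z.1 z.2‖ ≤ C := by
    rintro ⟨α, s⟩
    obtain ⟨S, hS⟩ := exists_nat_ge s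
    refine ⟨‖α‖ + (|s| + 1) * (K S).V, ?_⟩
    filter_upwards [eventually_ge_atTop S, h4.eventually_le_const one_pos] with n hn ht
    have := Z.equi hn (Nat.cast_nonneg S) hS α α
    have e : Xn Φ0 (ε n) (τ n) α 0 = α := by simp [Xn, kk, sq]
    rw [e, sub_self, norm_zero, mul_zero, add_zero, sub_zero] at this
    have h6 := norm_sub_norm_le (Xn Φ0 (ε n) (τ n) α s) α
    have h7 : (|s| + τ n) * (K S).V ≤ (|s| + 1) * (K S).V :=
      mul_le_mul_of_nonneg_right (by linarith) (K S).hV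
    linarith
  have he : ∀ z : Eu d × ℝ, ∀ η > 0, ∀ᶠ p in (atTop ×ˢ 𝓝 z : Filter (ℕ × (Eu d × ℝ))),
      ‖Xn Φ0 (ε p.1) (τ p.1) p.2.1 p.2.2 - Xn Φ0 (ε p.1) (τ p.1) z.1 z.2‖ ≤ η := by
    rintro ⟨α, s⟩ η hη
    obtain ⟨S, hS⟩ := exists_nat_gt s
    have c1 : Tendsto (fun p : ℕ × (Eu d × ℝ) => (|p.2.2 - s| + τ p.1) * (K S).V + (K S).L * ‖p.2.1 - α‖)
        (atTop ×ˢ 𝓝 (α, s)) (𝓝 ((|s - s| + 0) * (K S).V + (K S).L * ‖α - α‖)) := by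
      have t1 : Tendsto (fun p : ℕ × (Eu d × ℝ) => p.2.2) (atTop ×ˢ 𝓝 (α, s)) (𝓝 s) :=
        (continuous_snd.tendsto (α, s)).comp tendsto_snd
      have t2 : Tendsto (fun p : ℕ × (Eu d × ℝ) => p.2.1) (atTop ×ˢ 𝓝 (α, s)) (𝓝 α) :=
        (continuous_fst.tendsto (α, s)).comp tendsto_snd
      have t3 : Tendsto (fun p : ℕ × (Eu d × ℝ) => τ p.1) (atTop ×ˢ 𝓝 (α, s)) (𝓝 0) := h4.comp tendsto_fst
      exact (((t1.sub_const s).abs.add t3).mul_const _).add ((t2.sub_const α).norm.const_mul _)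
    have c2 : ∀ᶠ p in (atTop ×ˢ 𝓝 (α, s) : Filter (ℕ × (Eu d × ℝ))), p.2.2 < (S : ℝ) := by
      have t1 : Tendsto (fun p : ℕ × (Eu d × ℝ) => p.2.2) (atTop ×ˢ 𝓝 (α, s)) (𝓝 s) :=
        (continuous_snd.tendsto (α, s)).comp tendsto_snd
      exact t1.eventually_lt_const hS
    have c3 : ∀ᶠ p in (atTop ×ˢ 𝓝 (α, s) : Filter (ℕ × (Eu d × ℝ))), S ≤ p.1 :=
      tendsto_fst.eventually (eventually_ge_atTop S)
    filter_upwards [c1.eventually_le_const (show _ < η by simpa using hη), c2, c3] with p e1 e2 e3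
    exact (Z.equi e3 hS.le e2.le _ _).trans e1
  obtain ⟨φ, hφ, U, hU⟩ := subseq_conv (fun n (z : Eu d × ℝ) => Xn Φ0 (ε n) (τ n) z.1 z.2) hb he
  exact ⟨K, ε ∘ φ, τ ∘ φ, ⟨fun n => h1 _, fun n => h2 _, h3.comp hφ.tendsto_atTop, h4.comp hφ.tendsto_atTop,
    fun S n k hS hk => h5 S (φ n) k (hS.trans (hφ.id_le n)) hk⟩, fun α s => U (α, s), fun α s => hU (α, s)⟩

end AggPatch

namespace AggPatch
open Filter Topology
variable {d : ℕ} {γ : ℝ}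

lemma taylor (hγ : 0 < γ) {Φ : Eu d → ℝ} {g : Eu d → Eu d} {Y : ℝ} (hY : 0 ≤ Y)
    (der : ∀ x, HasFDerivAt Φ (innerSL ℝ (g x)) x)
    (hol : ∀ x x', ‖g x - g x'‖ ≤ Y * ‖x - x'‖ ^ γ) (x y : Eu d) :
    |Φ y - Φ x - ⟪g x, y - x⟫| ≤ Y * ‖y - x‖ ^ γ * ‖y - x‖ := by
  have := Convex.norm_image_sub_le_of_norm_hasFDerivWithin_le' (f := Φ) (f' := fun z => innerSL ℝ (g z))
    (φ := innerSL ℝ (g x)) (C := Y * ‖y - x‖ ^ γ) (s := segment ℝ x y)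
    (fun z _ => (der z).hasFDerivWithinAt) (fun z hz => ?_) (convex_segment x y) (left_mem_segment ℝ x y)
    (right_mem_segment ℝ x y)
  · simpa using this
  · rw [← map_sub, innerSL_apply_norm]
    refine (hol z x).trans ?_
    have : ‖z - x‖ ≤ ‖y - x‖ := by
      obtain ⟨t, ht, rfl⟩ := segment_eq_image_lineMap ℝ x y ▸ hz
      rw [AffineMap.lineMap_apply]
      simp only [vsub_eq_sub, vadd_eq_add, add_sub_cancel_right, norm_smul, Real.norm_of_nonneg ht.1]
      exact mul_le_of_le_one_left (norm_nonneg _) ht.2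
    gcongr

lemma der_of_taylor (hγ : 0 < γ) {Φ : Eu d → ℝ} {v : Eu d} {Y : ℝ} (x : Eu d)
    (h : ∀ y, |Φ y - Φ x - ⟪v, y - x⟫| ≤ Y * ‖y - x‖ ^ γ * ‖y - x‖) : HasFDerivAt Φ (innerSL ℝ v) x := by
  rw [hasFDerivAt_iff_isLittleO, Asymptotics.isLittleO_iff]
  intro c hc
  have : Tendsto (fun y : Eu d => Y * ‖y - x‖ ^ γ) (𝓝 x) (𝓝 0) := by
    have h1 : Continuous (fun y : Eu d => Y * ‖y - x‖ ^ γ) := by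
      have := Real.continuous_rpow_const hγ.le
      exact continuous_const.mul (this.comp (by fun_prop))
    exact h1.tendsto' _ _ (by simp [hγ.ne'])
  filter_upwards [this.eventually_le_const hc] with y hy
  have := h y
  rw [Real.norm_eq_abs]
  refine this.trans ?_
  gcongr

lemma hol_cont (hγ : 0 < γ) {g : Eu d → Eu d} {Y : ℝ} 
    (hol : ∀ x x', ‖g x - g x'‖ ≤ Y * ‖x - x'‖ ^ γ) : Continuous g := by
  rw [continuous_iff_continuousAt]
  intro x
  rw [ContinuousAt, tendsto_iff_norm_sub_tendsto_zero]
  have h1 : Continuous (fun y : Eu d => Y * ‖y - x‖ ^ γ) := by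
    have := Real.continuous_rpow_const hγ.le
    exact continuous_const.mul (this.comp (by fun_prop))
  exact squeeze_zero (fun _ => norm_nonneg _) (fun y => hol y x) (h1.tendsto' _ _ (by simp [hγ.ne']))

lemma grad_eq {Φ : Eu d → ℝ} {v x : Eu d} (h : HasFDerivAt Φ (innerSL ℝ v) x) : gradient Φ x = v :=
  HasGradientAt.gradient (hasGradientAt_iff_hasFDerivAt.2 h)

lemma contDiff_of {Φ : Eu d → ℝ} {g : Eu d → Eu d} (der : ∀ x, HasFDerivAt Φ (innerSL ℝ (g x)) x)
    (hg : Continuous g) : ContDiff ℝ 1 Φ := by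
  rw [contDiff_one_iff_fderiv]
  refine ⟨fun x => (der x).differentiableAt, ?_⟩
  have : fderiv ℝ Φ = fun x => innerSL ℝ (g x) := funext fun x => (der x).fderiv
  rw [this]
  exact (innerSL ℝ).continuous.comp hg

lemma null_set {Φ : Eu d → ℝ} {g : Eu d → Eu d} (hd : 2 ≤ d) (der : ∀ x, HasFDerivAt Φ (innerSL ℝ (g x)) x)
    (hg : ∀ x, Φ x = 0 → g x ≠ 0) : volume {x | Φ x = 0} = 0 := by
  have hc : Continuous Φ := continuous_iff_continuousAt.2 fun x => (der x).continuousAt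
  have hs : MeasurableSet {x | Φ x = 0} := (isClosed_eq hc continuous_const).measurableSet
  have hne : Nontrivial (Eu d) := by
    have : Nontrivial (Fin d) := Fin.nontrivial_iff_two_le.2 hd
    have : Nonempty (Fin d) := inferInstance
    infer_instance
  obtain ⟨e, he⟩ := exists_ne (0 : Eu d)
  have h1 : ApproximatesLinearOn (fun x => x + Φ x • e) (ContinuousLinearMap.id ℝ (Eu d)) {x | Φ x = 0} 0 := by
    intro x hx y hy
    simp only [mem_setOf_eq] at hx hy
    simp [hx, hy]
  have h2 := h1.norm_fderiv_sub_le volume hs (fun x => ContinuousLinearMap.id ℝ (Eu d) + (innerSL ℝ (g x)).smulRight e)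
    (fun x _ => ((hasFDerivAt_id x).add ((der x).smul_const e)).hasFDerivWithinAt)
  rw [ae_restrict_iff' hs, ae_iff] at h2
  refine measure_mono_null (fun x hx => ?_) h2
  simp only [mem_setOf_eq] at hx ⊢
  intro h
  have h3 := h hx
  rw [add_sub_cancel_left] at h3
  have h4 : (innerSL ℝ (g x)).smulRight e = 0 := nnnorm_eq_zero.1 (nonpos_iff_eq_zero.1 h3)
  have h5 := congrArg (fun L : Eu d →L[ℝ] Eu d => L (g x)) h4
  simp only [ContinuousLinearMap.smulRight_apply, innerSL_apply_apply, ContinuousLinearMap.zero_apply, smul_eq_zero,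
    he, or_false, inner_self_eq_zero] at h5
  exact hg x hx h5

lemma ulim {E : Type*} [NormedAddCommGroup E] [ProperSpace E] (u : ℕ → E) (hb : ∃ C, ∀ᶠ n in atTop, ‖u n‖ ≤ C) :
    ∃ l, Tendsto u (hyperfilter ℕ) (𝓝 l) := by
  obtain ⟨C, hC⟩ := hb
  have h1 : ((hyperfilter ℕ).map u : Filter E) ≤ 𝓟 (closedBall 0 C) := by
    rw [le_principal_iff]
    have := hC.filter_mono Nat.hyperfilter_le_atTop
    show ∀ᶠ n in (hyperfilter ℕ : Filter ℕ), u n ∈ closedBall (0 : E) C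
    simpa using this
  obtain ⟨l, -, hl⟩ := (isCompact_closedBall (0 : E) C).ultrafilter_le_nhds _ h1
  exact ⟨l, hl⟩

end AggPatch

namespace AggPatch
open Filter Topology
variable {d : ℕ} {γ : ℝ}
variable {K : ℕ → Con} {ε0 : ℝ} {Φ0 : Eu d → ℝ} {ε τ : ℕ → ℝ}

structure Flow (K : ℕ → Con) (γ ε0 : ℝ) (Φ0 : Eu d → ℝ) (ε τ : ℕ → ℝ) (X : Eu d → ℝ → Eu d) : Prop where
  Z : Appr K γ ε0 Φ0 ε τ
  lim : ∀ α s, Tendsto (fun p : ℕ × (Eu d × ℝ) => Xn Φ0 (ε p.1) (τ p.1) p.2.1 p.2.2) (atTop ×ˢ 𝓝 (α, s)) (𝓝 (X α s))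

variable {X : Eu d → ℝ → Eu d}

lemma Flow.lim' (W : Flow K γ ε0 Φ0 ε τ X) {ι : Type*} {l : Filter ι} {n : ι → ℕ} {a : ι → Eu d} {σ : ι → ℝ}
    {α : Eu d} {s : ℝ} (hn : Tendsto n l atTop) (ha : Tendsto a l (𝓝 α)) (hσ : Tendsto σ l (𝓝 s)) :
    Tendsto (fun i => Xn Φ0 (ε (n i)) (τ (n i)) (a i) (σ i)) l (𝓝 (X α s)) :=
  (W.lim α s).comp (hn.prodMk (ha.prodMk_nhds hσ))

lemma Flow.ptw (W : Flow K γ ε0 Φ0 ε τ X) (α : Eu d) (s : ℝ) :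
    Tendsto (fun n => Xn Φ0 (ε n) (τ n) α s) atTop (𝓝 (X α s)) :=
  W.lim' tendsto_id tendsto_const_nhds tendsto_const_nhds

lemma Flow.zero (W : Flow K γ ε0 Φ0 ε τ X) (α : Eu d) : X α 0 = α := by
  refine tendsto_nhds_unique (W.ptw α 0) ?_
  have : ∀ n, Xn Φ0 (ε n) (τ n) α 0 = α := fun n => by simp [Xn, kk, sq]
  simp [this]

lemma Flow.lip1 (W : Flow K γ ε0 Φ0 ε τ X) {S : ℕ} {s : ℝ} (hs : s ≤ S) (α β : Eu d) :
    ‖α - β‖ ≤ (K S).L * ‖X α s - X β s‖ := by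
  refine ge_of_tendsto (((W.ptw α s).sub (W.ptw β s)).norm.const_mul (K S).L) ?_
  filter_upwards [eventually_ge_atTop S] with n hn
  obtain ⟨g, G⟩ := W.Z.good' hn hs
  exact G.lip1 α β

lemma Flow.lip2 (W : Flow K γ ε0 Φ0 ε τ X) {S : ℕ} {s : ℝ} (hs : s ≤ S) (α β : Eu d) :
    ‖X α s - X β s‖ ≤ (K S).L * ‖α - β‖ := by
  refine le_of_tendsto ((W.ptw α s).sub (W.ptw β s)).norm ?_
  filter_upwards [eventually_ge_atTop S] with n hn
  obtain ⟨g, G⟩ := W.Z.good' hn hs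
  exact G.lip2 α β

lemma Flow.surj (W : Flow K γ ε0 Φ0 ε τ X) (s : ℝ) : Function.Surjective (fun α => X α s) := by
  intro x
  obtain ⟨S, hS⟩ := exists_nat_ge s
  have h1 : ∀ n, ∃ a, S ≤ n → Xn Φ0 (ε n) (τ n) a s = x := by
    intro n
    by_cases hn : S ≤ n
    · obtain ⟨g, G⟩ := W.Z.good' hn hS
      obtain ⟨a, ha⟩ := G.bij.2 x
      exact ⟨a, fun _ => ha⟩
    · exact ⟨0, fun h => (hn h).elim⟩
  choose a ha using h1
  have hb : ∃ C, ∀ᶠ n in atTop, ‖a n‖ ≤ C := by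
    have t := ((tendsto_const_nhds (x := x)).sub (W.ptw 0 s)).norm.const_mul (K S).L
    refine ⟨(K S).L * ‖x - X 0 s‖ + 1, ?_⟩
    filter_upwards [eventually_ge_atTop S, t.eventually_le_const (lt_add_one _)] with n hn h2
    obtain ⟨g, G⟩ := W.Z.good' hn hS
    have := G.lip1 (a n) 0
    rw [ha n hn, sub_zero] at this
    exact this.trans h2
  obtain ⟨α, hα⟩ := ulim a hb
  refine ⟨α, tendsto_nhds_unique (W.lim' (n := id) (σ := fun _ => s) Nat.hyperfilter_le_atTop hα tendsto_const_nhds) ?_⟩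
  refine tendsto_const_nhds.congr' ?_
  filter_upwards [(eventually_ge_atTop S).filter_mono Nat.hyperfilter_le_atTop] with n hn
  exact (ha n hn).symm

lemma Flow.inj (W : Flow K γ ε0 Φ0 ε τ X) (s : ℝ) : Function.Injective (fun α => X α s) := by
  intro α β h
  obtain ⟨S, hS⟩ := exists_nat_ge s
  have := W.lip1 hS α β
  dsimp only at h
  rw [h, sub_self, norm_zero, mul_zero] at this
  exact sub_eq_zero.1 (norm_le_zero_iff.1 this)

/-- The flow homeomorphism. -/
noncomputable def Flow.homeo (W : Flow K γ ε0 Φ0 ε τ X) (s : ℝ) : Eu d ≃ₜ Eu d where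
  toEquiv := Equiv.ofBijective (fun α => X α s) ⟨W.inj s, W.surj s⟩
  continuous_toFun := by
    obtain ⟨S, hS⟩ := exists_nat_ge s
    refine (LipschitzWith.of_dist_le_mul (K := Real.toNNReal (K S).L) fun α β => ?_).continuous
    rw [dist_eq_norm, dist_eq_norm, Real.coe_toNNReal _ (K S).hL.le]
    exact W.lip2 hS α β
  continuous_invFun := by
    obtain ⟨S, hS⟩ := exists_nat_ge s
    refine (LipschitzWith.of_dist_le_mul (K := Real.toNNReal (K S).L) fun x y => ?_).continuous
    obtain ⟨α, rfl⟩ := (Equiv.ofBijective (fun α => X α s) ⟨W.inj s, W.surj s⟩).surjective x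
    obtain ⟨β, rfl⟩ := (Equiv.ofBijective (fun α => X α s) ⟨W.inj s, W.surj s⟩).surjective y
    rw [dist_eq_norm, dist_eq_norm, Real.coe_toNNReal _ (K S).hL.le]
    have := W.lip1 hS α β
    simp only [Equiv.invFun_as_coe, Equiv.symm_apply_apply]
    exact this

lemma Flow.homeo_apply (W : Flow K γ ε0 Φ0 ε τ X) (s : ℝ) (α : Eu d) : W.homeo s α = X α s := rfl

/-- The limit defining function. -/
lemma Flow.limit_def (W : Flow K γ ε0 Φ0 ε τ X) (hγ : 0 < γ) (he0 : 0 < ε0) (s : ℝ) {α0 : Eu d} (hα0 : Φ0 α0 ≤ 0) :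
    ∃ (Y : ℝ) (Ψ : Eu d → ℝ) (G : Eu d → Eu d), (∀ x, HasFDerivAt Ψ (innerSL ℝ (G x)) x) ∧
      (∀ x x', ‖G x - G x'‖ ≤ Y * ‖x - x'‖ ^ γ) ∧ (∀ α, Φ0 α = 0 → G (X α s) ≠ 0) ∧
      (∀ α, Φ0 α < 0 → Ψ (X α s) < 0) ∧ (∀ α, Φ0 α = 0 → Ψ (X α s) = 0) ∧ (∀ α, 0 < Φ0 α → 0 < Ψ (X α s)) ∧
      (∃ R, ∀ α, Φ0 α ≤ 0 → X α s ∈ closedBall (0 : Eu d) R) := by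
  obtain ⟨S, hS⟩ := exists_nat_ge s
  have h1 : ∀ n, ∃ g, S ≤ n → Good (K S) γ ε0 Φ0 (ε n) (Fn Φ0 (ε n) (τ n) s) (fun α => Xn Φ0 (ε n) (τ n) α s) g := by
    intro n
    by_cases hn : S ≤ n
    · obtain ⟨g, G⟩ := W.Z.good' hn hS
      exact ⟨g, fun _ => G⟩
    · exact ⟨0, fun h => (hn h).elim⟩
  choose g hg using h1
  set F : ℕ → Eu d → ℝ := fun n => Fn Φ0 (ε n) (τ n) s with hF
  have hY := (K S).hY
  have hM := (K S).hM
  have hR := (K S).hR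
  have gb : ∀ x n, S ≤ n → ‖g n x‖ ≤ (K S).M + (K S).Y * ‖x‖ ^ γ := by
    intro x n hn
    have e1 := (hg n hn).up 0 (mem_closedBall_self hR.le)
    have e2 := (hg n hn).hol x 0
    have e3 := norm_sub_norm_le (g n x) (g n 0)
    rw [sub_zero] at e2
    linarith
  have tay : ∀ n, S ≤ n → ∀ x y, |F n y - F n x - ⟪g n x, y - x⟫| ≤ (K S).Y * ‖y - x‖ ^ γ * ‖y - x‖ := fun n hn =>
    taylor hγ hY.le (hg n hn).der (hg n hn).hol
  have tay' : ∀ n, S ≤ n → ∀ x y, |F n y - F n x| ≤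
      ((K S).M + (K S).Y * ‖x‖ ^ γ + (K S).Y * ‖y - x‖ ^ γ) * ‖y - x‖ := by
    intro n hn x y
    have e1 := tay n hn x y
    have e2 := abs_real_inner_le_norm (g n x) (y - x)
    have e3 := mul_le_mul_of_nonneg_right (gb x n hn) (norm_nonneg (y - x))
    have e4 := abs_add_le (F n y - F n x - ⟪g n x, y - x⟫) ⟪g n x, y - x⟫
    rw [sub_add_cancel] at e4
    linarith
  have hpow : Continuous fun t : ℝ => t ^ γ := Real.continuous_rpow_const hγ.le
  -- convergence of values
  have Fdiff : ∀ α, Tendsto (fun n => F n (Xn Φ0 (ε n) (τ n) α s) - F n (X α s)) atTop (𝓝 0) := by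
    intro α
    have c1 : Tendsto (fun n => ‖Xn Φ0 (ε n) (τ n) α s - X α s‖) atTop (𝓝 0) := by
      simpa using ((W.ptw α s).sub_const (X α s)).norm
    have c2 : Tendsto (fun n => ((K S).M + (K S).Y * ‖X α s‖ ^ γ + (K S).Y * ‖Xn Φ0 (ε n) (τ n) α s - X α s‖ ^ γ) *
        ‖Xn Φ0 (ε n) (τ n) α s - X α s‖) atTop (𝓝 0) := by
      have := ((((hpow.tendsto 0).comp c1).const_mul (K S).Y).const_add ((K S).M + (K S).Y * ‖X α s‖ ^ γ)).mul c1
      rw [mul_zero] at this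
      exact this
    refine squeeze_zero_norm' ?_ c2
    filter_upwards [eventually_ge_atTop S] with n hn
    exact tay' n hn _ _
  have gdiff : ∀ α, Tendsto (fun n => g n (Xn Φ0 (ε n) (τ n) α s) - g n (X α s)) atTop (𝓝 0) := by
    intro α
    have c1 : Tendsto (fun n => ‖Xn Φ0 (ε n) (τ n) α s - X α s‖) atTop (𝓝 0) := by
      simpa using ((W.ptw α s).sub_const (X α s)).norm
    have c2 : Tendsto (fun n => (K S).Y * ‖Xn Φ0 (ε n) (τ n) α s - X α s‖ ^ γ) atTop (𝓝 0) := by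
      have := ((hpow.tendsto 0).comp c1).const_mul (K S).Y
      rw [Real.zero_rpow hγ.ne', mul_zero] at this
      exact this
    refine squeeze_zero_norm' ?_ c2
    filter_upwards [eventually_ge_atTop S] with n hn
    exact (hg n hn).hol _ _
  have Fb : ∀ x, ∃ C, ∀ᶠ n in atTop, ‖F n x‖ ≤ C := by
    intro x
    set x0 := X α0 s
    refine ⟨((K S).M + (K S).Y * ‖x0‖ ^ γ + (K S).Y * ‖x - x0‖ ^ γ) * ‖x - x0‖ + 1 +
      (|Φ0 α0| + |(K S).c * Φ0 α0| + 1), ?_⟩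
    have t1 : Tendsto (fun n => (K S).c * Φ0 α0 + (K S).B * ε n) atTop (𝓝 ((K S).c * Φ0 α0 + (K S).B * 0)) :=
      (W.Z.et.const_mul _).const_add _
    filter_upwards [eventually_ge_atTop S, (Fdiff α0).norm.eventually_le_const (by rw [norm_zero]; exact one_pos),
      t1.eventually_le_const (show _ < (K S).c * Φ0 α0 + 1 by linarith)] with n hn e1 e2
    have e3 := tay' n hn x0 x
    have e4 := (hg n hn).phi1 α0
    have e5 := (hg n hn).phi2 α0 hα0
    rw [Real.norm_eq_abs] at e1 ⊢
    have e6 : |F n (Xn Φ0 (ε n) (τ n) α0 s)| ≤ |Φ0 α0| + |(K S).c * Φ0 α0| + 1 := by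
      rw [abs_le]
      have := neg_abs_le (Φ0 α0)
      have := le_abs_self ((K S).c * Φ0 α0)
      have := abs_nonneg (Φ0 α0)
      have := abs_nonneg ((K S).c * Φ0 α0)
      constructor <;> linarith
    have e7 : F n x = (F n x - F n x0) - (F n (Xn Φ0 (ε n) (τ n) α0 s) - F n x0) + F n (Xn Φ0 (ε n) (τ n) α0 s) := by ring
    rw [e7]
    refine (abs_add_le _ _).trans (add_le_add ((abs_sub _ _).trans (add_le_add e3 e1)) e6)
  choose Ψ hΨ using fun x => ulim (fun n => F n x) (Fb x)
  choose G hG using fun x => ulim (fun n => g n x) ⟨_, eventually_atTop.2 ⟨S, gb x⟩⟩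
  have ev : ∀ᶠ n in (hyperfilter ℕ : Filter ℕ), S ≤ n :=
    (eventually_ge_atTop S).filter_mono Nat.hyperfilter_le_atTop
  have PX : ∀ α, Tendsto (fun n => F n (Xn Φ0 (ε n) (τ n) α s)) (hyperfilter ℕ) (𝓝 (Ψ (X α s))) := by
    intro α
    have := ((Fdiff α).mono_left Nat.hyperfilter_le_atTop).add (hΨ (X α s))
    simpa using this
  have GX : ∀ α, Tendsto (fun n => g n (Xn Φ0 (ε n) (τ n) α s)) (hyperfilter ℕ) (𝓝 (G (X α s))) := by
    intro α
    have := ((gdiff α).mono_left Nat.hyperfilter_le_atTop).add (hG (X α s))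
    simpa using this
  have p1 : ∀ α, Φ0 α ≤ Ψ (X α s) := fun α => ge_of_tendsto (PX α) (ev.mono fun n hn => (hg n hn).phi1 α)
  have p2 : ∀ α, Φ0 α ≤ 0 → Ψ (X α s) ≤ (K S).c * Φ0 α := by
    intro α hα
    have t1 : Tendsto (fun n => (K S).c * Φ0 α + (K S).B * ε n) (hyperfilter ℕ) (𝓝 ((K S).c * Φ0 α + (K S).B * 0)) :=
      (((W.Z.et.const_mul _).const_add _)).mono_left Nat.hyperfilter_le_atTop
    rw [mul_zero, add_zero] at t1
    exact le_of_tendsto_of_tendsto (PX α) t1 (ev.mono fun n hn => (hg n hn).phi2 α hα)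
  have hc := (K S).hc
  refine ⟨(K S).Y, Ψ, G, fun x => der_of_taylor hγ (Y := (K S).Y) x fun y => ?_, fun x x' => ?_, fun α hα => ?_,
    fun α hα => ?_, fun α hα => ?_, fun α hα => ?_, (K S).R, fun α hα => ?_⟩
  · have t := (((hΨ y).sub (hΨ x)).sub ((hG x).inner (tendsto_const_nhds (x := y - x)))).abs
    exact le_of_tendsto t (ev.mono fun n hn => tay n hn x y)
  · exact le_of_tendsto ((hG x).sub (hG x')).norm (ev.mono fun n hn => (hg n hn).hol x x')
  · have : (K S).m ≤ ‖G (X α s)‖ :=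
      ge_of_tendsto (GX α).norm (ev.mono fun n hn => (hg n hn).low α (by linarith) hα.le)
    exact norm_pos_iff.1 ((K S).hm.trans_le this)
  · exact (p2 α hα.le).trans_lt (mul_neg_of_pos_of_neg hc hα)
  · exact le_antisymm ((p2 α hα.le).trans (by rw [hα, mul_zero])) (hα ▸ p1 α)
  · exact hα.trans_le (p1 α)
  · exact isClosed_closedBall.mem_of_tendsto (W.ptw α s)
      ((eventually_ge_atTop S).mono fun n hn => (hg n hn).rad α hα)

end AggPatch

namespace AggPatch
open Filter Topology
variable {d : ℕ} {γ : ℝ}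
variable {K : ℕ → Con} {ε0 : ℝ} {Φ0 : Eu d → ℝ} {ε τ : ℕ → ℝ}
variable {X : Eu d → ℝ → Eu d}

lemma Flow.ev (W : Flow K γ ε0 Φ0 ε τ X) {ι : Type*} {l : Filter ι} {n : ι → ℕ} {σ : ι → ℝ}
    {s : ℝ} (hn : Tendsto n l atTop) (hσ : Tendsto σ l (𝓝 s)) : ∃ S : ℕ, s ≤ S ∧ ∀ᶠ i in l, ∃ g,
    Good (K S) γ ε0 Φ0 (ε (n i)) (Fn Φ0 (ε (n i)) (τ (n i)) (σ i)) (fun α => Xn Φ0 (ε (n i)) (τ (n i)) α (σ i)) g := by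
  obtain ⟨S, hS⟩ := exists_nat_gt s
  refine ⟨S, hS.le, ?_⟩
  filter_upwards [hn.eventually (eventually_ge_atTop S), hσ.eventually_lt_const hS] with i h1 h2
  exact W.Z.good' h1 h2.le

lemma Flow.rho_lim (W : Flow K γ ε0 Φ0 ε τ X) (hc : Continuous Φ0) {ι : Type*} {l : Filter ι} {n : ι → ℕ} {σ : ι → ℝ}
    {s : ℝ} (hn : Tendsto n l atTop) (hσ : Tendsto σ l (𝓝 s)) {y : ι → Eu d} {β : Eu d} (hy : Tendsto y l (𝓝 (X β s)))
    (hβ : Φ0 β ≠ 0) :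
    ∀ᶠ i in l, th (ε (n i)) (Fn Φ0 (ε (n i)) (τ (n i)) (σ i) (y i)) = if Φ0 β < 0 then 1 else 0 := by
  obtain ⟨S, hS, hev⟩ := W.ev hn hσ
  have h1 : ∀ i, ∃ a, (∃ g, Good (K S) γ ε0 Φ0 (ε (n i)) (Fn Φ0 (ε (n i)) (τ (n i)) (σ i))
      (fun α => Xn Φ0 (ε (n i)) (τ (n i)) α (σ i)) g) → Xn Φ0 (ε (n i)) (τ (n i)) a (σ i) = y i := by
    intro i
    by_cases h : ∃ g, Good (K S) γ ε0 Φ0 (ε (n i)) (Fn Φ0 (ε (n i)) (τ (n i)) (σ i))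
      (fun α => Xn Φ0 (ε (n i)) (τ (n i)) α (σ i)) g
    · obtain ⟨g, G⟩ := h
      obtain ⟨a, ha⟩ := G.bij.2 (y i)
      exact ⟨a, fun _ => ha⟩
    · exact ⟨0, fun h' => (h h').elim⟩
  choose a ha using h1
  have hX := W.lim' hn (tendsto_const_nhds (x := β)) hσ
  have hal : Tendsto a l (𝓝 β) := by
    rw [tendsto_iff_norm_sub_tendsto_zero]
    have t : Tendsto (fun i => (K S).L * ‖y i - Xn Φ0 (ε (n i)) (τ (n i)) β (σ i)‖) l (𝓝 0) := by
      simpa using ((hy.sub hX).norm).const_mul (K S).L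
    refine squeeze_zero' (Eventually.of_forall fun _ => norm_nonneg _) ?_ t
    filter_upwards [hev] with i hi
    have e := ha i hi
    obtain ⟨g, G⟩ := hi
    rw [← e]
    exact G.lip1 (a i) β
  have hΦ : Tendsto (fun i => Φ0 (a i)) l (𝓝 (Φ0 β)) := (hc.tendsto β).comp hal
  have hε : Tendsto (fun i => ε (n i)) l (𝓝 0) := W.Z.et.comp hn
  rcases lt_or_gt_of_ne hβ with h | h
  · simp only [if_pos h]
    have t : Tendsto (fun i => (K S).c * Φ0 (a i) + (K S).B * ε (n i) + ε (n i)) l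
        (𝓝 ((K S).c * Φ0 β + (K S).B * 0 + 0)) := ((hΦ.const_mul _).add (hε.const_mul _)).add hε
    have hneg : (K S).c * Φ0 β + (K S).B * 0 + 0 < 0 := by
      have := mul_neg_of_pos_of_neg (K S).hc h
      linarith
    filter_upwards [hev, t.eventually_lt_const hneg, hΦ.eventually_lt_const h] with i hi e1 e2
    have e := ha i hi
    obtain ⟨g, G⟩ := hi
    have := G.phi2 (a i) e2.le
    rw [e] at this
    exact th_one (W.Z.e0 _) (by linarith)
  · simp only [if_neg (not_lt.2 h.le)]
    filter_upwards [hev, hΦ.eventually_const_lt h] with i hi e2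
    have e := ha i hi
    obtain ⟨g, G⟩ := hi
    have := G.phi1 (a i)
    rw [e] at this
    exact th_pos (W.Z.e0 _) (by linarith)

lemma Kr_lim {z : Eu d} (hz : z ≠ 0) : Tendsto (fun r => Kr r z) (𝓝 0) (𝓝 (Kr 0 z)) := by
  have h : ContinuousAt (fun r : ℝ => ((RR r z) ^ d)⁻¹ • z) 0 := by
    refine ContinuousAt.smul (f := fun r : ℝ => ((RR r z) ^ d)⁻¹) (g := fun _ => z) (ContinuousAt.inv₀ ?_ ?_) continuousAt_const
    · have h1 : Continuous (fun r : ℝ => RR r z) := by unfold RR; fun_prop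
      exact (h1.pow d).continuousAt
    · rw [RR_zero]; exact pow_ne_zero _ (norm_ne_zero_iff.2 hz)
  exact h

lemma dom_int (hd : 2 ≤ d) {R : ℝ} (hR : 0 < R) :
    Integrable (fun z : Eu d => (closedBall (0 : Eu d) R).indicator (fun z => ‖z‖ ^ ((1:ℝ) - d)) z) := by
  have hm : AEStronglyMeasurable (fun z : Eu d => (closedBall (0 : Eu d) R).indicator (fun z => ‖z‖ ^ ((1:ℝ) - d)) z) :=
    ((measurable_norm.pow_const _).indicator isClosed_closedBall.measurableSet).aestronglyMeasurable
  refine wt_integrable hd (p := 1) (q := 1) (l := 2 * R) (C := 2 * R) one_pos one_pos (by linarith) 0 hm ?_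
  intro y hy
  have h0 : 0 < ‖y‖ := norm_pos_iff.2 hy
  by_cases h : y ∈ closedBall (0 : Eu d) R
  · rw [indicator_of_mem h, Real.norm_of_nonneg (by positivity), zero_sub, wt, wtf, norm_neg]
    have : ‖y‖ < 2 * R := by
      have := mem_closedBall_zero_iff.1 h; linarith
    simp only [if_pos this.le]
    rw [Real.rpow_neg_one, mul_left_comm, mul_inv_cancel₀ (by linarith), mul_one]
  · rw [indicator_of_notMem h, norm_zero]
    exact mul_nonneg (by linarith) (wt_nonneg (by linarith) _)

lemma dct (hd : 2 ≤ d) {ι : Type*} {l : Filter ι} [l.IsCountablyGenerated] {e : ι → ℝ} {rp : ι → Eu d → ℝ}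
    {xp : ι → Eu d} {x : Eu d} {D : Set (Eu d)} (hDm : MeasurableSet D) {R : ℝ} (hR : 0 < R)
    (he : Tendsto e l (𝓝 0)) (he0 : ∀ i, 0 < e i)
    (hev : ∀ᶠ i in l, Continuous (rp i) ∧ (∀ y, 0 ≤ rp i y) ∧ (∀ y, rp i y ≤ 1) ∧
      ∀ y, y ∉ closedBall (0 : Eu d) R → rp i y = 0)
    (hx : Tendsto xp l (𝓝 x))
    (hl : ∀ᵐ y : Eu d, ∀ yp : ι → Eu d, Tendsto yp l (𝓝 y) →
      Tendsto (fun i => rp i (yp i)) l (𝓝 (D.indicator (fun _ => (1:ℝ)) y))) :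
    Tendsto (fun i => vel (e i) (rp i) (xp i)) l (𝓝 (∫ y in D, Kr 0 (x - y))) := by
  have e1 : ∀ i, vel (e i) (rp i) (xp i) = ∫ z, rp i (xp i - z) • Kr (e i) z := by
    intro p
    rw [vel, ← integral_sub_left_eq_self _ volume (xp p)]
    simp
  have e2 : ∫ y in D, Kr 0 (x - y) = ∫ z, D.indicator (fun _ => (1:ℝ)) (x - z) • Kr 0 z := by
    rw [← integral_indicator hDm, ← integral_sub_left_eq_self _ volume x]
    congr 1
    ext1 z
    by_cases h : x - z ∈ D
    · simp [h]
    · simp [h]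
  simp only [e1]
  rw [e2]
  set R' := R + (‖x‖ + 1) with hR'
  have hR'0 : 0 < R' := by positivity
  refine tendsto_integral_filter_of_dominated_convergence
    (fun z : Eu d => (closedBall (0 : Eu d) R').indicator (fun z => ‖z‖ ^ ((1:ℝ) - d)) z) ?_ ?_ (dom_int hd hR'0) ?_
  · filter_upwards [hev] with p hp
    exact ((hp.1.comp (continuous_const.sub continuous_id)).smul (Kr_continuous (he0 _))).aestronglyMeasurable
  · filter_upwards [hev, hx.norm.eventually_le_const (lt_add_one _)] with p hp hxn
    filter_upwards [ae_ne hd 0] with z hz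
    by_cases h : z ∈ closedBall (0 : Eu d) R'
    · rw [indicator_of_mem h, norm_smul, Real.norm_of_nonneg (hp.2.1 _)]
      calc _ ≤ 1 * ‖Kr (e p) z‖ := mul_le_mul_of_nonneg_right (hp.2.2.1 _) (norm_nonneg _)
        _ ≤ _ := by rw [one_mul]; exact Kr_norm_le' hz
    · rw [indicator_of_notMem h]
      have : rp p (xp p - z) = 0 := by
        refine hp.2.2.2 _ fun h1 => h ?_
        rw [mem_closedBall_zero_iff] at h1 ⊢
        have h2 := norm_sub_le (xp p) (xp p - z)
        rw [sub_sub_cancel] at h2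
        linarith
      rw [this, zero_smul, norm_zero]
  · have q1 := (Measure.measurePreserving_sub_left volume x).quasiMeasurePreserving.ae hl
    filter_upwards [q1, ae_ne hd 0] with z hz1 hz2
    exact (hz1 _ (hx.sub_const z)).smul ((Kr_lim hz2).comp he)

lemma Flow.vel_lim (W : Flow K γ ε0 Φ0 ε τ X) (hd : 2 ≤ d) (hc : Continuous Φ0) (s : ℝ)
    (hnull : ∀ᵐ y : Eu d, ∀ β, X β s = y → Φ0 β ≠ 0) (α : Eu d) :
    Tendsto (fun p : ℕ × ℝ => vel (ε p.1) (fun x => th (ε p.1) (Fn Φ0 (ε p.1) (τ p.1) p.2 x)) (Xn Φ0 (ε p.1) (τ p.1) α p.2))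
      (atTop ×ˢ 𝓝 s) (𝓝 (∫ y in (fun α => X α s) '' {β | Φ0 β < 0}, Kr 0 (X α s - y))) := by
  have hn : Tendsto (Prod.fst : ℕ × ℝ → ℕ) (atTop ×ˢ 𝓝 s) atTop := tendsto_fst
  have hσ : Tendsto (Prod.snd : ℕ × ℝ → ℝ) (atTop ×ˢ 𝓝 s) (𝓝 s) := tendsto_snd
  obtain ⟨S, hS, hev⟩ := W.ev hn hσ
  refine dct (e := fun p : ℕ × ℝ => ε p.1) (rp := fun p x => th (ε p.1) (Fn Φ0 (ε p.1) (τ p.1) p.2 x))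
    (xp := fun p => Xn Φ0 (ε p.1) (τ p.1) α p.2) hd ?_ (K S).hR (W.Z.et.comp hn) (fun p => W.Z.e0 _) ?_
    (W.lim' hn (tendsto_const_nhds (x := α)) hσ) ?_
  · have : IsOpen ((fun α => X α s) '' {β | Φ0 β < 0}) := (W.homeo s).isOpenMap _ (isOpen_lt hc continuous_const)
    exact this.measurableSet
  · filter_upwards [hev] with p hp
    obtain ⟨g, G⟩ := hp
    refine ⟨(th_cont _).comp (continuous_iff_continuousAt.2 fun x => (G.der x).continuousAt), fun _ => th_nn _ _,
      fun _ => th_le1 _ _, fun y hy => th_pos (W.Z.e0 _) ?_⟩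
    by_contra hneg
    push Not at hneg
    obtain ⟨a, rfl⟩ := G.bij.2 y
    exact hy (G.rad a ((G.phi1 a).trans hneg.le))
  · filter_upwards [hnull] with y hy yp hyp
    obtain ⟨β, rfl⟩ := W.surj s y
    have h1 := hy β rfl
    have h3 := W.rho_lim hc hn hσ hyp h1
    have h4 : ((fun α => X α s) '' {β | Φ0 β < 0}).indicator (fun _ => (1:ℝ)) (X β s) = if Φ0 β < 0 then 1 else 0 := by
      by_cases h : Φ0 β < 0
      · rw [if_pos h, indicator_of_mem]
        exact ⟨β, h, rfl⟩
      · rw [if_neg h, indicator_of_notMem]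
        rintro ⟨β', h', h''⟩
        rw [W.inj s h''] at h'
        exact h h'
    rw [h4]
    refine tendsto_const_nhds.congr' ?_
    filter_upwards [h3] with p hp
    exact hp.symm

end AggPatch

namespace AggPatch
open Filter Topology
variable {d : ℕ} {γ : ℝ}
variable {K : ℕ → Con} {ε0 : ℝ} {Φ0 : Eu d → ℝ} {ε τ : ℕ → ℝ}
variable {X : Eu d → ℝ → Eu d}

lemma Flow.hnull (W : Flow K γ ε0 Φ0 ε τ X) (hd : 2 ≤ d) (hγ : 0 < γ) (he0 : 0 < ε0) (s : ℝ) {α0 : Eu d}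
    (hα0 : Φ0 α0 ≤ 0) : ∀ᵐ y : Eu d, ∀ β, X β s = y → Φ0 β ≠ 0 := by
  obtain ⟨Y, Ψ, G, der, hol, hG, hneg, hz, hpos, -⟩ := W.limit_def hγ he0 s hα0
  have hN : volume {x | Ψ x = 0} = 0 := by
    refine null_set hd der ?_
    intro x hx
    obtain ⟨β, rfl⟩ := W.surj s x
    rcases lt_trichotomy (Φ0 β) 0 with h | h | h
    · exact absurd hx (hneg β h).ne
    · exact hG β h
    · exact absurd hx (hpos β h).ne'
  have : ∀ᵐ y : Eu d, ¬ (Ψ y = 0) := by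
    rw [ae_iff]
    simpa using hN
  filter_upwards [this] with y hy β hβ h0
  exact hy (hβ ▸ hz β h0)

lemma kk_mul {t : ℝ} (ht : 0 < t) (k : ℕ) : kk t ((k : ℝ) * t) = k := by
  unfold kk
  rw [mul_div_cancel_right₀ _ ht.ne', Nat.floor_natCast]

lemma Flow.incr (W : Flow K γ ε0 Φ0 ε τ X) {α w : Eu d} {s : ℝ} (hs : 0 ≤ s)
    (hv : Tendsto (fun p : ℕ × ℝ => vel (ε p.1) (fun x => th (ε p.1) (Fn Φ0 (ε p.1) (τ p.1) p.2 x))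
      (Xn Φ0 (ε p.1) (τ p.1) α p.2)) (atTop ×ˢ 𝓝 s) (𝓝 w)) {η : ℝ} (hη : 0 < η) :
    ∃ δ > 0, ∀ lo hi : ℝ, 0 ≤ lo → lo ≤ hi → s - δ < lo → hi < s + δ →
      ‖X α hi - X α lo + (hi - lo) • w‖ ≤ (hi - lo) * η := by
  have h1 := hv.eventually (Metric.closedBall_mem_nhds w hη)
  rw [(atTop_basis.prod (Metric.nhds_basis_ball (x := s))).eventually_iff] at h1
  obtain ⟨⟨N, δ⟩, ⟨-, hδ⟩, H⟩ := h1
  simp only at hδ H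
  refine ⟨δ, hδ, ?_⟩
  intro lo hi hlo hle h2 h3
  have hj : Tendsto (fun n => ((kk (τ n) hi - kk (τ n) lo : ℕ) : ℝ) * τ n) atTop (𝓝 (hi - lo)) := by
    have u : Tendsto (fun n => (hi - lo) + τ n) atTop (𝓝 (hi - lo)) := by
      simpa using (tendsto_const_nhds (x := hi - lo)).add W.Z.tt
    have l : Tendsto (fun n => (hi - lo) - τ n) atTop (𝓝 (hi - lo)) := by
      simpa using (tendsto_const_nhds (x := hi - lo)).sub W.Z.tt
    refine tendsto_of_tendsto_of_tendsto_of_le_of_le l u (fun n => ?_) (fun n => ?_)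
    · have a1 := kk_gt (W.Z.t0 n) (s := hi)
      have a2 := kk_le (W.Z.t0 n) (s := lo)
      rw [max_eq_left hlo] at a2
      have a3 := (kk_diff (W.Z.t0 n) hle).1
      rw [Nat.cast_sub a3]
      linarith
    · exact (kk_diff (W.Z.t0 n) hle).2
  have hL := ((((W.ptw α hi).sub (W.ptw α lo)).add (hj.smul_const w))).norm
  refine le_of_tendsto_of_tendsto hL (hj.mul_const η) ?_
  have ht : ∀ᶠ n in atTop, τ n < lo - (s - δ) := W.Z.tt.eventually_lt_const (by linarith)
  filter_upwards [eventually_ge_atTop N, ht] with n hn htn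
  have t0 := W.Z.t0 n
  have a3 := (kk_diff t0 hle).1
  have key := sq_step (K := K 0) (γ := γ) (ε0 := ε0) (ε := ε n) (τ := τ n) (Φ0 := Φ0) t0 (S := -1)
    (fun k hk => by
      exfalso
      have : 0 ≤ (k : ℝ) * τ n := by positivity
      linarith) α (kk (τ n) lo) (kk (τ n) hi - kk (τ n) lo) w η (by
      intro i hi'
      have b1 := H (x := (n, ((kk (τ n) lo + i : ℕ) : ℝ) * τ n)) (by
        refine ⟨hn, ?_⟩
        rw [Real.ball_eq_Ioo]
        have c1 := kk_gt t0 (s := lo)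
        have c2 := kk_le t0 (s := hi)
        rw [max_eq_left (hlo.trans hle)] at c2
        have c3 : ((kk (τ n) lo + i : ℕ) : ℝ) * τ n ≤ kk (τ n) hi * τ n := by
          have : kk (τ n) lo + i ≤ kk (τ n) hi := by omega
          gcongr
        have c4 : (kk (τ n) lo : ℝ) * τ n ≤ ((kk (τ n) lo + i : ℕ) : ℝ) * τ n := by
          gcongr
          omega
        constructor
        · show s - δ < _
          linarith
        · show _ < s + δ
          linarith)
      simp only [mem_closedBall, dist_eq_norm, Fn, Xn, kk_mul t0] at b1
      exact b1)
  rw [Nat.add_sub_cancel' a3] at key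
  exact key

lemma Flow.deriv (W : Flow K γ ε0 Φ0 ε τ X) {α w : Eu d} {s : ℝ} (hs : 0 ≤ s)
    (hv : Tendsto (fun p : ℕ × ℝ => vel (ε p.1) (fun x => th (ε p.1) (Fn Φ0 (ε p.1) (τ p.1) p.2 x))
      (Xn Φ0 (ε p.1) (τ p.1) α p.2)) (atTop ×ˢ 𝓝 s) (𝓝 w)) :
    HasDerivWithinAt (fun σ => X α σ) (-w) (Ici 0) s := by
  rw [hasDerivWithinAt_iff_isLittleO, Asymptotics.isLittleO_iff]
  intro η hη
  obtain ⟨δ, hδ, H⟩ := W.incr hs hv hη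
  filter_upwards [self_mem_nhdsWithin, mem_nhdsWithin_of_mem_nhds (Metric.ball_mem_nhds s hδ)] with σ h0 h1
  rw [Real.ball_eq_Ioo] at h1
  rcases le_total s σ with h | h
  · have := H s σ hs h (by linarith) h1.2
    rw [Real.norm_of_nonneg (by linarith), mul_comm η]
    refine le_of_eq_of_le (congrArg norm ?_) this
    module
  · have := H σ s h0 h h1.1 (by linarith)
    rw [Real.norm_of_nonpos (by linarith), mul_comm η, neg_sub, ← norm_neg]
    refine le_of_eq_of_le (congrArg norm ?_) this
    module

lemma Flow.isC1 (W : Flow K γ ε0 Φ0 ε τ X) (hγ : 0 < γ) (he0 : 0 < ε0) (s : ℝ) {α0 : Eu d}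
    (hα0 : Φ0 α0 ≤ 0) {D : Set (Eu d)} (hD : D = {x | Φ0 x < 0}) (hDo : IsOpen D) (hf : frontier D = {x | Φ0 x = 0}) :
    IsC1Domain d γ ((fun α => X α s) '' D) := by
  obtain ⟨Y, Ψ, G, der, hol, hG, hneg, hz, hpos, R, hR⟩ := W.limit_def hγ he0 s hα0
  have e1 : (fun α => X α s) '' D = {x | Ψ x < 0} := by
    ext x
    constructor
    · rintro ⟨β, hβ, rfl⟩
      rw [hD] at hβ
      exact hneg β hβ
    · intro hx
      obtain ⟨β, rfl⟩ := W.surj s x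
      refine ⟨β, ?_, rfl⟩
      rw [hD]
      rcases lt_trichotomy (Φ0 β) 0 with h | h | h
      · exact h
      · exact absurd (hz β h) (ne_of_lt hx)
      · exact absurd (hpos β h) (not_lt_of_gt hx)
  have e2 : frontier ((fun α => X α s) '' D) = (fun α => X α s) '' {x | Φ0 x = 0} := by
    rw [← hf]
    exact ((W.homeo s).image_frontier D).symm
  refine ⟨(W.homeo s).isOpenMap _ hDo, ?_, Ψ, contDiff_of der (hol_cont hγ hol), ⟨Y, ?_⟩, e1, ?_, ?_⟩
  · refine (Metric.isBounded_closedBall (x := (0 : Eu d)) (r := R)).subset ?_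
    rintro _ ⟨β, hβ, rfl⟩
    rw [hD] at hβ
    exact hR β (le_of_lt hβ)
  · intro x y
    rw [grad_eq (der x), grad_eq (der y)]
    exact hol x y
  · rw [e2]
    ext x
    constructor
    · rintro ⟨β, hβ, rfl⟩
      exact hz β hβ
    · intro hx
      obtain ⟨β, rfl⟩ := W.surj s x
      refine ⟨β, ?_, rfl⟩
      rcases lt_trichotomy (Φ0 β) 0 with h | h | h
      · exact absurd hx (hneg β h).ne
      · exact h
      · exact absurd hx (hpos β h).ne'
  · rw [e2]
    rintro _ ⟨β, hβ, rfl⟩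
    rw [grad_eq (der _)]
    exact hG β hβ

lemma init_data (hγ : 0 < γ) {D : Set (Eu d)} {Φ : Eu d → ℝ} (hb : Bornology.IsBounded D) (hne : D.Nonempty)
    (hΦ : IsDefining d γ D Φ) : ∃ y0 m0 ε0 R0, Init γ y0 m0 ε0 R0 Φ (gradient Φ) := by
  obtain ⟨hc, ⟨C, hC⟩, hD, hf, hg⟩ := hΦ
  have hcl : {x | Φ x ≤ 0} ⊆ closure D := by
    intro x hx
    rcases lt_or_eq_of_le (show Φ x ≤ 0 from hx) with h | h
    · exact subset_closure (by rw [hD]; exact h)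
    · exact frontier_subset_closure (by rw [hf]; exact h)
  have hcont : Continuous (gradient Φ) := hol_cont hγ hC
  have hcomp : IsCompact {x | Φ x ≤ 0} :=
    hb.isCompact_closure.of_isClosed_subset (isClosed_le hc.continuous continuous_const) hcl
  have hne' : {x | Φ x ≤ 0}.Nonempty := by
    obtain ⟨x, hx⟩ := hne
    rw [hD] at hx
    exact ⟨x, le_of_lt (show Φ x < 0 from hx)⟩
  obtain ⟨x1, hx1, hmin⟩ := hcomp.exists_isMinOn hne'
    (f := fun x => ‖gradient Φ x‖ + |Φ x|) (hcont.norm.add hc.continuous.abs).continuousOn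
  have hp : 0 < ‖gradient Φ x1‖ + |Φ x1| := by
    by_cases h : Φ x1 = 0
    · have : gradient Φ x1 ≠ 0 := hg x1 (by rw [hf]; exact h)
      have := norm_pos_iff.2 this
      positivity
    · have := abs_pos.2 h
      positivity
  set c := (‖gradient Φ x1‖ + |Φ x1|) / 2 with hcd
  obtain ⟨R, hR⟩ := hcomp.isBounded.subset_closedBall (0 : Eu d)
  refine ⟨max C c, c, c, max R 1, ?_, ?_, by positivity, le_max_right _ _, by positivity, by positivity, ?_, ?_⟩
  · intro x
    exact hasGradientAt_iff_hasFDerivAt.1 ((hc.differentiable one_ne_zero x).hasGradientAt)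
  · intro x y
    exact (hC x y).trans (by gcongr; exact le_max_left _ _)
  · intro x hx
    have := hR hx
    rw [mem_closedBall_zero_iff] at this
    exact this.trans (le_max_left _ _)
  · intro x h1 h2
    have h3 : ‖gradient Φ x1‖ + |Φ x1| ≤ ‖gradient Φ x‖ + |Φ x| := hmin h2
    rw [abs_of_nonpos h2] at h3
    linarith

lemma gradN_eq (y : Eu d) : gradN d y = (sphereVol d)⁻¹ • Kr 0 y := by
  rw [gradN, Kr, RR_zero, smul_smul, mul_inv]

lemma sphereVol_nonneg (d : ℕ) : 0 ≤ sphereVol d := by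
  unfold sphereVol; positivity

lemma main_thm (hd : 2 ≤ d) (hγ0 : 0 < γ) (hγ1 : γ < 1) (D₀ : Set (Eu d)) (hD₀ : IsC1Domain d γ D₀) :
    ∃ X : Eu d → ℝ → Eu d,
      (∀ α, X α 0 = α) ∧
      (∀ t ∈ Set.Ico (0:ℝ) 1,
        (∃ h : Eu d ≃ₜ Eu d, ∀ α, h α = X α t) ∧
        IsC1Domain d γ ((fun α => X α t) '' D₀)) ∧
      (∀ α : Eu d, ∀ t ∈ Set.Ico (0:ℝ) 1,
        HasDerivWithinAt (fun s => X α s)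
          ((-(1 / (1 - t))) • ∫ y in (fun α => X α t) '' D₀, gradN d (X α t - y))
          (Set.Ico (0:ℝ) 1) t) := by
  rcases D₀.eq_empty_or_nonempty with he | hne
  · refine ⟨fun α _ => α, fun _ => rfl, fun t ht => ⟨⟨Homeomorph.refl _, fun _ => rfl⟩, ?_⟩, fun α t ht => ?_⟩
    · simpa using hD₀
    · simpa [he] using hasDerivWithinAt_const t (Set.Ico (0:ℝ) 1) α
  obtain ⟨hDo, hDb, Φ, hΦ⟩ := hD₀
  obtain ⟨y0, m0, ε0, R0, hi⟩ := init_data hγ0 hDb hne hΦ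
  obtain ⟨K, ε, τ, Z, X, hX⟩ := conv_prop hd hγ0 hγ1 hi
  have W : Flow K γ ε0 Φ ε τ X := ⟨Z, hX⟩
  obtain ⟨hc, -, hD, hf, -⟩ := hΦ
  obtain ⟨α0, hα0⟩ := hne
  have hα0' : Φ α0 ≤ 0 := by
    rw [hD] at hα0
    exact le_of_lt hα0
  set a := (sphereVol d)⁻¹ with ha
  have ha0 : 0 ≤ a := inv_nonneg.2 (sphereVol_nonneg d)
  have hT : ∀ t ∈ Set.Ico (0:ℝ) 1, 0 ≤ -a * Real.log (1 - t) := by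
    intro t ht
    have := Real.log_nonpos (by linarith [ht.2] : 0 ≤ 1 - t) (by linarith [ht.1])
    nlinarith
  refine ⟨fun α t => X α (-a * Real.log (1 - t)), fun α => ?_, fun t ht => ⟨⟨W.homeo _, fun _ => rfl⟩, ?_⟩, ?_⟩
  · simp [W.zero]
  · exact W.isC1 hγ0 hi.he0 _ hα0' hD hDo hf
  · intro α t ht
    have hv := W.deriv (hT t ht) (W.vel_lim hd hc.continuous _ (W.hnull hd hγ0 hi.he0 _ hα0') α)
    have ht1 : (1 - t) ≠ 0 := by linarith [ht.2]
    have hl : HasDerivWithinAt (fun t => -a * Real.log (1 - t)) (-a * (-1 / (1 - t))) (Set.Ico (0:ℝ) 1) t := by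
      have := (((hasDerivAt_id t).const_sub 1).log ht1).const_mul (-a)
      exact this.hasDerivWithinAt
    have hcomp := HasDerivWithinAt.scomp t hv hl hT
    rw [← hD] at hcomp
    refine hcomp.congr_deriv ?_
    simp_rw [gradN_eq, integral_smul]
    rw [smul_smul, smul_neg, ← neg_smul]
    congr 1
    rw [← ha]
    ring

end AggPatch

/-- Theorem 1.1: boundary regularity of aggregation patches up to the blowup time. -/
theorem aggregation_patch_boundary_regularity
    (d : ℕ) (hd : 2 ≤ d) (γ : ℝ) (hγ0 : 0 < γ) (hγ1 : γ < 1)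
    (D₀ : Set (EuclideanSpace ℝ (Fin d))) (hD₀ : IsC1Domain d γ D₀) :
    ∃ X : EuclideanSpace ℝ (Fin d) → ℝ → EuclideanSpace ℝ (Fin d),
      (∀ α, X α 0 = α) ∧
      (∀ t ∈ Set.Ico (0:ℝ) 1,
        (∃ h : EuclideanSpace ℝ (Fin d) ≃ₜ EuclideanSpace ℝ (Fin d),
            ∀ α, h α = X α t) ∧
        IsC1Domain d γ ((fun α => X α t) '' D₀)) ∧
      (∀ α : EuclideanSpace ℝ (Fin d), ∀ t ∈ Set.Ico (0:ℝ) 1,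
        HasDerivWithinAt (fun s => X α s)
          ((-(1 / (1 - t))) • ∫ y in (fun α => X α t) '' D₀, gradN d (X α t - y))
          (Set.Ico (0:ℝ) 1) t) := by
  exact AggPatch.main_thm hd hγ0 hγ1 D₀ hD₀
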